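/- arXiv:2506.06477 — 5 statements merged into one kernel-verified Lean document; each statement's English description precedes it below -/
import Mathlib

section
/- For every integer n ≥ 5 and every set S of n points in the Euclidean plane in general position, there exist two distinct points u, v ∈ S such that every closed disk containing both u and v contains at least ⌈(n−2)/60⌉ points of S other than u and v. -/
/-!
Lift the plane to the paraboloid `p ↦ (p, ‖p‖²)` in three-dimensional space. A closed disk is the
trace of a half-space there. By Radon's theorem, five lifted points split into two classes whose
convex hulls meet, so a disk containing one class cannot miss the other. No class is a single
point, because the disk of radius zero around that point misses the rest. Hence one class is a
pair `P`, and every disk containing `P` contains one of the three remaining points.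

Assign such a pair to each five-point subset of the `n` given points. On average over the pairs
`P`, at least a tenth of the `C(n-2,3)` five-point sets containing `P` are assigned to `P`. If a
disk contains such a popular `P` and exactly `k` further points, then each five-point set assigned
to `P` contains one of these `k` points, so at most `k * C(n-3,2)` sets are assigned to `P`.
Comparing the two counts gives `n - 2 ≤ 30 * k`.
-/

open EuclideanGeometry Metric

noncomputable section

/-- Points of the Euclidean plane. -/
abbrev Pt := EuclideanSpace ℝ (Fin 2)

/-- A set of points in the plane is in general position if no three of its points are
collinear and no four of its points are concyclic. -/
def GenPos (S : Set Pt) : Prop :=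
  (∀ T ⊆ S, T.ncard = 3 → ¬Collinear ℝ T) ∧
  (∀ T ⊆ S, T.ncard = 4 → ¬Cospherical T)

open Finset Module

section Counting

variable {α ι : Type*} {S P : Finset α} {m j : ℕ}

/-- The depth of `P` in the point set `S` with respect to the family of ranges `D` (below, the
closed balls) is at least `k`: every range containing `P` contains at least `k` further points of
`S`. -/
def IsDeep (D : ι → Set α) (S P : Finset α) (k : ℕ) : Prop :=
  ∀ i, (P : Set α) ⊆ D i → k ≤ (((S : Set α) \ P) ∩ D i).ncard

lemma exists_choose_le_choose_mul_card_fiber [DecidableEq α] {g : Finset α → Finset α}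
    (hjm : j ≤ m) (hmS : m ≤ #S) (hg : ∀ T ∈ S.powersetCard m, g T ∈ S.powersetCard j) :
    ∃ P ∈ S.powersetCard j,
      (#S - j).choose (m - j) ≤ m.choose j * #{T ∈ S.powersetCard m | g T = P} := by
  refine exists_le_of_sum_le (powersetCard_nonempty.2 (hjm.trans hmS)) (le_of_eq ?_)
  calc ∑ _P ∈ S.powersetCard j, (#S - j).choose (m - j)
      = (#S).choose j * (#S - j).choose (m - j) := by
        rw [sum_const, card_powersetCard, smul_eq_mul]
    _ = m.choose j * #(S.powersetCard m) := by
        rw [← Nat.choose_mul hjm, card_powersetCard, mul_comm]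
    _ = ∑ P ∈ S.powersetCard j, m.choose j * #{T ∈ S.powersetCard m | g T = P} := by
        rw [card_eq_sum_card_fiberwise hg, mul_sum]

lemma card_le_card_mul_choose_of_inter_nonempty [DecidableEq α] {K : Finset α}
    {𝓕 : Finset (Finset α)} (hPS : P ⊆ S) (hPm : #P < m) (hKS : K ⊆ S \ P)
    (h𝓕 : ∀ T ∈ 𝓕, T ∈ S.powersetCard m ∧ P ⊆ T ∧ (T ∩ K).Nonempty) :
    #𝓕 ≤ #K * (#S - (#P + 1)).choose (m - (#P + 1)) := by
  have hcover : 𝓕 ⊆ K.biUnion fun z ↦ {T ∈ S.powersetCard m | insert z P ⊆ T} := by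
    intro T hT
    obtain ⟨hTS, hPT, z, hz⟩ := h𝓕 T hT
    obtain ⟨hzT, hzK⟩ := mem_inter.1 hz
    exact mem_biUnion.2 ⟨z, hzK, mem_filter.2 ⟨hTS, insert_subset hzT hPT⟩⟩
  refine (card_le_card hcover).trans (card_biUnion_le_card_mul _ _ _ fun z hz ↦ le_of_eq ?_)
  obtain ⟨hzS, hzP⟩ := mem_sdiff.1 (hKS hz)
  have hcard : #(insert z P) = #P + 1 := card_insert_of_notMem hzP
  rw [card_filter_powersetCard_subset _ _ _ (insert_subset hzS hPS) (hcard.trans_le hPm), hcard]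

lemma card_fiber_le_ncard_mul_choose [DecidableEq α] {D : ι → Set α}
    {g : Finset α → Finset α} (hPS : P ⊆ S) (hPm : #P < m)
    (hg : ∀ T ∈ S.powersetCard m, g T ⊆ T ∧ IsDeep D T (g T) 1) {i : ι}
    (hPi : (P : Set α) ⊆ D i) :
    #{T ∈ S.powersetCard m | g T = P} ≤
      (((S : Set α) \ P) ∩ D i).ncard * (#S - (#P + 1)).choose (m - (#P + 1)) := by
  classical
  have hK : ((S : Set α) \ P) ∩ D i = ({z ∈ S \ P | z ∈ D i} : Finset α) := by
    ext z
    simp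
  rw [hK, Set.ncard_coe_finset]
  refine card_le_card_mul_choose_of_inter_nonempty hPS hPm (filter_subset _ _) fun T hT ↦ ?_
  obtain ⟨hTS, rfl⟩ := mem_filter.1 hT
  obtain ⟨hgT, hdeep⟩ := hg T hTS
  obtain ⟨z, ⟨hzT, hzP⟩, hzi⟩ :=
    Set.nonempty_of_ncard_ne_zero (Nat.one_le_iff_ne_zero.1 (hdeep i hPi))
  have hzS : z ∈ S := (mem_powersetCard.1 hTS).1 hzT
  exact ⟨hTS, hgT, z, mem_inter.2 ⟨hzT, mem_filter.2 ⟨mem_sdiff.2 ⟨hzS, hzP⟩, hzi⟩⟩⟩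

lemma le_mul_of_choose_le_mul_choose_pred {n m c : ℕ} (hm : 0 < m) (hmn : m ≤ n)
    (h : n.choose m ≤ c * (n - 1).choose (m - 1)) : n ≤ m * c := by
  obtain ⟨m, rfl⟩ := Nat.exists_eq_add_one_of_ne_zero hm.ne'
  obtain ⟨n, rfl⟩ := Nat.exists_eq_add_one_of_ne_zero (hm.trans_le hmn).ne'
  refine Nat.le_of_mul_le_mul_right ?_ (Nat.choose_pos (Nat.le_of_succ_le_succ hmn))
  calc (n + 1) * n.choose m = (n + 1).choose (m + 1) * (m + 1) := Nat.add_one_mul_choose_eq n m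
    _ ≤ c * n.choose m * (m + 1) := by gcongr; exact h
    _ = (m + 1) * c * n.choose m := by ring

theorem exists_isDeep_of_forall_powersetCard {D : ι → Set α} (hjm : j < m) (hmS : m ≤ #S)
    (h : ∀ T ∈ S.powersetCard m, ∃ P ∈ T.powersetCard j, IsDeep D T P 1) :
    ∃ P ∈ S.powersetCard j, IsDeep D S P ((#S - j) ⌈/⌉ ((m - j) * m.choose j)) := by
  classical
  choose! g hgT hdeep using h
  have hgS (T) (hT : T ∈ S.powersetCard m) : g T ∈ S.powersetCard j :=
    powersetCard_mono (mem_powersetCard.1 hT).1 (hgT T hT)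
  obtain ⟨P, hP, hpopular⟩ := exists_choose_le_choose_mul_card_fiber hjm.le hmS hgS
  refine ⟨P, hP, fun i hPi ↦ ?_⟩
  obtain ⟨hPS, rfl⟩ := mem_powersetCard.1 hP
  have hfiber := card_fiber_le_ncard_mul_choose hPS hjm
    (fun T hT ↦ ⟨(mem_powersetCard.1 (hgT T hT)).1, hdeep T hT⟩) hPi
  rw [ceilDiv_le_iff_le_mul (Nat.mul_pos (Nat.sub_pos_of_lt hjm) (Nat.choose_pos hjm.le)),
    mul_assoc]
  refine le_mul_of_choose_le_mul_choose_pred (Nat.sub_pos_of_lt hjm)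
    (Nat.sub_le_sub_right hmS _) ?_
  calc (#S - #P).choose (m - #P) ≤ m.choose #P * #{T ∈ S.powersetCard m | g T = P} := hpopular
    _ ≤ m.choose #P * ((((S : Set α) \ P) ∩ D i).ncard *
          (#S - (#P + 1)).choose (m - (#P + 1))) := by gcongr
    _ = m.choose #P * (((S : Set α) \ P) ∩ D i).ncard *
          (#S - #P - 1).choose (m - #P - 1) := by rw [mul_assoc, Nat.sub_sub, Nat.sub_sub]

end Counting

section Captures

variable {X : Type*} [PseudoMetricSpace X]

/-- Every closed ball containing `A` meets `B`. The radius is eliminated: whatever the center `c`,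
some point of `B` is at most as far from `c` as some point of `A`. -/
def Captures (A B : Finset X) : Prop :=
  ∀ c, ∃ a ∈ A, ∃ b ∈ B, dist b c ≤ dist a c

lemma Captures.isDeep [DecidableEq X] {A T : Finset X} (h : Captures A (T \ A)) :
    IsDeep (Function.uncurry closedBall) T A 1 := by
  rintro ⟨c, r⟩ hA
  obtain ⟨a, ha, b, hb, hba⟩ := h c
  have hfin : (((T : Set X) \ A) ∩ closedBall c r).Finite := (T.finite_toSet.sdiff).inter_of_left _
  exact (Set.ncard_pos hfin).2 ⟨b, by simpa using hb, hba.trans (hA ha)⟩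

lemma Captures.one_lt_card {Y : Type*} [MetricSpace Y] [Nonempty Y] {A B : Finset Y}
    (h : Captures A B) (hAB : Disjoint A B) : 1 < #A := by
  obtain ⟨u, hu, -⟩ := h (Classical.arbitrary Y)
  obtain ⟨a, ha, b, hb, hba⟩ := h u
  have hbu : b ≠ u := (disjoint_iff_ne.1 hAB u hu b hb).symm
  have hau : a ≠ u := dist_pos.1 ((dist_pos.2 hbu).trans_le hba)
  exact Finset.one_lt_card.2 ⟨a, ha, u, hu, hau⟩

end Captures

lemma exists_radon_subset {𝕜 α V : Type*} [Field 𝕜] [LinearOrder 𝕜] [IsStrictOrderedRing 𝕜]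
    [DecidableEq α] [AddCommGroup V] [Module 𝕜 V] [FiniteDimensional 𝕜 V] (f : α → V)
    {T : Finset α} (hT : finrank 𝕜 V + 2 ≤ #T) :
    ∃ A ⊆ T, (convexHull 𝕜 (f '' (A : Set α)) ∩
      convexHull 𝕜 (f '' ((T \ A : Finset α) : Set α))).Nonempty := by
  have hdep : ¬ AffineIndependent 𝕜 (fun p : T ↦ f p) := by
    intro hind
    have hcard := hind.card_le_finrank_succ
    have hspan := Submodule.finrank_le (vectorSpan 𝕜 (Set.range fun p : T ↦ f p))
    rw [Fintype.card_coe] at hcard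
    omega
  classical
  obtain ⟨I, hI⟩ := Convex.radon_partition hdep
  refine ⟨I.toFinset.map (.subtype _), map_subtype_subset _, ?_⟩
  convert hI using 3
  · ext q
    simp
  · ext q
    simp only [Set.mem_image, mem_coe, mem_sdiff, mem_map, Set.mem_toFinset,
      Function.Embedding.subtype_apply, Set.mem_compl_iff, Subtype.exists]
    grind

section Paraboloid

variable {E : Type*} [NormedAddCommGroup E] [InnerProductSpace ℝ E]

/-- The lift of `E` to the paraboloid `z = ‖p‖²` in `E × ℝ`. -/
def paraboloidLift (p : E) : E × ℝ := (p, ‖p‖ ^ 2)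

/-- The linear form on `E × ℝ` whose sublevel sets cut out, on the paraboloid, the balls centered
at `c`. -/
def ballForm (c : E) : E × ℝ →ₗ[ℝ] ℝ :=
  LinearMap.snd ℝ E ℝ - (2 : ℝ) • innerₛₗ ℝ c ∘ₗ LinearMap.fst ℝ E ℝ

lemma ballForm_paraboloidLift (c p : E) :
    ballForm c (paraboloidLift p) = dist p c ^ 2 - ‖c‖ ^ 2 := by
  rw [dist_eq_norm, norm_sub_sq_real, real_inner_comm]
  simp only [ballForm, paraboloidLift, LinearMap.sub_apply, LinearMap.smul_apply,
    LinearMap.comp_apply, LinearMap.snd_apply, LinearMap.fst_apply, innerₛₗ_apply_apply,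
    smul_eq_mul]
  ring

lemma captures_of_convexHull_inter_nonempty {A B : Finset E}
    (h : (convexHull ℝ (paraboloidLift '' (A : Set E)) ∩
      convexHull ℝ (paraboloidLift '' (B : Set E))).Nonempty) : Captures A B := by
  intro c
  obtain ⟨q, hqA, hqB⟩ := h
  obtain ⟨_, ⟨a, ha, rfl⟩, hqa⟩ :=
    ((ballForm c).convexOn convex_univ).exists_ge_of_mem_convexHull (Set.subset_univ _) hqA
  obtain ⟨_, ⟨b, hb, rfl⟩, hbq⟩ :=
    ((ballForm c).concaveOn convex_univ).exists_le_of_mem_convexHull (Set.subset_univ _) hqB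
  refine ⟨a, ha, b, hb, le_of_sq_le_sq ?_ dist_nonneg⟩
  have hba := hbq.trans hqa
  rwa [ballForm_paraboloidLift, ballForm_paraboloidLift, sub_le_sub_iff_right] at hba

lemma exists_captures_sdiff [DecidableEq E] [FiniteDimensional ℝ E] {T : Finset E}
    (hT : finrank ℝ E + 3 ≤ #T) :
    ∃ P ⊆ T, 1 < #P ∧ 2 * #P ≤ #T ∧ Captures P (T \ P) := by
  have hlift : finrank ℝ (E × ℝ) + 2 ≤ #T := by simpa using hT
  obtain ⟨A, hAT, hA⟩ := exists_radon_subset paraboloidLift hlift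
  have hcapt := captures_of_convexHull_inter_nonempty hA
  have hcapt' := captures_of_convexHull_inter_nonempty (Set.inter_comm _ _ ▸ hA)
  have hcard := card_sdiff_add_card_eq_card hAT
  rcases le_total (#A) (#(T \ A)) with hle | hle
  · exact ⟨A, hAT, hcapt.one_lt_card disjoint_sdiff, by omega, hcapt⟩
  · exact ⟨T \ A, sdiff_subset, hcapt'.one_lt_card sdiff_disjoint, by omega,
      by rwa [Finset.sdiff_sdiff_eq_self hAT]⟩

lemma exists_pair_isDeep [FiniteDimensional ℝ E] (hE : finrank ℝ E ≤ 2) {T : Finset E}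
    (hT : #T = 5) :
    ∃ P ∈ T.powersetCard 2, IsDeep (Function.uncurry closedBall) T P 1 := by
  classical
  obtain ⟨P, hPT, hP1, hP2, hP⟩ := exists_captures_sdiff (T := T) (by omega)
  exact ⟨P, mem_powersetCard.2 ⟨hPT, by omega⟩, hP.isDeep⟩

theorem pi_lower_bound_n_over_60_general [FiniteDimensional ℝ E] (hE : finrank ℝ E ≤ 2)
    {S : Set E} (hfin : S.Finite) (hcard : 5 ≤ S.ncard) :
    ∃ u ∈ S, ∃ v ∈ S, u ≠ v ∧
      ∀ (c : E) (r : ℝ), u ∈ closedBall c r → v ∈ closedBall c r →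
        ⌈((S.ncard : ℝ) - 2) / 30⌉ ≤ (((S \ {u, v}) ∩ closedBall c r).ncard : ℤ) := by
  classical
  lift S to Finset E using hfin
  rw [Set.ncard_coe_finset] at hcard ⊢
  obtain ⟨P, hP, hdeep⟩ := exists_isDeep_of_forall_powersetCard (by decide) hcard
    fun T hT ↦ exists_pair_isDeep hE (mem_powersetCard.1 hT).2
  obtain ⟨hPS, hP2⟩ := mem_powersetCard.1 hP
  obtain ⟨u, v, huv, rfl⟩ := card_eq_two.1 hP2
  obtain ⟨hu, hv⟩ := insert_subset_iff.1 hPS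
  refine ⟨u, hu, v, singleton_subset_iff.1 hv, huv, fun c r huD hvD ↦ ?_⟩
  have hcount := hdeep (c, r) (by simpa using Set.pair_subset huD hvD)
  rw [ceilDiv_le_iff_le_mul (by decide), coe_pair, Nat.sub_le_iff_le_add] at hcount
  rw [Int.ceil_le, div_le_iff₀' (by norm_num), sub_le_iff_le_add]
  exact_mod_cast hcount

end Paraboloid

/-- For every `n ≥ 5` and every set `S` of `n` points in the plane in general position,
there exist two distinct points `u, v ∈ S` such that every closed disk containing both
`u` and `v` contains at least `⌈(n−2)/60⌉` points of `S` other than `u` and `v`. -/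
theorem pi_lower_bound_n_over_60 (n : ℕ) (hn : 5 ≤ n) (S : Set Pt)
    (hfin : S.Finite) (hcard : S.ncard = n) (hgp : GenPos S) :
    ∃ u ∈ S, ∃ v ∈ S, u ≠ v ∧
      ∀ (c : Pt) (r : ℝ), 0 < r → u ∈ closedBall c r → v ∈ closedBall c r →
        ⌈((n : ℝ) - 2) / 60⌉ ≤ (((S \ {u, v}) ∩ closedBall c r).ncard : ℤ) := by
  subst hcard
  obtain ⟨u, hu, v, hv, huv, h⟩ := pi_lower_bound_n_over_60_general (by simp) hfin hn
  refine ⟨u, hu, v, hv, huv, fun c r _ huD hvD ↦ (Int.ceil_mono ?_).trans (h c r huD hvD)⟩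
  have hn' : (5 : ℝ) ≤ S.ncard := by exact_mod_cast hn
  linarith
end
end

section
/- For every integer k and every set S' of k points in the Euclidean plane in general position, there are at least C(k−3,2) = (k−3)(k−4)/2 unordered pairs {x,y} of distinct points of S' such that every closed disk having both x and y on its boundary contains at least one of the other k−2 points of S'. -/
open EuclideanGeometry Metric

noncomputable section

/-!
A pair that is not dominating is an edge of the Delaunay graph, and for `k ≥ 3` we have
`C(k, 2) - (3k - 6) = C(k - 3, 2)`, so it is enough that `k` points span at most `3k - 6` Delaunay
edges.

Choose `m` such that the points `s` have distinct abscissas `s₁ + m s₀`. For a center `c`, the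
squared distance `‖s - c‖²` differs from `‖s‖² - 2 a s₀`, where `a = c₀ - m c₁`, by an affine
function of the abscissa. So if every point moves vertically, being at height `‖s‖² - 2 a s₀` at
time `a`, then the ends of a Delaunay edge are adjacent on the lower hull at some time.

An edge of the moving lower hull appears when its left end joins the hull, when its right end joins
the hull, or when a point between its ends leaves the hull; charge it to that point. An edge that
has always been there is charged to its left end, as if this end had just joined. Each point is on
the hull during an interval of times, so it receives at most one charge of each of the three kinds,
`3k` in total. Six of these are never made. The leftmost and the rightmost point are always on the
hull, so neither is charged as a right end or for leaving. The rightmost point is no left end.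
Finally, if heights are replaced by velocities, then some third point lies on the lower or on the
upper hull; in the first case it never leaves the moving hull, in the second it never joins it.
-/

section BeginningOfSet

variable {α : Type*}

/-- The elements strictly above some element of `I`. For the set `I` of times at which something is
present, these are the times after its first appearance. -/
def after [LT α] (I : Set α) : Set α := {a | ∃ b ∈ I, b < a}

/-- `J` is a part of `D` that reaches as far down as `D` does. For order-connected `J` this says
that `J` is an initial segment of `D`; it also covers sets without a lower end. -/
def Begins [LE α] (J D : Set α) : Prop := J ⊆ D ∧ IsCoinitialFor D J

lemma Begins.inter_nonempty [Preorder α] {J J' D : Set α} (h : Begins J D) (h' : Begins J' D)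
    (hJ : J.OrdConnected) (hne : J.Nonempty) : (J ∩ J').Nonempty := by
  obtain ⟨a, ha⟩ := hne
  obtain ⟨b, hb, hba⟩ := h'.2 (h.1 ha)
  obtain ⟨c, hc, hcb⟩ := h.2 (h'.1 hb)
  exact ⟨b, hJ.out hc ha ⟨hcb, hba⟩, hb⟩

variable [LinearOrder α]

lemma isCoinitialFor_of_Ioc_subset {J D : Set α} {b a : α} (hba : b < a) (hJ : Set.Ioc b a ⊆ J)
    (hD : ∀ d ∈ D, b < d) : IsCoinitialFor D J :=
  fun d hd => ⟨min d a, hJ ⟨lt_min (hD d hd) hba, min_le_right _ _⟩, min_le_left _ _⟩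

lemma isCoinitialFor_of_Iic_subset {J : Set α} {a : α} (hJ : Set.Iic a ⊆ J) (D : Set α) :
    IsCoinitialFor D J :=
  fun d _ => ⟨min d a, hJ (min_le_right _ _), min_le_left _ _⟩

end BeginningOfSet

section AffineFunctions

variable {ι 𝕜 : Type*} [LinearOrder 𝕜]

lemma ordConnected_preimage_affine [CommRing 𝕜] [IsOrderedRing 𝕜] {s : Set 𝕜}
    (hs : s.OrdConnected) (d k : 𝕜) : ((fun a => d + a * k) ⁻¹' s).OrdConnected := by
  rcases le_total 0 k with hk | hk
  · exact hs.preimage_mono fun a b hab => by gcongr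
  · exact hs.preimage_anti fun a b hab => by
      simpa using mul_le_mul_of_nonpos_right hab hk

lemma affine_pos_of_nonneg_of_pos [CommRing 𝕜] [IsStrictOrderedRing 𝕜] {d k t a b : 𝕜}
    (ht : 0 ≤ d + t * k) (ha : 0 < d + a * k) (hb : b ∈ Set.Ioc t a) : 0 < d + b * k := by
  rcases le_or_gt k 0 with hk | hk
  · linarith [mul_le_mul_of_nonpos_right hb.2 hk]
  · linarith [mul_lt_mul_of_pos_right hb.1 hk]

lemma exists_last_zero_of_affine_pos [Field 𝕜] [IsStrictOrderedRing 𝕜] {T : Finset ι}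
    {d k : ι → 𝕜} {a : 𝕜} (h : ∀ s ∈ T, 0 < d s + a * k s) :
    (∀ t ≤ a, ∀ s ∈ T, 0 < d s + t * k s) ∨
    ∃ t < a, (∀ s ∈ T, 0 ≤ d s + t * k s) ∧ ∃ r ∈ T, 0 < k r ∧ d r + t * k r = 0 := by
  classical
  rcases {s ∈ T | 0 < k s}.eq_empty_or_nonempty with hempty | hne
  · left
    intro t hta s hs
    have hk : k s ≤ 0 := not_lt.1 fun hk =>
      Finset.eq_empty_iff_forall_notMem.1 hempty s (by simp [hs, hk])
    linarith [h s hs, mul_le_mul_of_nonpos_right hta hk]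
  · right
    obtain ⟨r, hr, hmax⟩ := Finset.exists_max_image _ (fun s => -d s / k s) hne
    obtain ⟨hrT, hkr⟩ := Finset.mem_filter.1 hr
    have hroot : d r + -d r / k r * k r = 0 := by field_simp; ring
    have hlt : -d r / k r < a := by rw [div_lt_iff₀ hkr]; linarith [h r hrT]
    refine ⟨-d r / k r, hlt, fun s hs => ?_, r, hrT, hkr, hroot⟩
    rcases le_or_gt (k s) 0 with hk | hk
    · linarith [h s hs, mul_le_mul_of_nonpos_right hlt.le hk]
    · have hle := hmax s (by simp [hs, hk])
      rw [div_le_iff₀ hk] at hle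
      linarith

end AffineFunctions

section LowerHull

variable {ι 𝕜 : Type*}

/-- How far the point `w` of the family `(x s, z s)` lies above the line through the points `l` and
`u`, times `x u - x l`: the signed area of `l u w`. -/
def chordGap [CommRing 𝕜] (x z : ι → 𝕜) (l u w : ι) : 𝕜 :=
  (x u - x l) * z w - (x u - x w) * z l - (x w - x l) * z u

section Identities

variable [CommRing 𝕜] (x z : ι → 𝕜) (l u w : ι)

@[simp] lemma chordGap_self_left : chordGap x z l u l = 0 := by simp [chordGap]

@[simp] lemma chordGap_self_right : chordGap x z l u u = 0 := by simp [chordGap]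

lemma chordGap_swap_left : chordGap x z w u l = -chordGap x z l u w := by
  unfold chordGap; ring

lemma chordGap_swap_right : chordGap x z l w u = -chordGap x z l u w := by
  unfold chordGap; ring

lemma chordGap_neg : chordGap x (-z) l u w = -chordGap x z l u w := by
  simp only [chordGap, Pi.neg_apply]; ring

lemma chordGap_add_smul (v : ι → 𝕜) (a : 𝕜) :
    chordGap x (z + a • v) l u w = chordGap x z l u w + a * chordGap x v l u w := by
  simp only [chordGap, Pi.add_apply, Pi.smul_apply, smul_eq_mul]; ring

lemma chordGap_add_affine (k d : 𝕜) :
    chordGap x (fun s => z s + (k * x s + d)) l u w = chordGap x z l u w := by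
  unfold chordGap; ring

lemma chordGap_chordGap (q p : ι) :
    chordGap x (chordGap x z q p) l u w = (x p - x q) * chordGap x z l u w := by
  unfold chordGap; ring

end Identities

variable [CommRing 𝕜] [LinearOrder 𝕜] (S : Finset ι) (x z : ι → 𝕜)

/-- The point `w` of the family `(x s, z s)` lies on the lower convex hull of the points of `S`. -/
def OnLowerHull (w : ι) : Prop :=
  ∀ l ∈ S, ∀ u ∈ S, x l < x w → x w < x u → chordGap x z l u w ≤ 0

/-- The segment from `q` to `p`, with `q` to the left of `p`, is an edge of the lower convex hull of
the points of `S`, and no other point of `S` is on its line. -/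
def IsLowerEdge (q p : ι) : Prop :=
  x q < x p ∧ ∀ s ∈ S, s ≠ q → s ≠ p → 0 < chordGap x z q p s

variable {S x z}

lemma onLowerHull_of_isLeast {w : ι} (h : ∀ s ∈ S, x w ≤ x s) : OnLowerHull S x z w :=
  fun l hl _ _ hlw _ => absurd hlw (h l hl).not_gt

lemma onLowerHull_of_isGreatest {w : ι} (h : ∀ s ∈ S, x s ≤ x w) : OnLowerHull S x z w :=
  fun _ _ u hu _ hwu => absurd hwu (h u hu).not_gt

open Classical in
lemma two_le_card_onLowerHull {b t : ι} (hb : b ∈ S) (ht : t ∈ S) (hmin : ∀ s ∈ S, x b ≤ x s)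
    (hmax : ∀ s ∈ S, x s ≤ x t) (hbt : x b < x t) (z : ι → 𝕜) :
    2 ≤ {w ∈ S | OnLowerHull S x z w}.card :=
  Finset.one_lt_card.2 ⟨b, Finset.mem_filter.2 ⟨hb, onLowerHull_of_isLeast hmin⟩,
    t, Finset.mem_filter.2 ⟨ht, onLowerHull_of_isGreatest hmax⟩, ne_of_apply_ne x hbt.ne⟩

lemma chordGap_nonneg_of_forall_ne {q p : ι}
    (h : ∀ s ∈ S, s ≠ q → s ≠ p → 0 ≤ chordGap x z q p s) : ∀ s ∈ S, 0 ≤ chordGap x z q p s := by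
  intro s hs
  by_cases hsq : s = q
  · simp [hsq]
  by_cases hsp : s = p
  · simp [hsp]
  exact h s hs hsq hsp

lemma IsLowerEdge.chordGap_nonneg {q p s : ι} (h : IsLowerEdge S x z q p) (hs : s ∈ S) :
    0 ≤ chordGap x z q p s :=
  chordGap_nonneg_of_forall_ne (fun r hr hrq hrp => (h.2 r hr hrq hrp).le) s hs

lemma IsLowerEdge.not_onLowerHull {q p w : ι} (h : IsLowerEdge S x z q p) (hq : q ∈ S) (hp : p ∈ S)
    (hw : w ∈ S) (hqw : x q < x w) (hwp : x w < x p) : ¬OnLowerHull S x z w := fun hull =>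
  (h.2 w hw (ne_of_apply_ne x hqw.ne') (ne_of_apply_ne x hwp.ne)).not_ge (hull q hq p hp hqw hwp)

variable [IsStrictOrderedRing 𝕜]

-- The line through `w` parallel to the chord `q p` supports the hull.
lemma onLowerHull_of_chordGap_le {q p w : ι} (hqp : x q < x p)
    (hmin : ∀ s ∈ S, chordGap x z q p w ≤ chordGap x z q p s) : OnLowerHull S x z w := by
  intro l hl u hu hlw hwu
  have hsup : chordGap x (chordGap x z q p) l u w ≤ 0 := by
    have hl' := mul_le_mul_of_nonneg_left (hmin l hl) (sub_pos.2 hwu).le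
    have hu' := mul_le_mul_of_nonneg_left (hmin u hu) (sub_pos.2 hlw).le
    rw [chordGap]
    linarith
  rw [chordGap_chordGap] at hsup
  exact nonpos_of_mul_nonpos_right hsup (sub_pos.2 hqp)

lemma IsLowerEdge.onLowerHull_left {q p : ι} (h : IsLowerEdge S x z q p) : OnLowerHull S x z q :=
  onLowerHull_of_chordGap_le h.1 fun s hs => by simpa using h.chordGap_nonneg hs

lemma IsLowerEdge.onLowerHull_right {q p : ι} (h : IsLowerEdge S x z q p) : OnLowerHull S x z p :=
  onLowerHull_of_chordGap_le h.1 fun s hs => by simpa using h.chordGap_nonneg hs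

lemma IsLowerEdge.eq_of_overlap {q p q' p' : ι} (hx : Set.InjOn x S) (h : IsLowerEdge S x z q p)
    (h' : IsLowerEdge S x z q' p') (hq : q ∈ S) (hp : p ∈ S) (hq' : q' ∈ S) (hp' : p' ∈ S)
    (hqp' : x q < x p') (hq'p : x q' < x p) : q = q' ∧ p = p' := by
  constructor
  · refine hx hq hq' (le_antisymm ?_ ?_) <;> refine le_of_not_gt fun hlt => ?_
    · exact h'.not_onLowerHull hq' hp' hq hlt hqp' h.onLowerHull_left
    · exact h.not_onLowerHull hq hp hq' hlt hq'p h'.onLowerHull_left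
  · refine hx hp hp' (le_antisymm ?_ ?_) <;> refine le_of_not_gt fun hlt => ?_
    · exact h.not_onLowerHull hq hp hp' hqp' hlt h'.onLowerHull_right
    · exact h'.not_onLowerHull hq' hp' hp hq'p hlt h.onLowerHull_right

open Classical in
lemma three_le_card_onLowerHull {b t s : ι} (hb : b ∈ S) (ht : t ∈ S) (hmin : ∀ s ∈ S, x b ≤ x s)
    (hmax : ∀ s ∈ S, x s ≤ x t) (hbt : x b < x t) (hs : s ∈ S) (hsb : s ≠ b) (hst : s ≠ t)
    (hgap : chordGap x z b t s ≤ 0) : 3 ≤ {w ∈ S | OnLowerHull S x z w}.card := by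
  obtain ⟨w, hw, hwmin⟩ := Finset.exists_min_image {w ∈ S | w ≠ b ∧ w ≠ t} (chordGap x z b t)
    ⟨s, Finset.mem_filter.2 ⟨hs, hsb, hst⟩⟩
  obtain ⟨hwS, hwb, hwt⟩ := Finset.mem_filter.1 hw
  have hw0 : chordGap x z b t w ≤ 0 := (hwmin s (by simp [hs, hsb, hst])).trans hgap
  have hull : OnLowerHull S x z w := by
    refine onLowerHull_of_chordGap_le hbt fun r hr => ?_
    by_cases hrb : r = b
    · simpa [hrb] using hw0
    by_cases hrt : r = t
    · simpa [hrt] using hw0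
    exact hwmin r (by simp [hr, hrb, hrt])
  refine Finset.two_lt_card.2 ⟨b, ?_, t, ?_, w, ?_, ne_of_apply_ne x hbt.ne, hwb.symm, hwt.symm⟩
  · exact Finset.mem_filter.2 ⟨hb, onLowerHull_of_isLeast hmin⟩
  · exact Finset.mem_filter.2 ⟨ht, onLowerHull_of_isGreatest hmax⟩
  · exact Finset.mem_filter.2 ⟨hwS, hull⟩

open Classical in
lemma five_le_card_onLowerHull_add (hx : Set.InjOn x S) (hS : 3 ≤ S.card) (z : ι → 𝕜) :
    5 ≤ {w ∈ S | OnLowerHull S x z w}.card + {w ∈ S | OnLowerHull S x (-z) w}.card := by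
  have hne : S.Nonempty := Finset.card_pos.1 (by lia)
  obtain ⟨b, hb, hmin⟩ := S.exists_min_image x hne
  obtain ⟨t, ht, hmax⟩ := S.exists_max_image x hne
  obtain ⟨s, hs, hsbt⟩ : ∃ s ∈ S, s ∉ ({b, t} : Finset ι) :=
    Finset.exists_mem_notMem_of_card_lt_card (Finset.card_le_two.trans_lt hS)
  obtain ⟨hsb, hst⟩ : s ≠ b ∧ s ≠ t := by simpa using hsbt
  have hbt : x b < x t :=
    ((hmin s hs).lt_of_ne (hx.ne hb hs hsb.symm)).trans_le (hmax s hs)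
  have two := two_le_card_onLowerHull hb ht hmin hmax hbt
  rcases le_total (chordGap x z b t s) 0 with hgap | hgap
  · linarith [two (-z), three_le_card_onLowerHull hb ht hmin hmax hbt hs hsb hst hgap]
  · have hgap' : chordGap x (-z) b t s ≤ 0 := by rw [chordGap_neg]; linarith
    linarith [two z, three_le_card_onLowerHull hb ht hmin hmax hbt hs hsb hst hgap']

end LowerHull

section KineticHull

variable {ι 𝕜 : Type*} [Field 𝕜] [LinearOrder 𝕜] (S : Finset ι) (x c v : ι → 𝕜)

/-- The times at which `w` is on the lower hull of the points of `S`, when each point `s` keeps its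
abscissa `x s` and moves vertically with velocity `v s`, starting from the height `c s`. -/
def hullTimes (w : ι) : Set 𝕜 := {a | OnLowerHull S x (c + a • v) w}

/-- The times at which `q` and `p` span an edge of the lower hull of the moving points. -/
def edgeTimes (q p : ι) : Set 𝕜 := {a | IsLowerEdge S x (c + a • v) q p}

open Classical in
/-- The pairs, left end first, that span an edge of the lower hull of the moving points at some
time. -/
def kineticEdges : Finset (ι × ι) := {e ∈ S ×ˢ S | (edgeTimes S x c v e.1 e.2).Nonempty}

/-- The edge `q p` appears when its left end `w = q` joins the hull, or has been there for as long
as `w`. -/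
def AppearsRightOf (q p w : ι) : Prop :=
  q = w ∧ Begins (edgeTimes S x c v q p) (after (hullTimes S x c v w))

/-- The edge `q p` appears when its right end `w = p` joins the hull. -/
def AppearsLeftOf (q p w : ι) : Prop :=
  p = w ∧ BddBelow (hullTimes S x c v w) ∧
    Begins (edgeTimes S x c v q p) (after (hullTimes S x c v w))

/-- The edge `q p` appears when the point `w` between its ends leaves the hull. -/
def AppearsAcross (q p w : ι) : Prop :=
  (x q < x w ∧ x w < x p) ∧
    Begins (edgeTimes S x c v q p) (after (hullTimes S x c v w) \ hullTimes S x c v w)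

variable {S x c v}

lemma mem_kineticEdges {e : ι × ι} :
    e ∈ kineticEdges S x c v ↔ (e.1 ∈ S ∧ e.2 ∈ S) ∧ (edgeTimes S x c v e.1 e.2).Nonempty := by
  simp [kineticEdges]

lemma fst_lt_snd_of_mem_kineticEdges {e : ι × ι} (he : e ∈ kineticEdges S x c v) :
    x e.1 < x e.2 :=
  (mem_kineticEdges.1 he).2.some_mem.1

variable [IsStrictOrderedRing 𝕜]

lemma ordConnected_setOf_chordGap_mem {s : Set 𝕜} (hs : s.OrdConnected) (l u w : ι) :
    {a : 𝕜 | chordGap x (c + a • v) l u w ∈ s}.OrdConnected := by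
  simp only [chordGap_add_smul]
  exact ordConnected_preimage_affine hs _ _

lemma ordConnected_edgeTimes (q p : ι) : (edgeTimes S x c v q p).OrdConnected :=
  ⟨fun _ ha _ hb _ ht => ⟨ha.1, fun s hs hsq hsp =>
    (ordConnected_setOf_chordGap_mem Set.ordConnected_Ioi q p s).out
      (ha.2 s hs hsq hsp) (hb.2 s hs hsq hsp) ht⟩⟩

lemma ordConnected_hullTimes (w : ι) : (hullTimes S x c v w).OrdConnected :=
  ⟨fun _ ha _ hb _ ht l hl u hu hlw hwu =>
    (ordConnected_setOf_chordGap_mem Set.ordConnected_Iic l u w).out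
      (ha l hl u hu hlw hwu) (hb l hl u hu hlw hwu) ht⟩

lemma exists_left_end_edgeTimes {q p : ι} {a : 𝕜} (ha : a ∈ edgeTimes S x c v q p) :
    Set.Iic a ⊆ edgeTimes S x c v q p ∨
    ∃ t < a, Set.Ioc t a ⊆ edgeTimes S x c v q p ∧ (∀ s ∈ S, 0 ≤ chordGap x (c + t • v) q p s) ∧
      ∃ r ∈ S, r ≠ q ∧ r ≠ p ∧ 0 < chordGap x v q p r ∧ chordGap x (c + t • v) q p r = 0 := by
  classical
  have hpos : ∀ s ∈ {s ∈ S | s ≠ q ∧ s ≠ p}, 0 < chordGap x c q p s + a * chordGap x v q p s := by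
    intro s hs
    obtain ⟨hsS, hsq, hsp⟩ := Finset.mem_filter.1 hs
    exact chordGap_add_smul x c q p s v a ▸ ha.2 s hsS hsq hsp
  rcases exists_last_zero_of_affine_pos hpos with hall | ⟨t, hta, hnonneg, r, hr, hvr, hr0⟩
  · refine .inl fun t hta => ⟨ha.1, fun s hs hsq hsp => ?_⟩
    rw [chordGap_add_smul]
    exact hall t hta s (by simp [hs, hsq, hsp])
  · obtain ⟨hrS, hrq, hrp⟩ := Finset.mem_filter.1 hr
    refine .inr ⟨t, hta, fun b hb => ⟨ha.1, fun s hs hsq hsp => ?_⟩,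
      chordGap_nonneg_of_forall_ne fun s hs hsq hsp => ?_, r, hrS, hrq, hrp, hvr, ?_⟩ <;>
      rw [chordGap_add_smul]
    · have hs' : s ∈ {s ∈ S | s ≠ q ∧ s ≠ p} := by simp [hs, hsq, hsp]
      exact affine_pos_of_nonneg_of_pos (hnonneg s hs') (hpos s hs') hb
    · exact hnonneg s (by simp [hs, hsq, hsp])
    · exact hr0

lemma edgeTimes_subset_after_hullTimes {q p w : ι} (hw : w = q ∨ w = p) :
    edgeTimes S x c v q p ⊆ after (hullTimes S x c v w) := by
  intro a ha
  rcases exists_left_end_edgeTimes ha with hall | ⟨t, hta, -, hnonneg, -⟩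
  · have hedge : IsLowerEdge S x (c + (a - 1) • v) q p := hall (sub_one_lt a).le
    refine ⟨a - 1, ?_, sub_one_lt a⟩
    rcases hw with rfl | rfl
    exacts [hedge.onLowerHull_left, hedge.onLowerHull_right]
  · refine ⟨t, onLowerHull_of_chordGap_le ha.1 fun s hs => ?_, hta⟩
    rcases hw with rfl | rfl <;> simpa using hnonneg s hs

lemma begins_after_hullTimes {q p w : ι} {a t : 𝕜} (hw : w = q ∨ w = p) (hta : t < a)
    (hJ : Set.Ioc t a ⊆ edgeTimes S x c v q p) (ht : t ∈ lowerBounds (hullTimes S x c v w)) :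
    Begins (edgeTimes S x c v q p) (after (hullTimes S x c v w)) :=
  ⟨edgeTimes_subset_after_hullTimes hw, isCoinitialFor_of_Ioc_subset hta hJ
    fun _ ⟨_, hb, hbd⟩ => (ht hb).trans_lt hbd⟩

lemma begins_after_diff_hullTimes {q p w : ι} {a t : 𝕜} (hq : q ∈ S) (hp : p ∈ S) (hw : w ∈ S)
    (hqw : x q < x w) (hwp : x w < x p) (hta : t < a)
    (hJ : Set.Ioc t a ⊆ edgeTimes S x c v q p) (ht : t ∈ hullTimes S x c v w) :
    Begins (edgeTimes S x c v q p) (after (hullTimes S x c v w) \ hullTimes S x c v w) := by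
  have hdisj : ∀ b ∈ edgeTimes S x c v q p, b ∉ hullTimes S x c v w :=
    fun b hb => hb.not_onLowerHull hq hp hw hqw hwp
  have hlt : ∀ d ∈ after (hullTimes S x c v w) \ hullTimes S x c v w, t < d :=
    fun d ⟨⟨b, hb, hbd⟩, hd⟩ => lt_of_not_ge fun hdt =>
      hd ((ordConnected_hullTimes w).out hb ht ⟨hbd.le, hdt⟩)
  refine ⟨fun b hb => ⟨⟨t, ht, ?_⟩, hdisj b hb⟩, isCoinitialFor_of_Ioc_subset hta hJ hlt⟩
  refine lt_of_not_ge fun hbt => ?_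
  have hta' := (ordConnected_edgeTimes q p).out hb (hJ ⟨hta, le_rfl⟩) ⟨hbt, hta.le⟩
  exact hdisj t hta' ht

lemma mem_lowerBounds_hullTimes {l u w : ι} {t : 𝕜} (hl : l ∈ S) (hu : u ∈ S) (hlw : x l < x w)
    (hwu : x w < x u) (hv : chordGap x v l u w < 0) (ht : chordGap x (c + t • v) l u w = 0) :
    t ∈ lowerBounds (hullTimes S x c v w) := by
  intro b hb
  have hgap := hb l hl u hu hlw hwu
  rw [chordGap_add_smul] at hgap ht
  exact (mul_le_mul_right_of_neg hv).1 (by linarith)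

lemma appearsRightOf_or_appearsLeftOf_or_exists_appearsAcross (hx : Set.InjOn x S) {q p : ι}
    (hq : q ∈ S) (hp : p ∈ S) (hne : (edgeTimes S x c v q p).Nonempty) :
    AppearsRightOf S x c v q p q ∨ AppearsLeftOf S x c v q p p ∨
      ∃ w ∈ S, AppearsAcross S x c v q p w := by
  obtain ⟨a, ha⟩ := hne
  rcases exists_left_end_edgeTimes ha with hall | ⟨t, hta, hJ, hnonneg, r, hr, hrq, hrp, hvr, hr0⟩
  · exact .inl ⟨rfl, edgeTimes_subset_after_hullTimes (.inl rfl),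
      isCoinitialFor_of_Iic_subset hall _⟩
  rcases (hx.ne hr hq hrq).lt_or_gt with hrq | hqr
  · have ht : t ∈ lowerBounds (hullTimes S x c v q) := mem_lowerBounds_hullTimes hr hp hrq ha.1
      (by rw [chordGap_swap_left]; linarith) (by rw [chordGap_swap_left, hr0, neg_zero])
    exact .inl ⟨rfl, begins_after_hullTimes (.inl rfl) hta hJ ht⟩
  rcases (hx.ne hr hp hrp).lt_or_gt with hrp | hpr
  · have ht : t ∈ hullTimes S x c v r :=
      onLowerHull_of_chordGap_le ha.1 fun s hs => hr0 ▸ hnonneg s hs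
    exact .inr (.inr ⟨r, hr, ⟨hqr, hrp⟩, begins_after_diff_hullTimes hq hp hr hqr hrp hta hJ ht⟩)
  · have ht : t ∈ lowerBounds (hullTimes S x c v p) := mem_lowerBounds_hullTimes hq hr ha.1 hpr
      (by rw [chordGap_swap_right]; linarith) (by rw [chordGap_swap_right, hr0, neg_zero])
    exact .inr (.inl ⟨rfl, ⟨t, ht⟩, begins_after_hullTimes (.inr rfl) hta hJ ht⟩)

lemma AppearsLeftOf.not_onLowerHull_neg {q p w : ι} (h : AppearsLeftOf S x c v q p w)
    (hne : (edgeTimes S x c v q p).Nonempty) : ¬OnLowerHull S x (-v) w := by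
  intro hull
  obtain ⟨-, ⟨t, ht⟩, hJ, -⟩ := h
  obtain ⟨b, hb, -⟩ := hJ hne.some_mem
  have hmem : t - 1 ∈ hullTimes S x c v w := by
    intro l hl u hu hlw hwu
    have hv := hull l hl u hu hlw hwu
    have hgap := hb l hl u hu hlw hwu
    rw [chordGap_neg] at hv
    rw [chordGap_add_smul] at hgap ⊢
    have htb : t - 1 ≤ b := (sub_one_lt t).le.trans (ht hb)
    linarith [mul_le_mul_of_nonneg_right htb (neg_nonpos.1 hv)]
  exact (sub_one_lt t).not_ge (ht hmem)

lemma AppearsAcross.not_onLowerHull {q p w : ι} (h : AppearsAcross S x c v q p w)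
    (hne : (edgeTimes S x c v q p).Nonempty) : ¬OnLowerHull S x v w := by
  intro hull
  obtain ⟨⟨b, hb, hba⟩, ha⟩ := h.2.1 hne.some_mem
  refine ha fun l hl u hu hlw hwu => ?_
  have hv := hull l hl u hu hlw hwu
  have hgap := hb l hl u hu hlw hwu
  rw [chordGap_add_smul] at hgap ⊢
  linarith [mul_le_mul_of_nonpos_right hba.le hv]

lemma eq_of_begins (hx : Set.InjOn x S) {D : Set 𝕜} {e e' : ι × ι}
    (he : e ∈ kineticEdges S x c v) (he' : e' ∈ kineticEdges S x c v)
    (hD : Begins (edgeTimes S x c v e.1 e.2) D) (hD' : Begins (edgeTimes S x c v e'.1 e'.2) D)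
    (hlt : x e.1 < x e'.2) (hlt' : x e'.1 < x e.2) : e = e' := by
  obtain ⟨⟨hq, hp⟩, hne⟩ := mem_kineticEdges.1 he
  obtain ⟨⟨hq', hp'⟩, -⟩ := mem_kineticEdges.1 he'
  obtain ⟨a, ha, ha'⟩ := hD.inter_nonempty hD' (ordConnected_edgeTimes _ _) hne
  exact Prod.ext_iff.2 (ha.eq_of_overlap hx ha' hq hp hq' hp' hlt hlt')

open Classical in
lemma card_appearsRightOf_lt (hx : Set.InjOn x S) (hS : S.Nonempty) :
    {e ∈ kineticEdges S x c v | ∃ w ∈ S, AppearsRightOf S x c v e.1 e.2 w}.card < S.card := by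
  obtain ⟨t, ht, hmax⟩ := S.exists_max_image x hS
  refine lt_of_le_of_lt ?_ (Finset.card_erase_lt_of_mem ht)
  refine Finset.card_le_card_of_forall_subsingleton
    (fun e w => AppearsRightOf S x c v e.1 e.2 w) (fun e he => ?_) ?_
  · obtain ⟨heK, w, hw, rfl, hD⟩ := Finset.mem_filter.1 he
    refine ⟨e.1, Finset.mem_erase.2 ⟨?_, hw⟩, rfl, hD⟩
    rintro rfl
    exact (fst_lt_snd_of_mem_kineticEdges heK).not_ge (hmax _ (mem_kineticEdges.1 heK).1.2)
  · rintro w - e ⟨he, rfl, hD⟩ e' ⟨he', heq, hD'⟩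
    have heK := (Finset.mem_filter.1 he).1
    have heK' := (Finset.mem_filter.1 he').1
    refine eq_of_begins hx heK heK' hD hD' ?_ ?_
    · exact heq ▸ fst_lt_snd_of_mem_kineticEdges heK'
    · exact heq ▸ fst_lt_snd_of_mem_kineticEdges heK

open Classical in
lemma card_appearsLeftOf_le (hx : Set.InjOn x S) :
    {e ∈ kineticEdges S x c v | ∃ w ∈ S, AppearsLeftOf S x c v e.1 e.2 w}.card ≤
      {w ∈ S | ¬OnLowerHull S x (-v) w}.card := by
  refine Finset.card_le_card_of_forall_subsingleton
    (fun e w => AppearsLeftOf S x c v e.1 e.2 w) (fun e he => ?_) ?_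
  · obtain ⟨heK, w, hw, hew⟩ := Finset.mem_filter.1 he
    exact ⟨w, Finset.mem_filter.2 ⟨hw, hew.not_onLowerHull_neg (mem_kineticEdges.1 heK).2⟩, hew⟩
  · rintro w - e ⟨he, rfl, -, hD⟩ e' ⟨he', heq, -, hD'⟩
    have heK := (Finset.mem_filter.1 he).1
    have heK' := (Finset.mem_filter.1 he').1
    refine eq_of_begins hx heK heK' hD hD' ?_ ?_
    · exact heq ▸ fst_lt_snd_of_mem_kineticEdges heK
    · exact heq ▸ fst_lt_snd_of_mem_kineticEdges heK'

open Classical in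
lemma card_appearsAcross_le (hx : Set.InjOn x S) :
    {e ∈ kineticEdges S x c v | ∃ w ∈ S, AppearsAcross S x c v e.1 e.2 w}.card ≤
      {w ∈ S | ¬OnLowerHull S x v w}.card := by
  refine Finset.card_le_card_of_forall_subsingleton
    (fun e w => AppearsAcross S x c v e.1 e.2 w) (fun e he => ?_) ?_
  · obtain ⟨heK, w, hw, hew⟩ := Finset.mem_filter.1 he
    exact ⟨w, Finset.mem_filter.2 ⟨hw, hew.not_onLowerHull (mem_kineticEdges.1 heK).2⟩, hew⟩
  · rintro w - e ⟨he, ⟨hqw, hwp⟩, hD⟩ e' ⟨he', ⟨hqw', hwp'⟩, hD'⟩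
    exact eq_of_begins hx (Finset.mem_filter.1 he).1 (Finset.mem_filter.1 he').1 hD hD'
      (hqw.trans hwp') (hqw'.trans hwp)

theorem card_kineticEdges_add_six_le (hx : Set.InjOn x S) (hS : 3 ≤ S.card) :
    (kineticEdges S x c v).card + 6 ≤ 3 * S.card := by
  classical
  have hcover : kineticEdges S x c v ⊆
      {e ∈ kineticEdges S x c v | ∃ w ∈ S, AppearsRightOf S x c v e.1 e.2 w} ∪
      ({e ∈ kineticEdges S x c v | ∃ w ∈ S, AppearsLeftOf S x c v e.1 e.2 w} ∪
      {e ∈ kineticEdges S x c v | ∃ w ∈ S, AppearsAcross S x c v e.1 e.2 w}) := by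
    intro e he
    obtain ⟨⟨hq, hp⟩, hne⟩ := mem_kineticEdges.1 he
    simp only [Finset.mem_union, Finset.mem_filter, he, true_and]
    exact (appearsRightOf_or_appearsLeftOf_or_exists_appearsAcross hx hq hp hne).imp
      (⟨e.1, hq, ·⟩) (Or.imp_left (⟨e.2, hp, ·⟩))
  have hcard := (Finset.card_le_card hcover).trans (Finset.card_union_le _ _)
  have hcard' := hcard.trans (Nat.add_le_add_left (Finset.card_union_le _ _) _)
  have hright := card_appearsRightOf_lt (c := c) (v := v) hx (Finset.card_pos.1 (by lia))
  have hleft := card_appearsLeftOf_le (c := c) (v := v) hx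
  have hacross := card_appearsAcross_le (c := c) (v := v) hx
  have hhull := five_le_card_onLowerHull_add hx hS v
  have hv := S.card_filter_add_card_filter_not (OnLowerHull S x v)
  have hv' := S.card_filter_add_card_filter_not (OnLowerHull S x (-v))
  lia

end KineticHull

lemma exists_injOn_add_mul {ι K : Type*} [Field K] [Infinite K] (S : Finset ι) {u v : ι → K}
    (h : Set.InjOn (fun s => (u s, v s)) S) : ∃ m, Set.InjOn (fun s => v s + m * u s) S := by
  classical
  obtain ⟨m, hm⟩ := Infinite.exists_notMem_finset
    ((S ×ˢ S).image fun e => -(v e.1 - v e.2) / (u e.1 - u e.2))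
  refine ⟨m, fun s hs t ht (hst : v s + m * u s = v t + m * u t) => ?_⟩
  have hu : u s = u t := by
    by_contra hne
    refine hm (Finset.mem_image.2 ⟨(s, t), Finset.mem_product.2 ⟨hs, ht⟩, ?_⟩)
    rw [div_eq_iff (sub_ne_zero.2 hne)]
    linear_combination -hst
  exact h hs ht (Prod.ext hu (by simpa [hu] using hst))

lemma choose_two_add_six {k : ℕ} (hk : 3 ≤ k) : k.choose 2 + 6 = (k - 3).choose 2 + 3 * k := by
  obtain ⟨n, rfl⟩ := Nat.exists_eq_add_of_le' hk
  simp only [Nat.add_sub_cancel, Nat.choose_succ_succ' _ 1, Nat.choose_one_right]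
  ring

section DelaunayEdges

/-- `q p` is an edge of the Delaunay graph of `S`: some sphere through `q` and `p` has all other
points of `S` strictly outside. -/
def IsDelaunayEdge {P : Type*} [Dist P] (S : Set P) (q p : P) : Prop :=
  ∃ c, dist p c = dist q c ∧ ∀ s ∈ S, s ≠ q → s ≠ p → dist q c < dist s c

lemma IsDelaunayEdge.symm {P : Type*} [Dist P] {S : Set P} {q p : P} (h : IsDelaunayEdge S q p) :
    IsDelaunayEdge S p q := by
  obtain ⟨c, hc, hS⟩ := h
  exact ⟨c, hc.symm, fun s hs hsp hsq => hc ▸ hS s hs hsq hsp⟩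

lemma exists_dist_le_of_not_isDelaunayEdge {P : Type*} [Dist P] {S : Set P} {q p c : P} {r : ℝ}
    (h : ¬IsDelaunayEdge S q p) (hq : dist q c = r) (hp : dist p c = r) :
    ∃ z ∈ S \ {q, p}, dist z c ≤ r := by
  by_contra! hout
  exact h ⟨c, hp.trans hq.symm, fun s hs hsq hsp => hq ▸ hout s ⟨hs, by simp [hsq, hsp]⟩⟩

open Classical in
/-- The edges of the Delaunay graph of `S`, as two-element sets. -/
def delaunayEdges (S : Finset Pt) : Finset (Finset Pt) :=
  {T ∈ S.powersetCard 2 | ∃ q p, T = {q, p} ∧ IsDelaunayEdge S q p}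

lemma mem_delaunayEdges {S T : Finset Pt} : T ∈ delaunayEdges S ↔
    T ∈ S.powersetCard 2 ∧ ∃ q p, T = {q, p} ∧ IsDelaunayEdge S q p := by
  simp [delaunayEdges]

lemma dist_sq_eq_lift_add_affine (s c : Pt) (m : ℝ) :
    dist s c ^ 2 = (s 0 ^ 2 + s 1 ^ 2) + (c 0 - m * c 1) * (-2 * s 0) +
      (-2 * c 1 * (s 1 + m * s 0) + (c 0 ^ 2 + c 1 ^ 2)) := by
  rw [EuclideanSpace.dist_eq, Real.sq_sqrt (by positivity)]
  simp only [Fin.sum_univ_two, Real.dist_eq, sq_abs]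
  ring

lemma IsDelaunayEdge.edgeTimes_nonempty {S : Finset Pt} {q p : Pt} (h : IsDelaunayEdge S q p)
    {m : ℝ} (hqp : q 1 + m * q 0 < p 1 + m * p 0) :
    (edgeTimes S (fun s => s 1 + m * s 0) (fun s => s 0 ^ 2 + s 1 ^ 2)
      (fun s => -2 * s 0) q p).Nonempty := by
  obtain ⟨c, hc, hS⟩ := h
  refine ⟨c 0 - m * c 1, hqp, fun s hs hsq hsp => ?_⟩
  rw [← chordGap_add_affine _ _ _ _ _ (-2 * c 1) (c 0 ^ 2 + c 1 ^ 2)]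
  simp only [Pi.add_apply, Pi.smul_apply, smul_eq_mul, ← dist_sq_eq_lift_add_affine]
  have hdist : dist q c ^ 2 < dist s c ^ 2 := by gcongr; exact hS s hs hsq hsp
  calc 0 < (p 1 + m * p 0 - (q 1 + m * q 0)) * (dist s c ^ 2 - dist q c ^ 2) :=
        mul_pos (sub_pos.2 hqp) (sub_pos.2 hdist)
    _ = _ := by rw [chordGap, hc]; ring

lemma card_delaunayEdges_add_six_le {S : Finset Pt} (hS : 3 ≤ S.card) :
    (delaunayEdges S).card + 6 ≤ 3 * S.card := by
  classical
  have hcoord : Set.InjOn (fun s : Pt => (s 0, s 1)) S := fun s _ t _ hst => by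
    ext i
    fin_cases i
    exacts [congrArg Prod.fst hst, congrArg Prod.snd hst]
  obtain ⟨m, hm⟩ := exists_injOn_add_mul S hcoord
  let K := kineticEdges S (fun s : Pt => s 1 + m * s 0) (fun s => s 0 ^ 2 + s 1 ^ 2)
    (fun s => -2 * s 0)
  have hsub : delaunayEdges S ⊆ K.image fun e => {e.1, e.2} := by
    intro T hT
    obtain ⟨hTS, q, p, rfl, hedge⟩ := mem_delaunayEdges.1 hT
    obtain ⟨hTS, hcard⟩ := Finset.mem_powersetCard.1 hTS
    have hq : q ∈ S := hTS (by simp)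
    have hp : p ∈ S := hTS (by simp)
    have hne : q ≠ p := by rintro rfl; simp at hcard
    rcases (hm.ne hq hp hne).lt_or_gt with hlt | hlt
    · exact Finset.mem_image.2
        ⟨(q, p), mem_kineticEdges.2 ⟨⟨hq, hp⟩, hedge.edgeTimes_nonempty hlt⟩, rfl⟩
    · exact Finset.mem_image.2
        ⟨(p, q), mem_kineticEdges.2 ⟨⟨hp, hq⟩, hedge.symm.edgeTimes_nonempty hlt⟩,
          Finset.pair_comm p q⟩
  have hcard := (Finset.card_le_card hsub).trans Finset.card_image_le
  have hK : K.card + 6 ≤ 3 * S.card := card_kineticEdges_add_six_le hm hS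
  lia

lemma choose_two_le_ncard_diff_delaunayEdges (S : Finset Pt) : (S.card - 3).choose 2 ≤
    ((S.powersetCard 2 : Set (Finset Pt)) \ delaunayEdges S).ncard := by
  rcases lt_or_ge S.card 3 with hlt | hS
  · simp [Nat.sub_eq_zero_of_le hlt.le]
  refine le_trans ?_ (Set.le_ncard_sdiff _ _)
  rw [Set.ncard_coe_finset, Set.ncard_coe_finset, Finset.card_powersetCard]
  have hchoose := choose_two_add_six hS
  have hdelaunay := card_delaunayEdges_add_six_le hS
  lia

end DelaunayEdges

theorem dominating_pairs_lower_bound_general (S' : Set Pt) (hfin : S'.Finite) :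
    (S'.ncard - 3).choose 2 ≤
      {T : Set Pt | ∃ x ∈ S', ∃ y ∈ S', x ≠ y ∧ T = {x, y} ∧
        ∀ (c : Pt) (r : ℝ), 0 < r → dist x c = r → dist y c = r →
          ∃ z ∈ S' \ {x, y}, dist z c ≤ r}.ncard := by
  lift S' to Finset Pt using hfin
  rw [Set.ncard_coe_finset]
  refine (choose_two_le_ncard_diff_delaunayEdges S').trans <|
    Set.ncard_le_ncard_of_injOn (fun T => (T : Set Pt)) ?_ Finset.coe_injective.injOn ?_
  · rintro T ⟨hT, hTD⟩
    obtain ⟨hTS, x, y, hxy, rfl⟩ :=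
      (Finset.mem_powersetCard.1 hT).imp_right Finset.card_eq_two.1
    refine ⟨x, hTS (by simp), y, hTS (by simp), hxy, Finset.coe_pair, fun c r _ hx hy =>
      exists_dist_le_of_not_isDelaunayEdge (fun h => hTD ?_) hx hy⟩
    exact mem_delaunayEdges.2 ⟨hT, x, y, rfl, h⟩
  · refine S'.finite_toSet.finite_subsets.subset ?_
    rintro _ ⟨x, hx, y, hy, -, rfl, -⟩
    exact Set.pair_subset hx hy

/-- Among any set `S'` of `k` points in the plane in general position, there are at least
`C(k−3, 2)` unordered pairs `{x, y}` of distinct points of `S'` such that every closed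
disk having both `x` and `y` on its boundary contains at least one of the other `k − 2`
points of `S'`. -/
theorem dominating_pairs_lower_bound (k : ℕ) (S' : Set Pt)
    (hfin : S'.Finite) (hcard : S'.ncard = k) (hgp : GenPos S') :
    (k - 3).choose 2 ≤
      {T : Set Pt | ∃ x ∈ S', ∃ y ∈ S', x ≠ y ∧ T = {x, y} ∧
        ∀ (c : Pt) (r : ℝ), 0 < r → dist x c = r → dist y c = r →
          ∃ z ∈ S' \ {x, y}, dist z c ≤ r}.ncard := by
  subst hcard
  exact dominating_pairs_lower_bound_general S' hfin
end
end

section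
/- For every integer n ≥ 8 and every set S of n points in the Euclidean plane in general position, there exist two distinct points u, v ∈ S such that every closed disk containing both u and v contains at least ⌈5(n−2)/84⌉ points of S other than u and v. -/
open EuclideanGeometry Metric

noncomputable section

/-!
Call a subset of a point set `Q` a trace if a closed disk cuts it out of `Q`. The pairs that are
traces of `Q` form a straight-line plane graph, the Delaunay graph: for two disks, the difference
of the powers `dist z c ^ 2 - r ^ 2` is an affine function of `z`, so a line separates the points
lying only in one disk from those lying only in the other. Hence at most `3 * 8 - 6 = 18` of the
`28` pairs of an `8`-point set are traces.

If every pair of points of `S` were contained in a disk with few further points, then few of the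
`8`-subsets `Q ⊆ S` containing the pair would meet these further points, and in all the others the
pair would be a trace. Averaging over the `8`-subsets contradicts the `10` pairs of each `Q` that
are not traces, and `84` appears as `28 * (8 - 2) / 2`.

The bound `3 n - 6` on the edges of a plane graph is proved by charging, without Euler's formula.
After ordering the vertices by abscissa, each edge is charged to its right end, to its left end, or
to a vertex above it. These rules charge, injectively, only vertices other than the leftmost one,
vertices below a chord, and vertices above a chord, respectively. The extreme vertices are of
neither of the last two kinds, and some third vertex is not of both kinds, so there are at most
`(n - 1) + (n - 2) + (n - 3)` edges.
-/

/-! ### Straight-line drawings -/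

/-- A straight-line plane drawing of `G`, with vertex `v` placed at `pos v`: no vertex lies in the
relative interior of an edge, and the relative interiors of distinct edges are disjoint. -/
structure IsStraightLineDrawing {V E : Type*} [AddCommGroup E] [Module ℝ E] (G : SimpleGraph V)
    (pos : V → E) : Prop where
  injective : Function.Injective pos
  notMem_openSegment : ∀ ⦃u v⦄, G.Adj u v → ∀ w, pos w ∉ openSegment ℝ (pos u) (pos v)
  disjoint_openSegment : ∀ ⦃u v a b⦄, G.Adj u v → G.Adj a b → s(u, v) ≠ s(a, b) →
    Disjoint (openSegment ℝ (pos u) (pos v)) (openSegment ℝ (pos a) (pos b))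

lemma IsStraightLineDrawing.affineMap_comp {V E F : Type*} [AddCommGroup E] [Module ℝ E]
    [AddCommGroup F] [Module ℝ F] {G : SimpleGraph V} {pos : V → E}
    (h : IsStraightLineDrawing G pos) {f : E →ᵃ[ℝ] F} (hf : Function.Injective f) :
    IsStraightLineDrawing G (f ∘ pos) where
  injective := hf.comp h.injective
  notMem_openSegment u v huv w := by
    simpa only [Function.comp_apply, ← image_openSegment, hf.mem_set_image]
      using h.notMem_openSegment huv w
  disjoint_openSegment u v a b huv hab hne := by
    simpa only [Function.comp_apply, ← image_openSegment, Set.disjoint_image_iff hf]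
      using h.disjoint_openSegment huv hab hne

/-- The slope of the line through two points of the coordinate plane (`0` if it is vertical). -/
def chordSlope (p q : ℝ × ℝ) : ℝ := (q.2 - p.2) / (q.1 - p.1)

/-- The height at abscissa `t` of the line through two points of the coordinate plane. -/
def chordHeight (p q : ℝ × ℝ) (t : ℝ) : ℝ := p.2 + chordSlope p q * (t - p.1)

section Chords

variable {p q p' q' : ℝ × ℝ} {t : ℝ}

@[simp] lemma chordHeight_left (p q : ℝ × ℝ) : chordHeight p q p.1 = p.2 := by
  simp [chordHeight]

lemma chordHeight_eq_sub (h : p.1 ≠ q.1) (t : ℝ) :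
    chordHeight p q t = q.2 - chordSlope p q * (q.1 - t) := by
  have : q.1 - p.1 ≠ 0 := sub_ne_zero.2 h.symm
  unfold chordHeight chordSlope
  field_simp
  ring

lemma chordHeight_right (h : p.1 ≠ q.1) : chordHeight p q q.1 = q.2 := by
  simp [chordHeight_eq_sub h]

lemma chordHeight_lt_chordHeight_left_iff (ht : p.1 < t) :
    chordHeight p q t < chordHeight p q' t ↔ chordSlope p q < chordSlope p q' := by
  unfold chordHeight
  rw [add_lt_add_iff_left, mul_lt_mul_iff_left₀ (sub_pos.2 ht)]

lemma chordHeight_lt_chordHeight_right_iff (hp : p.1 ≠ q.1) (hp' : p'.1 ≠ q.1) (ht : t < q.1) :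
    chordHeight p q t < chordHeight p' q t ↔ chordSlope p' q < chordSlope p q := by
  rw [chordHeight_eq_sub hp, chordHeight_eq_sub hp', sub_lt_sub_iff_left,
    mul_lt_mul_iff_left₀ (sub_pos.2 ht)]

lemma continuous_chordHeight (p q : ℝ × ℝ) : Continuous (chordHeight p q) := by
  unfold chordHeight
  fun_prop

lemma mk_chordHeight_mem_openSegment (ht : t ∈ Set.Ioo p.1 q.1) :
    (t, chordHeight p q t) ∈ openSegment ℝ p q := by
  have hpos : 0 < q.1 - p.1 := sub_pos.2 (ht.1.trans ht.2)
  rw [openSegment_eq_image_lineMap]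
  refine ⟨(t - p.1) / (q.1 - p.1), ⟨div_pos (sub_pos.2 ht.1) hpos, ?_⟩, ?_⟩
  · rw [div_lt_one hpos]
    exact sub_lt_sub_right ht.2 _
  · ext
    · simp only [AffineMap.fst_lineMap, AffineMap.lineMap_apply_ring']
      field_simp
      ring
    · simp only [AffineMap.snd_lineMap, AffineMap.lineMap_apply_ring', chordHeight, chordSlope]
      ring

end Chords

lemma exists_ne_ne_isExtrOn_univ {α β : Type*} [Finite α] [LinearOrder β] {f : α → β} {a b c : α}
    (hab : f a = f b) (hca : c ≠ a) (hcb : c ≠ b) :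
    ∃ d, d ≠ a ∧ d ≠ b ∧ IsExtrOn f Set.univ d := by
  have : Nonempty α := ⟨a⟩
  obtain ⟨m, hm⟩ := Finite.exists_min f
  obtain ⟨M, hM⟩ := Finite.exists_max f
  by_cases hm' : m ≠ a ∧ m ≠ b
  · exact ⟨m, hm'.1, hm'.2, Or.inl fun x _ => hm x⟩
  by_cases hM' : M ≠ a ∧ M ≠ b
  · exact ⟨M, hM'.1, hM'.2, Or.inr fun x _ => hM x⟩
  have hfm : f m = f a := by grind
  have hfM : f M = f a := by grind
  exact ⟨c, hca, hcb, Or.inl fun x _ => (hM c).trans (hfM.trans hfm.symm |>.trans_le (hm x))⟩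

section SeparatedByChords

variable {V : Type*} [LinearOrder V] {pos : V → ℝ × ℝ} {p : V}

/-- `p` lies strictly above a chord spanned by a vertex to its left and a vertex to its right. -/
def IsAboveChord (pos : V → ℝ × ℝ) (p : V) : Prop :=
  ∃ a b, a < p ∧ p < b ∧ chordHeight (pos a) (pos b) (pos p).1 < (pos p).2

/-- `p` lies strictly below a chord spanned by a vertex to its left and a vertex to its right. -/
def IsBelowChord (pos : V → ℝ × ℝ) (p : V) : Prop :=
  ∃ a b, a < p ∧ p < b ∧ (pos p).2 < chordHeight (pos a) (pos b) (pos p).1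

lemma not_isAboveChord_of_forall_le (hx : StrictMono fun w => (pos w).1) {β : ℝ}
    (hp : ∀ w, (pos p).2 - β * (pos p).1 ≤ (pos w).2 - β * (pos w).1) :
    ¬IsAboveChord pos p := by
  rintro ⟨a, b, hap, hpb, hlt⟩
  have hconvex : Convex ℝ {z : ℝ × ℝ | (pos p).2 - β * (pos p).1 ≤ z.2 - β * z.1} :=
    convex_halfSpace_ge (LinearMap.snd ℝ ℝ ℝ - β • LinearMap.fst ℝ ℝ ℝ).isLinear _
  have hmem := hconvex.openSegment_subset (hp a) (hp b)
    (mk_chordHeight_mem_openSegment ⟨hx hap, hx hpb⟩)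
  exact hlt.not_ge (sub_le_sub_iff_right _ |>.1 hmem)

lemma not_isBelowChord_of_forall_le (hx : StrictMono fun w => (pos w).1) {β : ℝ}
    (hp : ∀ w, (pos w).2 - β * (pos w).1 ≤ (pos p).2 - β * (pos p).1) :
    ¬IsBelowChord pos p := by
  rintro ⟨a, b, hap, hpb, hlt⟩
  have hconvex : Convex ℝ {z : ℝ × ℝ | z.2 - β * z.1 ≤ (pos p).2 - β * (pos p).1} :=
    convex_halfSpace_le (LinearMap.snd ℝ ℝ ℝ - β • LinearMap.fst ℝ ℝ ℝ).isLinear _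
  have hmem := hconvex.openSegment_subset (hp a) (hp b)
    (mk_chordHeight_mem_openSegment ⟨hx hap, hx hpb⟩)
  exact hlt.not_ge (sub_le_sub_iff_right _ |>.1 hmem)

lemma exists_not_isBelowChord_or_not_isAboveChord [Finite V]
    (hx : StrictMono fun w => (pos w).1) {l r c : V} (hlr : l ≠ r) (hcl : c ≠ l) (hcr : c ≠ r) :
    ∃ q, q ≠ l ∧ q ≠ r ∧ (¬IsBelowChord pos q ∨ ¬IsAboveChord pos q) := by
  set β := chordSlope (pos l) (pos r) with hβ
  have heq : (pos l).2 - β * (pos l).1 = (pos r).2 - β * (pos r).1 := by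
    have : (pos r).1 - (pos l).1 ≠ 0 := sub_ne_zero.2 (hx.injective.ne hlr.symm)
    rw [hβ, chordSlope]
    field_simp
    ring
  obtain ⟨q, hql, hqr, hmin | hmax⟩ :=
    exists_ne_ne_isExtrOn_univ (f := fun w => (pos w).2 - β * (pos w).1) heq hcl hcr
  · exact ⟨q, hql, hqr,
      Or.inr (not_isAboveChord_of_forall_le hx fun w => hmin (Set.mem_univ w))⟩
  · exact ⟨q, hql, hqr,
      Or.inl (not_isBelowChord_of_forall_le hx fun w => hmax (Set.mem_univ w))⟩

open scoped Classical in
lemma card_isBelowChord_add_card_isAboveChord_add_five_le [Fintype V]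
    (hx : StrictMono fun w => (pos w).1) (hV : 3 ≤ Fintype.card V) :
    (Finset.univ.filter (IsBelowChord pos)).card + (Finset.univ.filter (IsAboveChord pos)).card
      + 5 ≤ 2 * Fintype.card V := by
  have : Nontrivial V := Fintype.one_lt_card_iff_nontrivial.1 (by omega)
  let : BoundedOrder V := Fintype.toBoundedOrder V
  set M : Finset V := {⊥, ⊤}ᶜ with hM
  have hmemM {x} : x ∈ M ↔ x ≠ ⊥ ∧ x ≠ ⊤ := by
    simp only [hM, Finset.mem_compl, Finset.mem_insert, Finset.mem_singleton, not_or]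
  have hMcard : M.card = Fintype.card V - 2 := by
    rw [hM, Finset.card_compl, Finset.card_pair bot_ne_top]
  obtain ⟨c, hc⟩ : M.Nonempty := Finset.card_pos.1 (by omega)
  obtain ⟨q, hq₁, hq₂, hq⟩ := exists_not_isBelowChord_or_not_isAboveChord hx bot_ne_top
    (hmemM.1 hc).1 (hmemM.1 hc).2
  set A := Finset.univ.filter (IsBelowChord pos)
  set B := Finset.univ.filter (IsAboveChord pos)
  have hunion : A ∪ B ⊆ M := by
    refine Finset.union_subset ?_ ?_ <;> intro x hx <;>
      obtain ⟨-, a, b, hax, hxb, -⟩ := Finset.mem_filter.1 hx <;>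
      exact hmemM.2 ⟨hax.ne_bot, hxb.ne_top⟩
  have hinter : A ∩ B ⊆ M.erase q := by
    refine Finset.subset_erase.2 ⟨Finset.inter_subset_union.trans hunion, fun hqAB => ?_⟩
    obtain ⟨hqA, hqB⟩ := Finset.mem_inter.1 hqAB
    exact hq.elim (absurd (Finset.mem_filter.1 hqA).2) (absurd (Finset.mem_filter.1 hqB).2)
  have hunion_card := Finset.card_le_card hunion
  have hinter_card := Finset.card_le_card hinter
  rw [Finset.card_erase_of_mem (hmemM.2 ⟨hq₁, hq₂⟩)] at hinter_card
  have := Finset.card_union_add_card_inter A B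
  omega

end SeparatedByChords

/-! ### Charging arcs to vertices -/

/-- The edges of `G` oriented from left to right, for an order of the vertices by abscissa. -/
def Arc {V : Type*} [LT V] (G : SimpleGraph V) (u v : V) : Prop := G.Adj u v ∧ u < v

section Charging

variable {V : Type*} [LinearOrder V]

/-- The arc `(u, v)` is the uppermost of the arcs ending at `v`. Such arcs are charged to `v`. -/
def IsUppermostInto (G : SimpleGraph V) (pos : V → ℝ × ℝ) (u v : V) : Prop :=
  Arc G u v ∧ ∀ a, Arc G a v → chordSlope (pos u) (pos v) ≤ chordSlope (pos a) (pos v)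

/-- The vertices in the region between the arcs `(u, v)` and `(a, v)`, the latter being the upper
one; the end `a` of the upper arc is included if it lies to the right of `u`. -/
def wedge (pos : V → ℝ × ℝ) (a u v : V) : Set V :=
  {p | a ≤ p ∧ u < p ∧ p < v ∧ chordHeight (pos u) (pos v) (pos p).1 < (pos p).2 ∧
    (pos p).2 ≤ chordHeight (pos a) (pos v) (pos p).1}

/-- Some arc into `v` passes above the arc `(u, v)`, starts to the left of `u`, and leaves no
vertex in the region between the two arcs. Such arcs are charged to `u`. -/
def IsShielded (G : SimpleGraph V) (pos : V → ℝ × ℝ) (u v : V) : Prop :=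
  Arc G u v ∧ ∃ a, Arc G a v ∧ a < u ∧ chordSlope (pos a) (pos v) < chordSlope (pos u) (pos v) ∧
    wedge pos a u v = ∅

/-- The arc `(u, v)` is the first one met below the vertex `p`. Such arcs are charged to `p`. -/
def IsFirstBelow (G : SimpleGraph V) (pos : V → ℝ × ℝ) (u v p : V) : Prop :=
  Arc G u v ∧ u < p ∧ p < v ∧ chordHeight (pos u) (pos v) (pos p).1 < (pos p).2 ∧
    ∀ a b, Arc G a b → a < p → p < b → chordHeight (pos a) (pos b) (pos p).1 < (pos p).2 →
      chordHeight (pos a) (pos b) (pos p).1 ≤ chordHeight (pos u) (pos v) (pos p).1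

namespace IsStraightLineDrawing

variable {G : SimpleGraph V} {pos : V → ℝ × ℝ} {u v a b p : V} {s t : ℝ}

lemma chordHeight_ne (h : IsStraightLineDrawing G pos) (hx : StrictMono fun w => (pos w).1)
    (huv : Arc G u v) (hab : Arc G a b) (hne : (u, v) ≠ (a, b))
    (ht : t ∈ Set.Icc (pos u).1 (pos v).1) (ht' : t ∈ Set.Ioo (pos a).1 (pos b).1) :
    chordHeight (pos u) (pos v) t ≠ chordHeight (pos a) (pos b) t := by
  intro heq
  have hmem := mk_chordHeight_mem_openSegment ht'
  rcases ht.1.eq_or_lt with rfl | hut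
  · rw [← heq, chordHeight_left] at hmem
    exact h.notMem_openSegment hab.1 u hmem
  rcases ht.2.eq_or_lt with rfl | htv
  · rw [← heq, chordHeight_right (hx huv.2).ne] at hmem
    exact h.notMem_openSegment hab.1 v hmem
  have hs : s(u, v) ≠ s(a, b) := by
    rw [Ne, Sym2.eq_iff]
    rintro (⟨rfl, rfl⟩ | ⟨rfl, rfl⟩)
    · exact hne rfl
    · exact huv.2.not_gt hab.2
  exact Set.disjoint_left.1 (h.disjoint_openSegment huv.1 hab.1 hs)
    (mk_chordHeight_mem_openSegment ⟨hut, htv⟩) (heq ▸ hmem)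

lemma chordHeight_lt_of_lt (h : IsStraightLineDrawing G pos) (hx : StrictMono fun w => (pos w).1)
    (huv : Arc G u v) (hab : Arc G a b)
    (ht : t ∈ Set.Icc (pos u).1 (pos v).1) (ht' : t ∈ Set.Icc (pos a).1 (pos b).1)
    (hs : s ∈ Set.Icc (pos u).1 (pos v).1) (hs' : s ∈ Set.Icc (pos a).1 (pos b).1)
    (hint : s ∈ Set.Ioo (pos u).1 (pos v).1 ∨ s ∈ Set.Ioo (pos a).1 (pos b).1)
    (hlt : chordHeight (pos u) (pos v) t < chordHeight (pos a) (pos b) t) :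
    chordHeight (pos u) (pos v) s < chordHeight (pos a) (pos b) s := by
  have hne : (u, v) ≠ (a, b) := by
    rintro ⟨⟩
    exact hlt.false
  have hsne : chordHeight (pos u) (pos v) s ≠ chordHeight (pos a) (pos b) s :=
    hint.elim (fun hi => (h.chordHeight_ne hx hab huv hne.symm hs' hi).symm)
      (h.chordHeight_ne hx huv hab hne hs)
  by_contra! hle
  obtain ⟨r, hr, hr₀⟩ := intermediate_value_uIcc (a := t) (b := s)
    (f := fun r => chordHeight (pos a) (pos b) r - chordHeight (pos u) (pos v) r)
    ((continuous_chordHeight _ _).sub (continuous_chordHeight _ _)).continuousOn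
    (Set.mem_uIcc.2 (Or.inr ⟨sub_nonpos.2 hle, (sub_pos.2 hlt).le⟩))
  have hcross := sub_eq_zero.1 hr₀
  have hrt : r ≠ t := by
    rintro rfl
    exact hlt.ne' hcross
  have hrs : r ≠ s := by
    rintro rfl
    exact hsne hcross.symm
  have hr' : r ∈ Set.Ioo (pos a).1 (pos b).1 := by
    rcases Set.mem_uIcc.1 hr with ⟨h₁, h₂⟩ | ⟨h₁, h₂⟩
    · exact ⟨ht'.1.trans_lt (h₁.lt_of_ne' hrt), (h₂.lt_of_ne hrs).trans_le hs'.2⟩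
    · exact ⟨hs'.1.trans_lt (h₁.lt_of_ne' hrs), (h₂.lt_of_ne hrt).trans_le ht'.2⟩
  exact h.chordHeight_ne hx huv hab hne (Set.uIcc_subset_Icc ht hs hr) hr' hcross.symm

lemma eq_of_chordSlope_eq_left (h : IsStraightLineDrawing G pos)
    (hx : StrictMono fun w => (pos w).1) (huv : Arc G u v) (hub : Arc G u b)
    (heq : chordSlope (pos u) (pos v) = chordSlope (pos u) (pos b)) : v = b := by
  wlog hvb : v < b generalizing v b
  · by_contra hne
    exact hne (this hub huv heq.symm ((not_lt.1 hvb).lt_of_ne' hne)).symm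
  refine absurd (by unfold chordHeight; rw [heq]) <|
    h.chordHeight_ne hx huv hub (t := (pos v).1) (by simpa using hvb.ne)
      (Set.right_mem_Icc.2 (hx huv.2).le) ⟨hx huv.2, hx hvb⟩

lemma eq_of_chordSlope_eq_right (h : IsStraightLineDrawing G pos)
    (hx : StrictMono fun w => (pos w).1) (huv : Arc G u v) (hav : Arc G a v)
    (heq : chordSlope (pos u) (pos v) = chordSlope (pos a) (pos v)) : u = a := by
  wlog hau : a < u generalizing a u
  · by_contra hne
    exact hne (this hav huv heq.symm ((not_lt.1 hau).lt_of_ne hne)).symm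
  refine absurd ?_ <| h.chordHeight_ne hx huv hav (t := (pos u).1) (by simpa using hau.ne')
    (Set.left_mem_Icc.2 (hx huv.2).le) ⟨hx hau, hx huv.2⟩
  rw [chordHeight_eq_sub (hx huv.2).ne, chordHeight_eq_sub (hx hav.2).ne, heq]

end IsStraightLineDrawing

variable {G : SimpleGraph V} {pos : V → ℝ × ℝ} {u v a b p : V}

lemma IsUppermostInto.eq (h : IsStraightLineDrawing G pos) (hx : StrictMono fun w => (pos w).1)
    (hu : IsUppermostInto G pos u v) (ha : IsUppermostInto G pos a v) : u = a :=
  h.eq_of_chordSlope_eq_right hx hu.1 ha.1 ((hu.2 a ha.1).antisymm (ha.2 u hu.1))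

lemma IsFirstBelow.eq (h : IsStraightLineDrawing G pos) (hx : StrictMono fun w => (pos w).1)
    (huv : IsFirstBelow G pos u v p) (hab : IsFirstBelow G pos a b p) : (u, v) = (a, b) := by
  obtain ⟨huv, hup, hpv, hlt, hmax⟩ := huv
  obtain ⟨hab, hap, hpb, hlt', hmax'⟩ := hab
  by_contra hne
  exact h.chordHeight_ne hx huv hab hne ⟨(hx hup).le, (hx hpv).le⟩ ⟨hx hap, hx hpb⟩
    ((hmax' u v huv hup hpv hlt).antisymm (hmax a b hab hap hpb hlt'))

lemma IsFirstBelow.isAboveChord (h : IsFirstBelow G pos u v p) : IsAboveChord pos p :=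
  ⟨u, v, h.2.1, h.2.2.1, h.2.2.2.1⟩

lemma IsShielded.isBelowChord (h : IsShielded G pos u v) (hx : StrictMono fun w => (pos w).1) :
    IsBelowChord pos u := by
  obtain ⟨huv, a, hav, hau, hslope, -⟩ := h
  refine ⟨a, v, hau, huv.2, ?_⟩
  simpa only [chordHeight_left] using
    (chordHeight_lt_chordHeight_right_iff (hx huv.2).ne (hx hav.2).ne (hx huv.2)).2 hslope

/- A steeper arc out of `u` would enter the wedge, where it meets no vertex, and could leave it only
through the vertex `v`. -/
lemma IsShielded.chordSlope_le (h : IsStraightLineDrawing G pos)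
    (hx : StrictMono fun w => (pos w).1) (huv : IsShielded G pos u v) (hub : Arc G u b) :
    chordSlope (pos u) (pos b) ≤ chordSlope (pos u) (pos v) := by
  obtain ⟨huv, a, hav, hau, hslope, hempty⟩ := huv
  by_contra! hsteeper
  have hshield : chordHeight (pos u) (pos b) (pos u).1 < chordHeight (pos a) (pos v) (pos u).1 := by
    simpa only [chordHeight_left] using
      (chordHeight_lt_chordHeight_right_iff (hx huv.2).ne (hx hav.2).ne (hx huv.2)).2 hslope
  have hu_ub := Set.left_mem_Icc.2 (hx hub.2).le
  have hu_av : (pos u).1 ∈ Set.Icc (pos a).1 (pos v).1 := ⟨(hx hau).le, (hx huv.2).le⟩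
  have habove {t : ℝ} (ht : (pos u).1 < t) :=
    (chordHeight_lt_chordHeight_left_iff ht).2 hsteeper
  rcases lt_trichotomy b v with hbv | rfl | hvb
  · have hab := hx (hau.trans hub.2)
    have hb_below := h.chordHeight_lt_of_lt hx hub hav hu_ub hu_av
      (Set.right_mem_Icc.2 (hx hub.2).le) ⟨hab.le, (hx hbv).le⟩ (Or.inr ⟨hab, hx hbv⟩) hshield
    have hb_above := habove (hx hub.2)
    rw [chordHeight_right (hx hub.2).ne] at hb_below hb_above
    exact Set.eq_empty_iff_forall_notMem.1 hempty b
      ⟨(hau.trans hub.2).le, hub.2, hbv, hb_above, hb_below.le⟩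
  · exact hsteeper.false
  · have hv_ub : (pos v).1 ∈ Set.Ioo (pos u).1 (pos b).1 := ⟨hx huv.2, hx hvb⟩
    have hv_below := h.chordHeight_lt_of_lt hx hub hav hu_ub hu_av
      (Set.Ioo_subset_Icc_self hv_ub) (Set.right_mem_Icc.2 (hx hav.2).le) (Or.inl hv_ub) hshield
    have hv_above := habove (hx huv.2)
    rw [chordHeight_right (hx hav.2).ne] at hv_below
    rw [chordHeight_right (hx huv.2).ne] at hv_above
    exact hv_below.not_gt hv_above

lemma IsShielded.eq (h : IsStraightLineDrawing G pos) (hx : StrictMono fun w => (pos w).1)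
    (hv : IsShielded G pos u v) (hb : IsShielded G pos u b) : v = b :=
  h.eq_of_chordSlope_eq_left hx hv.1 hb.1
    ((hb.chordSlope_le h hx hv.1).antisymm (hv.chordSlope_le h hx hb.1))

/- Take `(a, v)` to be the next arc into `v` above `(u, v)`. An arc passing strictly between
`(u, v)` and `p` would have to end in the wedge to the right of `p`, or at `v` between these two
consecutive arcs, or to run on through `v` itself. -/
lemma isFirstBelow_of_isGreatest_wedge (h : IsStraightLineDrawing G pos)
    (hx : StrictMono fun w => (pos w).1) (huv : Arc G u v) (hav : Arc G a v)
    (hmax : ∀ c, Arc G c v → chordSlope (pos c) (pos v) < chordSlope (pos u) (pos v) →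
      chordSlope (pos c) (pos v) ≤ chordSlope (pos a) (pos v))
    (hp : IsGreatest (wedge pos a u v) p) : IsFirstBelow G pos u v p := by
  obtain ⟨⟨hap, hup, hpv, hlow, hhigh⟩, hrightmost⟩ := hp
  refine ⟨huv, hup, hpv, hlow, fun c d hcd hcp hpd hlt => ?_⟩
  by_contra! hgt
  have hp_uv : (pos p).1 ∈ Set.Icc (pos u).1 (pos v).1 := ⟨(hx hup).le, (hx hpv).le⟩
  have hp_av : (pos p).1 ∈ Set.Icc (pos a).1 (pos v).1 := ⟨hx.monotone hap, (hx hpv).le⟩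
  have hp_cd : (pos p).1 ∈ Set.Icc (pos c).1 (pos d).1 := ⟨(hx hcp).le, (hx hpd).le⟩
  have hbelow := hlt.trans_le hhigh
  rcases lt_trichotomy d v with hdv | rfl | hvd
  · have hd_cd := Set.right_mem_Icc.2 (hx hcd.2).le
    have hd_uv : (pos d).1 ∈ Set.Ioo (pos u).1 (pos v).1 := ⟨hx (hup.trans hpd), hx hdv⟩
    have hd_av : (pos d).1 ∈ Set.Ioo (pos a).1 (pos v).1 := ⟨hx (hap.trans_lt hpd), hx hdv⟩
    have hd_above := h.chordHeight_lt_of_lt hx huv hcd hp_uv hp_cd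
      (Set.Ioo_subset_Icc_self hd_uv) hd_cd (Or.inl hd_uv) hgt
    have hd_below := h.chordHeight_lt_of_lt hx hcd hav hp_cd hp_av
      hd_cd (Set.Ioo_subset_Icc_self hd_av) (Or.inr hd_av) hbelow
    rw [chordHeight_right (hx hcd.2).ne] at hd_above hd_below
    exact hpd.not_ge
      (hrightmost ⟨(hap.trans_lt hpd).le, hup.trans hpd, hdv, hd_above, hd_below.le⟩)
  · rw [chordHeight_lt_chordHeight_right_iff (hx huv.2).ne (hx hcd.2).ne (hx hpv)] at hgt
    rw [chordHeight_lt_chordHeight_right_iff (hx hcd.2).ne (hx hav.2).ne (hx hpv)] at hbelow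
    exact hbelow.not_ge (hmax c hcd hgt)
  · have hv_cd : (pos v).1 ∈ Set.Ioo (pos c).1 (pos d).1 := ⟨hx (hcp.trans hpv), hx hvd⟩
    have hv_above := h.chordHeight_lt_of_lt hx huv hcd hp_uv hp_cd
      (Set.right_mem_Icc.2 (hx huv.2).le) (Set.Ioo_subset_Icc_self hv_cd) (Or.inr hv_cd) hgt
    have hv_below := h.chordHeight_lt_of_lt hx hcd hav hp_cd hp_av
      (Set.Ioo_subset_Icc_self hv_cd) (Set.right_mem_Icc.2 (hx hav.2).le) (Or.inl hv_cd) hbelow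
    rw [chordHeight_right (hx huv.2).ne] at hv_above
    rw [chordHeight_right (hx hav.2).ne] at hv_below
    exact hv_above.not_gt hv_below

lemma isUppermostInto_or_isShielded_or_exists_isFirstBelow [Finite V]
    (h : IsStraightLineDrawing G pos) (hx : StrictMono fun w => (pos w).1) (huv : Arc G u v) :
    IsUppermostInto G pos u v ∨ IsShielded G pos u v ∨ ∃ p, IsFirstBelow G pos u v p := by
  rw [or_iff_not_imp_left]
  intro hupper
  have hsteeper : ∃ a, Arc G a v ∧ chordSlope (pos a) (pos v) < chordSlope (pos u) (pos v) := by
    simpa only [IsUppermostInto, huv, true_and, not_forall, not_le, exists_prop] using hupper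
  obtain ⟨a, ⟨hav, hslope⟩, hmax⟩ := Set.exists_max_image _
    (fun a => chordSlope (pos a) (pos v)) (Set.toFinite _) hsteeper
  rcases (wedge pos a u v).eq_empty_or_nonempty with hempty | hne
  · refine Or.inl ⟨huv, a, hav, lt_of_not_ge fun hua => ?_, hslope, hempty⟩
    rcases hua.eq_or_lt with rfl | hua
    · exact hslope.false
    have ha_above := (chordHeight_lt_chordHeight_right_iff (hx huv.2).ne (hx hav.2).ne
      (hx hav.2)).2 hslope
    rw [chordHeight_left] at ha_above
    exact Set.eq_empty_iff_forall_notMem.1 hempty a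
      ⟨le_rfl, hua, hav.2, ha_above, (chordHeight_left _ _).ge⟩
  · obtain ⟨p, hp, hmax'⟩ := Set.exists_max_image _ id (Set.toFinite _) hne
    exact Or.inr ⟨p, isFirstBelow_of_isGreatest_wedge h hx huv hav
      (fun c hc hlt => hmax c ⟨hc, hlt⟩) ⟨hp, hmax'⟩⟩

open scoped Classical in
lemma card_filter_isUppermostInto_add_one_le [Fintype V] [Nonempty V]
    (h : IsStraightLineDrawing G pos) (hx : StrictMono fun w => (pos w).1) :
    (Finset.univ.filter fun e : V × V => IsUppermostInto G pos e.1 e.2).card + 1 ≤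
      Fintype.card V := by
  let : OrderBot V := Fintype.toOrderBot V
  rw [← Finset.card_univ, ← Finset.card_erase_add_one (Finset.mem_univ (⊥ : V))]
  refine Nat.add_le_add_right (Finset.card_le_card_of_injOn Prod.snd (fun e he => ?_) ?_) 1
  · exact Finset.mem_erase.2 ⟨(Finset.mem_filter.1 he).2.1.2.ne_bot, Finset.mem_univ _⟩
  · rintro ⟨u, v⟩ he ⟨a, b⟩ he' (rfl : v = b)
    exact Prod.ext ((Finset.mem_filter.1 he).2.eq h hx (Finset.mem_filter.1 he').2) rfl

open scoped Classical in
lemma card_filter_isShielded_le [Fintype V] (h : IsStraightLineDrawing G pos)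
    (hx : StrictMono fun w => (pos w).1) :
    (Finset.univ.filter fun e : V × V => IsShielded G pos e.1 e.2).card ≤
      (Finset.univ.filter (IsBelowChord pos)).card := by
  refine Finset.card_le_card_of_injOn Prod.fst (fun e he => ?_) ?_
  · exact Finset.mem_filter.2 ⟨Finset.mem_univ _, (Finset.mem_filter.1 he).2.isBelowChord hx⟩
  · rintro ⟨u, v⟩ he ⟨a, b⟩ he' (rfl : u = a)
    exact Prod.ext rfl ((Finset.mem_filter.1 he).2.eq h hx (Finset.mem_filter.1 he').2)

open scoped Classical in
lemma card_filter_exists_isFirstBelow_le [Fintype V] (h : IsStraightLineDrawing G pos)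
    (hx : StrictMono fun w => (pos w).1) :
    (Finset.univ.filter fun e : V × V => ∃ p, IsFirstBelow G pos e.1 e.2 p).card ≤
      (Finset.univ.filter (IsAboveChord pos)).card := by
  refine Finset.card_le_card_of_forall_subsingleton (fun e p => IsFirstBelow G pos e.1 e.2 p)
    (fun e he => ?_) fun p _ e he e' he' => he.2.eq h hx he'.2
  obtain ⟨p, hp⟩ := (Finset.mem_filter.1 he).2
  exact ⟨p, Finset.mem_filter.2 ⟨Finset.mem_univ _, hp.isAboveChord⟩, hp⟩

open scoped Classical in
lemma card_filter_arc_add_six_le [Fintype V] (h : IsStraightLineDrawing G pos)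
    (hx : StrictMono fun w => (pos w).1) (hV : 3 ≤ Fintype.card V) :
    (Finset.univ.filter fun e : V × V => Arc G e.1 e.2).card + 6 ≤ 3 * Fintype.card V := by
  have hcover : (Finset.univ.filter fun e : V × V => Arc G e.1 e.2) ⊆
      Finset.univ.filter (fun e => IsUppermostInto G pos e.1 e.2) ∪
        Finset.univ.filter (fun e => IsShielded G pos e.1 e.2) ∪
          Finset.univ.filter (fun e => ∃ p, IsFirstBelow G pos e.1 e.2 p) := by
    intro e he
    simp only [Finset.mem_union, Finset.mem_filter, Finset.mem_univ, true_and, or_assoc] at he ⊢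
    exact isUppermostInto_or_isShielded_or_exists_isFirstBelow h hx he
  have : Nonempty V := Fintype.card_pos_iff.1 (by omega)
  have harcs := (Finset.card_le_card hcover).trans <|
    (Finset.card_union_le _ _).trans (Nat.add_le_add_right (Finset.card_union_le _ _) _)
  have hupper := card_filter_isUppermostInto_add_one_le h hx
  have hshielded := card_filter_isShielded_le h hx
  have hbelow := card_filter_exists_isFirstBelow_le h hx
  have hchords := card_isBelowChord_add_card_isAboveChord_add_five_le hx hV
  omega

end Charging

lemma exists_linearEquiv_prod_injective_fst {V E : Type*} [Finite V] [AddCommGroup E] [Module ℝ E]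
    (hE : Module.finrank ℝ E = 2) {pos : V → E} (hpos : Function.Injective pos) :
    ∃ f : E ≃ₗ[ℝ] ℝ × ℝ, Function.Injective fun v => (f (pos v)).1 := by
  have : Module.Finite ℝ E := Module.finite_of_finrank_pos (by omega)
  let g : E ≃ₗ[ℝ] ℝ × ℝ := LinearEquiv.ofFinrankEq _ _ (by simp [hE])
  obtain ⟨t, ht⟩ := (Set.finite_range fun e : V × V =>
    ((g (pos e.1)).1 - (g (pos e.2)).1) / ((g (pos e.2)).2 - (g (pos e.1)).2)).exists_notMem
  let shear : (ℝ × ℝ) ≃ₗ[ℝ] ℝ × ℝ := LinearEquiv.ofInjectiveEndo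
    ((LinearMap.fst ℝ ℝ ℝ + t • LinearMap.snd ℝ ℝ ℝ).prod (LinearMap.snd ℝ ℝ ℝ)) <| by
      rintro ⟨x, y⟩ ⟨x', y'⟩ h
      obtain ⟨h₁, rfl : y = y'⟩ := Prod.ext_iff.1 h
      exact Prod.ext (add_right_cancel h₁) rfl
  refine ⟨g.trans shear, fun u v (huv : (g (pos u)).1 + t * (g (pos u)).2 =
    (g (pos v)).1 + t * (g (pos v)).2) => hpos (g.injective ?_)⟩
  by_cases hsnd : (g (pos u)).2 = (g (pos v)).2
  · exact Prod.ext (by simpa only [hsnd, add_left_inj] using huv) hsnd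
  · refine absurd ⟨(u, v), ?_⟩ ht
    rw [div_eq_iff (sub_ne_zero.2 (Ne.symm hsnd))]
    linarith

theorem IsStraightLineDrawing.card_edgeFinset_add_six_le {V E : Type*} [Fintype V]
    [AddCommGroup E] [Module ℝ E] {G : SimpleGraph V} [Fintype G.edgeSet] {pos : V → E}
    (h : IsStraightLineDrawing G pos) (hE : Module.finrank ℝ E = 2) (hV : 3 ≤ Fintype.card V) :
    G.edgeFinset.card + 6 ≤ 3 * Fintype.card V := by
  classical
  obtain ⟨f, hf⟩ := exists_linearEquiv_prod_injective_fst hE h.injective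
  let : LinearOrder V := LinearOrder.lift' _ hf
  have hdraw := h.affineMap_comp (f := f.toLinearMap.toAffineMap) f.injective
  have hcover : G.edgeFinset ⊆
      (Finset.univ.filter fun e : V × V => Arc G e.1 e.2).image fun e => s(e.1, e.2) := by
    intro e he
    induction e with | h u v =>
    have huv : G.Adj u v := by
      rwa [SimpleGraph.mem_edgeFinset, SimpleGraph.mem_edgeSet] at he
    simp only [Finset.mem_image, Finset.mem_filter, Finset.mem_univ, true_and, Prod.exists]
    rcases huv.ne.lt_or_gt with hlt | hlt
    · exact ⟨u, v, ⟨huv, hlt⟩, rfl⟩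
    · exact ⟨v, u, ⟨huv.symm, hlt⟩, Sym2.eq_swap⟩
  exact (Nat.add_le_add_right ((Finset.card_le_card hcover).trans Finset.card_image_le) 6).trans
    (card_filter_arc_add_six_le hdraw (fun _ _ huv => huv) hV)

/-! ### Delaunay graphs -/

lemma mem_segment_or_mem_segment_of_mem_openSegment {E : Type*} [AddCommGroup E] [Module ℝ E]
    {u v w z : E} (hv : z ∈ openSegment ℝ u v) (hw : z ∈ openSegment ℝ u w) :
    v ∈ segment ℝ u w ∨ w ∈ segment ℝ u v := by
  rcases eq_or_ne z u with rfl | hzu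
  · obtain rfl := left_mem_openSegment_iff.1 hv
    exact Or.inl (left_mem_segment ℝ _ _)
  have hray_v := (mem_segment_iff_wbtw.1 (openSegment_subset_segment ℝ _ _ hv)).sameRay_vsub_left
  have hray_w := (mem_segment_iff_wbtw.1 (openSegment_subset_segment ℝ _ _ hw)).sameRay_vsub_left
  have hray : SameRay ℝ (v -ᵥ u) (w -ᵥ u) :=
    hray_v.symm.trans hray_w fun h => absurd (vsub_eq_zero_iff_eq.1 h) hzu
  simpa only [mem_segment_iff_wbtw] using wbtw_total_of_sameRay_vsub_left hray

/-- `e` is the trace on `Q` of some closed ball. -/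
def IsBallTrace {E : Type*} [PseudoMetricSpace E] (Q e : Set E) : Prop :=
  ∃ c r, Q ∩ closedBall c r = e

/-- The Delaunay graph of `Q`: its edges are the pairs that a closed ball cuts out of `Q`. -/
def delaunayGraph {E : Type*} [PseudoMetricSpace E] (Q : Set E) : SimpleGraph Q where
  Adj u v := u ≠ v ∧ IsBallTrace Q {u.1, v.1}
  symm := ⟨fun u v h => ⟨h.1.symm, Set.pair_comm u.1 v.1 ▸ h.2⟩⟩

open scoped Classical in
lemma card_filter_isBallTrace_le {E : Type*} [PseudoMetricSpace E] (Q : Finset E) :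
    ((Q.powersetCard 2).filter fun e : Finset E => IsBallTrace (Q : Set E) e).card ≤
      (delaunayGraph (Q : Set E)).edgeFinset.card := by
  have hcover : ((Q.powersetCard 2).filter fun e : Finset E => IsBallTrace (Q : Set E) e) ⊆
      (delaunayGraph (Q : Set E)).edgeFinset.image fun e => (e.map Subtype.val).toFinset := by
    intro e he
    obtain ⟨he, htrace⟩ := Finset.mem_filter.1 he
    obtain ⟨heQ, hcard⟩ := Finset.mem_powersetCard.1 he
    obtain ⟨u, v, huv, rfl⟩ := Finset.card_eq_two.1 hcard
    obtain ⟨hu, hv⟩ := Finset.insert_subset_iff.1 heQ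
    refine Finset.mem_image.2 ⟨s(⟨u, hu⟩, ⟨v, Finset.singleton_subset_iff.1 hv⟩), ?_, ?_⟩
    · rw [SimpleGraph.mem_edgeFinset, SimpleGraph.mem_edgeSet]
      exact ⟨fun h => huv (Subtype.ext_iff.1 h), by simpa only [Finset.coe_pair] using htrace⟩
    · rw [Sym2.map_mk, Sym2.toFinset_mk_eq]
  exact (Finset.card_le_card hcover).trans Finset.card_image_le

section Delaunay

variable {E : Type*} [NormedAddCommGroup E] [InnerProductSpace ℝ E]

lemma convex_setOf_dist_sq_sub_lt (c c' : E) (k k' : ℝ) :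
    Convex ℝ {z | dist z c ^ 2 - k < dist z c' ^ 2 - k'} := by
  have haffine : {z | dist z c ^ 2 - k < dist z c' ^ 2 - k'} =
      {z | innerₛₗ ℝ (c' - c) z < (‖c'‖ ^ 2 - ‖c‖ ^ 2 + k - k') / 2} := by
    ext z
    simp only [Set.mem_ofPred_eq, dist_eq_norm, norm_sub_sq_real, map_sub, LinearMap.sub_apply,
      innerₛₗ_apply_apply, real_inner_comm z]
    constructor <;> intro h <;> linarith
  rw [haffine]
  exact convex_halfSpace_lt (innerₛₗ ℝ (c' - c)).isLinear _

lemma disjoint_convexHull_closedBall_diff (c c' : E) (r r' : ℝ) :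
    Disjoint (convexHull ℝ (closedBall c r \ closedBall c' r'))
      (convexHull ℝ (closedBall c' r' \ closedBall c r)) := by
  rcases lt_or_ge r 0 with hr | hr
  · simp [closedBall_eq_empty.2 hr]
  rcases lt_or_ge r' 0 with hr' | hr'
  · simp [closedBall_eq_empty.2 hr']
  have hsubset {c c' : E} {r r' : ℝ} (hr' : 0 ≤ r') :
      convexHull ℝ (closedBall c r \ closedBall c' r') ⊆
        {z | dist z c ^ 2 - r ^ 2 < dist z c' ^ 2 - r' ^ 2} := by
    refine convexHull_min (fun z hz => ?_) (convex_setOf_dist_sq_sub_lt c c' _ _)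
    have hin : dist z c ^ 2 ≤ r ^ 2 := pow_le_pow_left₀ dist_nonneg hz.1 2
    have hout : r' ^ 2 < dist z c' ^ 2 := pow_lt_pow_left₀ (not_le.1 hz.2) hr' two_ne_zero
    exact (sub_nonpos.2 hin).trans_lt (sub_pos.2 hout)
  refine Set.disjoint_left.2 fun z hz hz' => ?_
  exact lt_asymm (Set.mem_ofPred.1 (hsubset hr' hz)) (Set.mem_ofPred.1 (hsubset hr hz'))

variable {Q : Set E}

lemma eq_or_eq_of_delaunayGraph_adj {u v w : Q} (h : (delaunayGraph Q).Adj u v)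
    (hw : w.1 ∈ segment ℝ u.1 v.1) : w = u ∨ w = v := by
  obtain ⟨-, c, r, htrace⟩ := h
  have hu : u.1 ∈ Q ∩ closedBall c r := htrace ▸ Set.mem_insert _ _
  have hv : v.1 ∈ Q ∩ closedBall c r := htrace ▸ Set.mem_insert_of_mem _ rfl
  have hmem : w.1 ∈ Q ∩ closedBall c r :=
    ⟨w.2, (convex_closedBall c r).segment_subset hu.2 hv.2 hw⟩
  rw [htrace] at hmem
  exact hmem.imp Subtype.ext Subtype.ext

lemma disjoint_openSegment_of_delaunayGraph_adj {u v w : Q} (hv : (delaunayGraph Q).Adj u v)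
    (hw : (delaunayGraph Q).Adj u w) (hvw : v ≠ w) :
    Disjoint (openSegment ℝ u.1 v.1) (openSegment ℝ u.1 w.1) := by
  refine Set.disjoint_left.2 fun z hzv hzw => ?_
  rcases mem_segment_or_mem_segment_of_mem_openSegment hzv hzw with h | h
  · exact (eq_or_eq_of_delaunayGraph_adj hw h).elim hv.1.symm hvw
  · exact (eq_or_eq_of_delaunayGraph_adj hv h).elim hw.1.symm hvw.symm

lemma disjoint_openSegment_of_isBallTrace {u v a b : E} (huv : IsBallTrace Q {u, v})
    (hab : IsBallTrace Q {a, b}) (hdisj : Disjoint {u, v} ({a, b} : Set E)) :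
    Disjoint (openSegment ℝ u v) (openSegment ℝ a b) := by
  obtain ⟨c, r, htrace⟩ := huv
  obtain ⟨c', r', htrace'⟩ := hab
  have hsubset {c c' : E} {r r' : ℝ} {x y z w : E} (h : Q ∩ closedBall c r = {x, y})
      (h' : Q ∩ closedBall c' r' = {z, w}) (hd : Disjoint {x, y} ({z, w} : Set E)) :
      openSegment ℝ x y ⊆ convexHull ℝ (closedBall c r \ closedBall c' r') := by
    have hpair : {x, y} ⊆ closedBall c r \ closedBall c' r' := fun p hp => by
      have hpQ := (h ▸ hp : p ∈ Q ∩ closedBall c r)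
      exact ⟨hpQ.2, fun hpB => Set.disjoint_left.1 hd hp (h' ▸ ⟨hpQ.1, hpB⟩)⟩
    exact (openSegment_subset_segment ℝ x y).trans <|
      (convexHull_pair x y).symm.subset.trans (convexHull_mono hpair)
  exact (disjoint_convexHull_closedBall_diff c c' r r').mono (hsubset htrace htrace' hdisj)
    (hsubset htrace' htrace hdisj.symm)

theorem isStraightLineDrawing_delaunayGraph (Q : Set E) :
    IsStraightLineDrawing (delaunayGraph Q) Subtype.val where
  injective := Subtype.val_injective
  notMem_openSegment u v huv w hw := by
    rcases eq_or_eq_of_delaunayGraph_adj huv (openSegment_subset_segment ℝ _ _ hw) with rfl | rfl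
    · exact huv.1 (Subtype.ext (left_mem_openSegment_iff.1 hw))
    · exact huv.1 (Subtype.ext (right_mem_openSegment_iff.1 hw))
  disjoint_openSegment u v a b huv hab hne := by
    rcases eq_or_ne u a with rfl | hua
    · exact disjoint_openSegment_of_delaunayGraph_adj huv hab fun h => hne (h ▸ rfl)
    rcases eq_or_ne u b with rfl | hub
    · rw [openSegment_symm ℝ a.1]
      exact disjoint_openSegment_of_delaunayGraph_adj huv hab.symm fun h => hne (h ▸ Sym2.eq_swap)
    rcases eq_or_ne v a with rfl | hva
    · rw [openSegment_symm ℝ u.1]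
      exact disjoint_openSegment_of_delaunayGraph_adj huv.symm hab hub
    rcases eq_or_ne v b with rfl | hvb
    · rw [openSegment_symm ℝ u.1, openSegment_symm ℝ a.1]
      exact disjoint_openSegment_of_delaunayGraph_adj huv.symm hab.symm hua
    refine disjoint_openSegment_of_isBallTrace huv.2 hab.2 ?_
    simp only [Set.disjoint_insert_left, Set.disjoint_singleton_left, Set.mem_insert_iff,
      Set.mem_singleton_iff, not_or, ← Subtype.ext_iff]
    exact ⟨⟨hua, hub⟩, hva, hvb⟩

open scoped Classical in
lemma choose_two_le_card_filter_not_isBallTrace (hE : Module.finrank ℝ E = 2) (Q : Finset E) :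
    (Q.card - 3).choose 2 ≤
      ((Q.powersetCard 2).filter fun e : Finset E => ¬IsBallTrace (Q : Set E) e).card := by
  rcases lt_or_ge Q.card 3 with hQ | hQ
  · simp [Nat.sub_eq_zero_of_le hQ.le]
  have hcard : Fintype.card (Q : Set E) = Q.card := by simp
  have hplanar := (isStraightLineDrawing_delaunayGraph (Q : Set E)).card_edgeFinset_add_six_le hE
    (hcard ▸ hQ)
  have htraces := card_filter_isBallTrace_le Q
  have hpairs : ((Q.powersetCard 2).filter fun e : Finset E => IsBallTrace (Q : Set E) e).card +
      ((Q.powersetCard 2).filter fun e : Finset E => ¬IsBallTrace (Q : Set E) e).card =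
        Q.card.choose 2 := by
    rw [Finset.card_filter_add_card_filter_not, Finset.card_powersetCard]
  have hchoose : Q.card.choose 2 + 6 = (Q.card - 3).choose 2 + 3 * Q.card := by
    obtain ⟨m, hm⟩ := Nat.exists_eq_add_of_le' hQ
    rw [hm, Nat.add_sub_cancel]
    simp only [Nat.choose_succ_succ', zero_add, Nat.reduceAdd, Nat.choose_zero_right,
      Nat.choose_one_right]
    omega
  omega

end Delaunay

/-! ### Averaging over subsets -/

section Averaging

variable {α : Type*} [DecidableEq α]

lemma card_filter_subset_not_disjoint_le {S e D : Finset α} {k : ℕ} (he : e ⊆ S) (hD : D ⊆ S)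
    (heD : Disjoint e D) (hk : e.card < k) :
    {Q ∈ S.powersetCard k | e ⊆ Q ∧ ¬Disjoint D Q}.card ≤
      D.card * (S.card - e.card - 1).choose (k - e.card - 1) := by
  have hcover : {Q ∈ S.powersetCard k | e ⊆ Q ∧ ¬Disjoint D Q} ⊆
      D.biUnion fun w => {Q ∈ S.powersetCard k | insert w e ⊆ Q} := by
    intro Q hQ
    obtain ⟨hQS, heQ, hDQ⟩ := Finset.mem_filter.1 hQ
    obtain ⟨w, hwD, hwQ⟩ := Finset.not_disjoint_iff.1 hDQ
    exact Finset.mem_biUnion.2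
      ⟨w, hwD, Finset.mem_filter.2 ⟨hQS, Finset.insert_subset hwQ heQ⟩⟩
  refine (Finset.card_le_card hcover).trans (Finset.card_biUnion_le_card_mul _ _ _ fun w hw => ?_)
  have hcard : (insert w e).card = e.card + 1 :=
    Finset.card_insert_of_notMem (Finset.disjoint_right.1 heD hw)
  rw [Finset.card_filter_powersetCard_subset _ _ _ (Finset.insert_subset (hD hw) he) (by omega),
    hcard, Nat.sub_sub, Nat.sub_sub]

lemma choose_mul_choose_mul_sub {n k j : ℕ} (hjk : j < k) (hkn : k ≤ n) :
    n.choose k * (k.choose j * (k - j)) =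
      n.choose j * ((n - j) * (n - j - 1).choose (k - j - 1)) := by
  obtain ⟨i, rfl⟩ := Nat.exists_eq_add_of_lt hjk
  obtain ⟨m, rfl⟩ := Nat.exists_eq_add_of_le hkn
  rw [← mul_assoc, Nat.choose_mul hjk.le, mul_assoc,
    show j + i + 1 + m - j = i + m + 1 by omega, show j + i + 1 - j = i + 1 by omega]
  exact congrArg _ (Nat.add_one_mul_choose_eq (i + m) i).symm

lemma mul_choose_le_sum_card_mul_choose {S : Finset α} {j k b : ℕ} (hjk : j < k)
    {D : Finset α → Finset α} (hD : ∀ e ∈ S.powersetCard j, D e ⊆ S ∧ Disjoint e (D e))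
    (hb : ∀ Q ∈ S.powersetCard k, b ≤ {e ∈ Q.powersetCard j | ¬Disjoint (D e) Q}.card) :
    b * S.card.choose k ≤
      (∑ e ∈ S.powersetCard j, (D e).card) * (S.card - j - 1).choose (k - j - 1) := by
  calc b * S.card.choose k = ∑ _Q ∈ S.powersetCard k, b := by
        rw [Finset.sum_const, Finset.card_powersetCard, smul_eq_mul, mul_comm]
    _ ≤ ∑ Q ∈ S.powersetCard k, {e ∈ S.powersetCard j | e ⊆ Q ∧ ¬Disjoint (D e) Q}.card := by
        refine Finset.sum_le_sum fun Q hQ => (hb Q hQ).trans (Finset.card_le_card fun e he => ?_)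
        have hQS := (Finset.mem_powersetCard.1 hQ).1
        simp only [Finset.mem_filter, Finset.mem_powersetCard] at he ⊢
        exact ⟨⟨he.1.1.trans hQS, he.1.2⟩, he.1.1, he.2⟩
    _ = ∑ e ∈ S.powersetCard j, {Q ∈ S.powersetCard k | e ⊆ Q ∧ ¬Disjoint (D e) Q}.card :=
        Finset.sum_card_bipartiteAbove_eq_sum_card_bipartiteBelow _
    _ ≤ ∑ e ∈ S.powersetCard j, (D e).card * (S.card - j - 1).choose (k - j - 1) := by
        refine Finset.sum_le_sum fun e he => ?_
        obtain ⟨heS, rfl⟩ := Finset.mem_powersetCard.1 he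
        exact card_filter_subset_not_disjoint_le heS (hD e he).1 (hD e he).2 hjk
    _ = _ := (Finset.sum_mul _ _ _).symm

theorem exists_mul_sub_le_choose_mul_card {S : Finset α} {j k b : ℕ} (hjk : j < k)
    (hkS : k ≤ S.card) (D : Finset α → Finset α)
    (hD : ∀ e ∈ S.powersetCard j, D e ⊆ S ∧ Disjoint e (D e))
    (hb : ∀ Q ∈ S.powersetCard k, b ≤ {e ∈ Q.powersetCard j | ¬Disjoint (D e) Q}.card) :
    ∃ e ∈ S.powersetCard j, b * (S.card - j) ≤ k.choose j * (k - j) * (D e).card := by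
  by_contra! hlt
  set N := (S.card - j - 1).choose (k - j - 1)
  have hN : 0 < N := Nat.choose_pos (by omega)
  have hsum : k.choose j * (k - j) * ∑ e ∈ S.powersetCard j, (D e).card <
      S.card.choose j * (b * (S.card - j)) := by
    rw [Finset.mul_sum, ← Finset.card_powersetCard, ← smul_eq_mul (Finset.card _),
      ← Finset.sum_const]
    exact Finset.sum_lt_sum_of_nonempty (Finset.powersetCard_nonempty.2 (hjk.le.trans hkS)) hlt
  refine (Nat.mul_lt_mul_of_pos_right hsum hN).not_ge ?_
  calc S.card.choose j * (b * (S.card - j)) * N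
      = b * (S.card.choose j * ((S.card - j) * N)) := by ring
    _ = k.choose j * (k - j) * (b * S.card.choose k) := by
        rw [← choose_mul_choose_mul_sub hjk hkS]
        ring
    _ ≤ k.choose j * (k - j) * ((∑ e ∈ S.powersetCard j, (D e).card) * N) :=
        Nat.mul_le_mul_left _ (mul_choose_le_sum_card_mul_choose hjk hD hb)
    _ = k.choose j * (k - j) * (∑ e ∈ S.powersetCard j, (D e).card) * N := by ring

end Averaging

section Plane

variable {E : Type*} [NormedAddCommGroup E] [InnerProductSpace ℝ E]

open scoped Classical in
theorem exists_mem_powersetCard_two_forall_closedBall_le_card (hE : Module.finrank ℝ E = 2)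
    {S : Finset E} {k : ℕ} (hk : 2 < k) (hkS : k ≤ S.card) :
    ∃ e ∈ S.powersetCard 2, ∀ c r, (e : Set E) ⊆ closedBall c r →
      (k - 3).choose 2 * (S.card - 2) ≤
        k.choose 2 * (k - 2) * {p ∈ S \ e | p ∈ closedBall c r}.card := by
  by_contra! hlight
  choose! c r hball hlight using hlight
  set D : Finset E → Finset E := fun e => {p ∈ S \ e | p ∈ closedBall (c e) (r e)}
  have htrace {Q e : Finset E} (hQ : Q ⊆ S) (he : e ∈ Q.powersetCard 2) (hdisj : Disjoint (D e) Q) :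
      IsBallTrace (Q : Set E) e := by
    obtain ⟨heQ, hcard⟩ := Finset.mem_powersetCard.1 he
    refine ⟨c e, r e, Set.Subset.antisymm (fun p ⟨hpQ, hpB⟩ => ?_) (Set.subset_inter ?_ ?_)⟩
    · by_contra hpe
      exact Finset.disjoint_right.1 hdisj hpQ
        (Finset.mem_filter.2 ⟨Finset.mem_sdiff.2 ⟨hQ hpQ, hpe⟩, hpB⟩)
    · exact Finset.coe_subset.2 heQ
    · exact hball e (Finset.mem_powersetCard.2 ⟨heQ.trans hQ, hcard⟩)
  obtain ⟨e, he, hheavy⟩ := exists_mul_sub_le_choose_mul_card (b := (k - 3).choose 2) hk hkS D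
    (fun e _ => ⟨(Finset.filter_subset _ _).trans Finset.sdiff_subset,
      Finset.disjoint_sdiff.mono_right (Finset.filter_subset _ _)⟩) fun Q hQ => by
      obtain ⟨hQS, rfl⟩ := Finset.mem_powersetCard.1 hQ
      refine (choose_two_le_card_filter_not_isBallTrace hE Q).trans (Finset.card_le_card ?_)
      refine Finset.monotone_filter_right _ fun e he hne hdisj => hne (htrace hQS he hdisj)
  exact (hlight e he).not_ge hheavy

theorem pi_lower_bound_5n_over_84_general (hE : Module.finrank ℝ E = 2) {n : ℕ} (hn : 8 ≤ n)
    {S : Set E} (hcard : S.ncard = n) :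
    ∃ u ∈ S, ∃ v ∈ S, u ≠ v ∧ ∀ (c : E) (r : ℝ), u ∈ closedBall c r → v ∈ closedBall c r →
      ⌈5 * ((n : ℝ) - 2) / 84⌉ ≤ (((S \ {u, v}) ∩ closedBall c r).ncard : ℤ) := by
  classical
  lift S to Finset E using Set.finite_of_ncard_pos (by omega)
  rw [Set.ncard_coe_finset] at hcard
  obtain ⟨e, he, hheavy⟩ :=
    exists_mem_powersetCard_two_forall_closedBall_le_card hE (by norm_num) (hcard ▸ hn)
  obtain ⟨heS, he2⟩ := Finset.mem_powersetCard.1 he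
  obtain ⟨u, v, huv, rfl⟩ := Finset.card_eq_two.1 he2
  obtain ⟨hu, hv⟩ := Finset.insert_subset_iff.1 heS
  refine ⟨u, hu, v, Finset.singleton_subset_iff.1 hv, huv, fun c r huc hvc => ?_⟩
  have hball : ((S : Set E) \ {u, v}) ∩ closedBall c r =
      ({p ∈ S \ {u, v} | p ∈ closedBall c r} : Finset E) := by
    ext
    simp
  have hbound := hheavy c r (by simp [Set.insert_subset_iff, huc, hvc])
  rw [hcard, show Nat.choose (8 - 3) 2 = 10 from rfl, show Nat.choose 8 2 = 28 from rfl] at hbound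
  rw [hball, Set.ncard_coe_finset, Int.ceil_le, div_le_iff₀ (by norm_num)]
  have : 5 * n ≤ 84 * {p ∈ S \ {u, v} | p ∈ closedBall c r}.card + 10 := by omega
  have : (5 : ℝ) * n ≤ 84 * {p ∈ S \ {u, v} | p ∈ closedBall c r}.card + 10 := mod_cast this
  push_cast
  linarith

end Plane

/-- For every `n ≥ 8` and every set `S` of `n` points in the plane in general position,
there exist two distinct points `u, v ∈ S` such that every closed disk containing both
`u` and `v` contains at least `⌈5(n−2)/84⌉` points of `S` other than `u` and `v`. -/
theorem pi_lower_bound_5n_over_84 (n : ℕ) (hn : 8 ≤ n) (S : Set Pt)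
    (hfin : S.Finite) (hcard : S.ncard = n) (hgp : GenPos S) :
    ∃ u ∈ S, ∃ v ∈ S, u ≠ v ∧
      ∀ (c : Pt) (r : ℝ), 0 < r → u ∈ closedBall c r → v ∈ closedBall c r →
        ⌈5 * ((n : ℝ) - 2) / 84⌉ ≤ (((S \ {u, v}) ∩ closedBall c r).ncard : ℤ) := by
  obtain ⟨u, hu, v, hv, huv, h⟩ :=
    pi_lower_bound_5n_over_84_general finrank_euclideanSpace_fin hn hcard
  exact ⟨u, hu, v, hv, huv, fun c r _ => h c r⟩
end
end

section
/- For every integer n ≥ 6 and every set S of n points in the Euclidean plane in general position, there exist two distinct points u, v ∈ S such that every closed disk containing both u and v contains at least ⌈n/5⌉ + 1 points of S. -/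
open EuclideanGeometry Metric

noncomputable section

/-!
Lift each point `p` to `(p 0, p 1, |p|²)`, so that disks become half-spaces and the lifted points
are in convex position. An ordered triple `(u, v, w)` spans an oriented plane, i.e. an oriented
circle; it is at level `j` if exactly `j` points of `S` lie on its positive side.

The number of triples at level `j` depends only on `n = |S|`: it is `6 (j + 1) (n - j - 2)`. For
`j = 0`, order `S` by a generic direction. Each triple is, up to rotation, either increasing or
decreasing, and each point that is neither first nor last is the middle of exactly one increasing
and one decreasing triple at level `0`: after inversion at this point, these are the two convex hull
edges that cross the line separating the smaller points from the larger ones. Deleting each point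
of `S` in turn relates the counts at the levels `j` and `j + 1`, which gives all other levels by
induction.

Suppose now that a disk containing `u` and `v` contains at most `k` further points. It can be shrunk
so that `u` and `v` lie on its boundary. Rotating the corresponding plane about the lifted line `uv`
through half a turn replaces the enclosed set by its complement, one point at a time, so some `w`
makes `(u, v, w)` a triple at level exactly `k`. If every pair had such a disk, then
`n (n - 1) ≤ 6 (k + 1) (n - k - 2)`, which fails for `5 k + 6 ≤ n`.
-/

namespace CirclePairs

open Finset
open scoped Topology

section Bridge

variable {ι : Type*}

/-- Twice the signed area of the planar triangle with vertices `(a u, b u)`, `(a w, b w)` and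
`(a x, b x)`. For `a u < a w` it is positive iff the third vertex lies above the line through the
first two. -/
def doubleArea (a b : ι → ℝ) (u w x : ι) : ℝ :=
  (a w - a u) * (b x - b u) - (a x - a u) * (b w - b u)

/-- The ordinate at which the line through `(a u, b u)` and `(a w, b w)` meets the vertical axis;
for a vertical line the value is the junk `0`. -/
def intercept (a b : ι → ℝ) (u w : ι) : ℝ := (a w * b u - a u * b w) / (a w - a u)

variable {a b : ι → ℝ}

lemma doubleArea_self_left (u w : ι) : doubleArea a b u w u = 0 := by
  simp only [doubleArea]; ring

lemma doubleArea_self_right (u w : ι) : doubleArea a b u w w = 0 := by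
  simp only [doubleArea]; ring

lemma intercept_sub_intercept {u w u' w' : ι} (h : a u < a w) (h' : a u' < a w') :
    intercept a b u' w' - intercept a b u w =
      (a w' * doubleArea a b u w u' - a u' * doubleArea a b u w w') /
        ((a w - a u) * (a w' - a u')) := by
  have := (sub_pos.2 h).ne'
  have := (sub_pos.2 h').ne'
  simp only [intercept, doubleArea]
  field_simp
  ring

lemma intercept_le_intercept_iff {u w u' w' : ι} (h : a u < a w) (h' : a u' < a w') :
    intercept a b u' w' ≤ intercept a b u w ↔
      a w' * doubleArea a b u w u' ≤ a u' * doubleArea a b u w w' := by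
  rw [← sub_nonpos, intercept_sub_intercept h h',
    div_le_iff₀ (mul_pos (sub_pos.2 h) (sub_pos.2 h')), zero_mul, sub_nonpos]

lemma intercept_lt_intercept_iff {u w u' w' : ι} (h : a u < a w) (h' : a u' < a w') :
    intercept a b u' w' < intercept a b u w ↔
      a w' * doubleArea a b u w u' < a u' * doubleArea a b u w w' := by
  rw [← sub_neg, intercept_sub_intercept h h',
    div_lt_iff₀ (mul_pos (sub_pos.2 h) (sub_pos.2 h')), zero_mul, sub_neg]

/-- The pair `q` is the (upper) bridge across the vertical axis: its points lie to the left and to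
the right of the axis, and no point of `S` lies above the line through them. -/
def IsBridge (a b : ι → ℝ) (S : Finset ι) (q : ι × ι) : Prop :=
  (q.1 ∈ S ∧ q.2 ∈ S) ∧ (a q.1 < 0 ∧ 0 < a q.2) ∧ ∀ x ∈ S, doubleArea a b q.1 q.2 x ≤ 0

/-- Take the pair whose segment crosses the vertical axis highest. -/
lemma exists_isBridge {S : Finset ι} (ha : ∀ x ∈ S, a x ≠ 0) (hneg : ∃ u ∈ S, a u < 0)
    (hpos : ∃ w ∈ S, 0 < a w) : ∃ q, IsBridge a b S q := by
  obtain ⟨⟨u, w⟩, huw, hmax⟩ := exists_max_image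
    ({u ∈ S | a u < 0} ×ˢ {w ∈ S | 0 < a w}) (fun q => intercept a b q.1 q.2)
    (by simpa only [nonempty_product, filter_nonempty_iff] using ⟨hneg, hpos⟩)
  simp only [mem_product, mem_filter, and_imp, Prod.forall] at huw hmax
  obtain ⟨⟨huS, hu⟩, hwS, hw⟩ := huw
  refine ⟨(u, w), ⟨huS, hwS⟩, ⟨hu, hw⟩, fun x hx => ?_⟩
  obtain hneg | hpos := (ha x hx).lt_or_gt
  · have := hmax x w hx hneg hwS hw
    rw [intercept_le_intercept_iff (hu.trans hw) (hneg.trans hw), doubleArea_self_right,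
      mul_zero] at this
    exact nonpos_of_mul_nonpos_right this hw
  · have := hmax u x huS hu hx hpos
    rw [intercept_le_intercept_iff (hu.trans hw) (hu.trans hpos), doubleArea_self_left,
      mul_zero] at this
    exact nonpos_of_mul_nonneg_right this hu

lemma IsBridge.intercept_le {S : Finset ι} {q q' : ι × ι} (h : IsBridge a b S q)
    (h' : IsBridge a b S q') : intercept a b q'.1 q'.2 ≤ intercept a b q.1 q.2 := by
  obtain ⟨-, ⟨hu, hw⟩, hbelow⟩ := h
  obtain ⟨⟨hu'S, hw'S⟩, ⟨hu', hw'⟩, -⟩ := h'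
  exact (intercept_le_intercept_iff (hu.trans hw) (hu'.trans hw')).2
    ((mul_nonpos_of_nonneg_of_nonpos hw'.le (hbelow _ hu'S)).trans
      (mul_nonneg_of_nonpos_of_nonpos hu'.le (hbelow _ hw'S)))

lemma IsBridge.eq {S : Finset ι}
    (hS : ∀ u ∈ S, ∀ w ∈ S, ∀ x ∈ S, u ≠ w → x ≠ u → x ≠ w → doubleArea a b u w x ≠ 0)
    {q q' : ι × ι} (h : IsBridge a b S q) (h' : IsBridge a b S q') : q' = q := by
  have hle := h'.intercept_le h
  obtain ⟨u, w⟩ := q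
  obtain ⟨u', w'⟩ := q'
  obtain ⟨⟨huS, hwS⟩, ⟨hu, hw⟩, hbelow⟩ := h
  obtain ⟨⟨hu'S, hw'S⟩, ⟨hu', hw'⟩, -⟩ := h'
  dsimp only at *
  have hge := not_lt.1 (mt (intercept_lt_intercept_iff (hu.trans hw) (hu'.trans hw')).2 hle.not_gt)
  have hu'_nonpos := mul_nonpos_of_nonneg_of_nonpos hw'.le (hbelow u' hu'S)
  have hw'_nonneg := mul_nonneg_of_nonpos_of_nonpos hu'.le (hbelow w' hw'S)
  have hu'_zero : doubleArea a b u w u' = 0 :=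
    (mul_eq_zero.1 (hu'_nonpos.antisymm (hw'_nonneg.trans hge))).resolve_left hw'.ne'
  have hw'_zero : doubleArea a b u w w' = 0 :=
    (mul_eq_zero.1 ((hge.trans hu'_nonpos).antisymm hw'_nonneg)).resolve_left hu'.ne
  have ne_of_sign : ∀ {x y}, a x < 0 → 0 < a y → x ≠ y := by
    rintro x _ hx hy rfl
    exact hx.not_gt hy
  have huw := ne_of_sign hu hw
  rw [Prod.mk.injEq]
  exact ⟨by_contra fun h => hS u huS w hwS u' hu'S huw h (ne_of_sign hu' hw) hu'_zero,
    by_contra fun h => hS u huS w hwS w' hw'S huw (ne_of_sign hu hw').symm h hw'_zero⟩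

theorem existsUnique_isBridge {S : Finset ι} (ha : ∀ x ∈ S, a x ≠ 0)
    (hS : ∀ u ∈ S, ∀ w ∈ S, ∀ x ∈ S, u ≠ w → x ≠ u → x ≠ w → doubleArea a b u w x ≠ 0)
    (hneg : ∃ u ∈ S, a u < 0) (hpos : ∃ w ∈ S, 0 < a w) : ∃! q, IsBridge a b S q := by
  obtain ⟨q, hq⟩ := exists_isBridge ha hneg hpos
  exact ⟨q, hq, fun _ => hq.eq hS⟩

end Bridge

lemma exists_inner_injOn {E : Type*} [NormedAddCommGroup E] [InnerProductSpace ℝ E]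
    (S : Finset E) : ∃ d : E, Set.InjOn (fun x => inner ℝ d x) (S : Set E) := by
  classical
  obtain ⟨d, hd⟩ := Module.Dual.exists_forall_ne_zero_of_forall_exists
    (fun q : S.offDiag => innerₗ E (q.1.1 - q.1.2))
    (fun q => ⟨_, inner_self_ne_zero.2 (sub_ne_zero.2 (mem_offDiag.1 q.2).2.2)⟩)
  refine ⟨d, fun x hx y hy hxy => by_contra fun hne => ?_⟩
  refine hd ⟨(x, y), mem_offDiag.2 ⟨hx, hy, hne⟩⟩ ?_
  simpa [real_inner_comm, inner_sub_left, sub_eq_zero] using hxy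

section Counting

variable {α : Type*}

lemma card_filter_card_erase_eq [DecidableEq α] {S D P : Finset α} {j m : ℕ} (hD : D ⊆ S)
    (hP : P ⊆ S) (hDP : Disjoint D P) (hm : #S = #D + j + m) :
    #{p ∈ S | p ∉ D ∧ #(P.erase p) = j} =
      (if #P = j then m else 0) + if #P = j + 1 then j + 1 else 0 := by
  have hmem : ∀ p ∈ P, (#(P.erase p) = j ↔ #P = j + 1) := fun p hp => by
    rw [← card_erase_add_one hp, add_left_inj]
  have hnot : ∀ p ∉ P, (#(P.erase p) = j ↔ #P = j) := fun p hp => by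
    rw [erase_eq_of_notMem hp]
  have hsplit : {p ∈ S | p ∉ D ∧ #(P.erase p) = j} =
      (S \ (D ∪ P)).filter (fun _ => #P = j) ∪ P.filter (fun _ => #P = j + 1) := by
    ext p
    have hpD : p ∈ P → p ∉ D := fun hp => disjoint_right.1 hDP hp
    have hPS : p ∈ P → p ∈ S := fun hp => hP hp
    by_cases hp : p ∈ P
    · simp only [mem_filter, mem_union, mem_sdiff, hmem p hp]
      tauto
    · simp only [mem_filter, mem_union, mem_sdiff, hnot p hp]
      tauto
  have hdisj : Disjoint (S \ (D ∪ P)) P :=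
    disjoint_sdiff_self_left.mono_right subset_union_right
  have hcard : #P = j → #(S \ (D ∪ P)) = m := fun hj => by
    rw [card_sdiff_of_subset (union_subset hD hP), card_union_of_disjoint hDP]
    omega
  rw [hsplit, card_union_of_disjoint (disjoint_filter_filter hdisj), filter_const, filter_const]
  split_ifs with hj hj' hj'
  · omega
  · simp [hcard hj]
  · simp [hj']
  · simp

/-- Double counting of pairs (deleted point, surviving configuration), where a configuration `t` is
defined by the points of `D t` and is at the level `#(P t)`: deleting a point outside `D t` lowers
the level by one if the point is in `P t` and otherwise leaves it. -/
lemma sum_card_filter_erase [DecidableEq α] {τ : Type*} {S : Finset α} {C : Finset τ}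
    {D P : τ → Finset α} {d j m : ℕ} (hD : ∀ t ∈ C, D t ⊆ S) (hP : ∀ t ∈ C, P t ⊆ S)
    (hDP : ∀ t ∈ C, Disjoint (D t) (P t)) (hd : ∀ t ∈ C, #(D t) = d) (hm : #S = d + j + m) :
    ∑ p ∈ S, #{t ∈ C | p ∉ D t ∧ #((P t).erase p) = j} =
      m * #{t ∈ C | #(P t) = j} + (j + 1) * #{t ∈ C | #(P t) = j + 1} :=
  calc
    _ = ∑ t ∈ C, #{p ∈ S | p ∉ D t ∧ #((P t).erase p) = j} :=
      sum_card_bipartiteAbove_eq_sum_card_bipartiteBelow fun p t => p ∉ D t ∧ #((P t).erase p) = j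
    _ = ∑ t ∈ C, ((if #(P t) = j then m else 0) + if #(P t) = j + 1 then j + 1 else 0) :=
      sum_congr rfl fun t ht =>
        card_filter_card_erase_eq (hD t ht) (hP t ht) (hDP t ht) (by rw [hd t ht, hm])
    _ = _ := by
      rw [sum_add_distrib, ← sum_filter, ← sum_filter, sum_const, sum_const, smul_eq_mul,
        smul_eq_mul, mul_comm m, mul_comm (j + 1)]

lemma card_filter_not_extremal_add_two {β : Type*} [LinearOrder β] {f : α → β} {S : Finset α}
    (hf : Set.InjOn f S) (hS : S.Nontrivial) :
    #{v ∈ S | (∃ u ∈ S, f u < f v) ∧ ∃ w ∈ S, f v < f w} + 2 = #S := by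
  classical
  obtain ⟨a, ha, hamin⟩ := exists_min_image S f hS.nonempty
  obtain ⟨b, hb, hbmax⟩ := exists_max_image S f hS.nonempty
  have hab : a ≠ b := by
    rintro rfl
    obtain ⟨x, hx, hxa⟩ := hS.exists_ne a
    exact hxa (hf hx ha ((hbmax x hx).antisymm (hamin x hx)))
  have hmid : {v ∈ S | (∃ u ∈ S, f u < f v) ∧ ∃ w ∈ S, f v < f w} = (S.erase a).erase b := by
    ext v
    simp only [mem_filter, mem_erase]
    constructor
    · rintro ⟨hv, ⟨u, hu, huv⟩, w, hw, hvw⟩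
      refine ⟨?_, ?_, hv⟩ <;> rintro rfl
      exacts [(hbmax w hw).not_gt hvw, (hamin u hu).not_gt huv]
    · rintro ⟨hvb, hva, hv⟩
      exact ⟨hv, ⟨a, ha, (hamin v hv).lt_of_ne (hf.ne ha hv hva.symm)⟩,
        b, hb, (hbmax v hv).lt_of_ne (hf.ne hv hb hvb)⟩
  have h₁ := card_erase_add_one ha
  have h₂ := card_erase_add_one (mem_erase.2 ⟨hab.symm, hb⟩)
  rw [hmid]
  omega

lemma card_eq_mul_card_filter {L : Finset α} {r : Equiv.Perm α} {P : α → Prop} {k : ℕ}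
    [DecidablePred P] (hr : ∀ t, r t ∈ L ↔ t ∈ L)
    (h : ∀ t ∈ L, #{i ∈ range k | P ((r ^ i) t)} = 1) :
    #L = k * #{t ∈ L | P t} := by
  have hrpow : ∀ i : ℕ, ∀ t, (r ^ i) t ∈ L ↔ t ∈ L := by
    intro i
    induction i with
    | zero => simp
    | succ i ih => intro t; rw [pow_succ', Equiv.Perm.mul_apply, hr, ih]
  have hcard : ∀ i : ℕ, #{t ∈ L | P ((r ^ i) t)} = #{t ∈ L | P t} := fun i =>
    card_equiv (r ^ i) (by simp [hrpow])
  calc #L = ∑ t ∈ L, #{i ∈ range k | P ((r ^ i) t)} := by rw [sum_congr rfl h, card_eq_sum_ones]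
    _ = ∑ i ∈ range k, #{t ∈ L | P ((r ^ i) t)} :=
      (sum_card_bipartiteAbove_eq_sum_card_bipartiteBelow fun i t => P ((r ^ i) t)).symm
    _ = k * #{t ∈ L | P t} := by simp [hcard]

end Counting

section InCircle

/-- The planar cross product. -/
def cross (p q : Pt) : ℝ := p 0 * q 1 - p 1 * q 0

/-- Twice the signed area of the triangle `v u x`; it vanishes exactly on the line `uv`. -/
def side (u v x : Pt) : ℝ := cross (u - v) (x - v)

/-- The power of `x` with respect to the circle with diameter `uv`. -/
def thales (u v x : Pt) : ℝ := inner ℝ (x - u) (x - v)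

/-- The in-circle determinant, i.e. the determinant of the lifts `(p 0, p 1, |p|²)` of `u`, `w`,
`x` relative to the lift of `v`. For fixed `u`, `v`, `w` its sign tells on which side of the circle
through `u`, `v`, `w` the point `x` lies. -/
def inCircle (u v w x : Pt) : ℝ := side u v w * thales u v x - thales u v w * side u v x

lemma inner_eq (p q : Pt) : inner ℝ p q = p 0 * q 0 + p 1 * q 1 := by
  rw [PiLp.inner_apply, Fin.sum_univ_two]
  simp [mul_comm]

lemma dist_sq (p q : Pt) : dist p q ^ 2 = (p 0 - q 0) ^ 2 + (p 1 - q 1) ^ 2 := by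
  simp [EuclideanSpace.dist_sq_eq, Fin.sum_univ_two, Real.dist_eq]

lemma side_eq (u v x : Pt) :
    side u v x = (u 0 - v 0) * (x 1 - v 1) - (u 1 - v 1) * (x 0 - v 0) := rfl

lemma thales_eq (u v x : Pt) :
    thales u v x = (x 0 - u 0) * (x 0 - v 0) + (x 1 - u 1) * (x 1 - v 1) := inner_eq _ _

lemma side_sq_add_thales_sq (u v x : Pt) :
    side u v x ^ 2 + thales u v x ^ 2 = dist x u ^ 2 * dist x v ^ 2 := by
  rw [side_eq, thales_eq, dist_sq, dist_sq]
  ring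

lemma thales_ne_zero_of_side_eq_zero {u v x : Pt} (hxu : x ≠ u) (hxv : x ≠ v)
    (h : side u v x = 0) : thales u v x ≠ 0 := by
  have := side_sq_add_thales_sq u v x
  rintro h'
  rw [h, h'] at this
  have : 0 < dist x u ^ 2 * dist x v ^ 2 := by
    have := dist_pos.2 hxu
    have := dist_pos.2 hxv
    positivity
  linarith

lemma inCircle_rotate (u v w x : Pt) : inCircle w u v x = inCircle u v w x := by
  simp only [inCircle, side_eq, thales_eq]
  ring

lemma inCircle_self_left (u v w : Pt) : inCircle u v w u = 0 := by
  simp only [inCircle, side_eq, thales_eq]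
  ring

lemma inCircle_self_middle (u v w : Pt) : inCircle u v w v = 0 := by
  rw [← inCircle_rotate, ← inCircle_rotate, inCircle_self_left]

lemma inCircle_self_right (u v w : Pt) : inCircle u v w w = 0 := by
  rw [← inCircle_rotate, inCircle_self_left]

lemma collinear_of_side_eq_zero {u v : Pt} (huv : u ≠ v) {s : Set Pt}
    (h : ∀ x ∈ s, side u v x = 0) : Collinear ℝ s := by
  have hd : 0 < (u 0 - v 0) ^ 2 + (u 1 - v 1) ^ 2 := by
    rw [← dist_sq]
    have := dist_pos.2 huv
    positivity
  rw [collinear_iff_exists_forall_eq_smul_vadd]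
  refine ⟨v, u - v, fun x hx => ⟨inner ℝ (x - v) (u - v) / dist u v ^ 2, ?_⟩⟩
  have hx := h x hx
  rw [side_eq] at hx
  rw [inner_eq, dist_sq]
  ext i
  fin_cases i <;> simp <;> field_simp
  · linear_combination (-(u 1 - v 1)) * hx
  · linear_combination (u 0 - v 0) * hx

/-- The centre is the midpoint of `uv`, slid along the bisector. -/
lemma cospherical_of_thales_eq {u v : Pt} {μ : ℝ} {s : Set Pt}
    (h : ∀ x ∈ s, thales u v x = μ * side u v x) : Cospherical s := by
  let c : Pt := !₂[(u 0 + v 0 - μ * (u 1 - v 1)) / 2, (u 1 + v 1 + μ * (u 0 - v 0)) / 2]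
  refine ⟨c, dist u c, fun x hx => (sq_eq_sq₀ dist_nonneg dist_nonneg).1 ?_⟩
  have hx := h x hx
  rw [thales_eq, side_eq] at hx
  rw [dist_sq, dist_sq]
  simp only [c, Matrix.cons_val_zero, Matrix.cons_val_one]
  linear_combination hx

lemma collinear_or_cospherical_of_inCircle_eq_zero {u v w x : Pt} (huv : u ≠ v) (hwu : w ≠ u)
    (hwv : w ≠ v) (h : inCircle u v w x = 0) :
    Collinear ℝ {u, v, w, x} ∨ Cospherical {u, v, w, x} := by
  have hu : side u v u = 0 ∧ thales u v u = 0 := by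
    constructor <;> simp only [side_eq, thales_eq] <;> ring
  have hv : side u v v = 0 ∧ thales u v v = 0 := by
    constructor <;> simp only [side_eq, thales_eq] <;> ring
  rw [inCircle, sub_eq_zero] at h
  by_cases hw : side u v w = 0
  · have hx : side u v x = 0 := by
      rw [hw, zero_mul, eq_comm] at h
      exact (mul_eq_zero.1 h).resolve_left (thales_ne_zero_of_side_eq_zero hwu hwv hw)
    left
    refine collinear_of_side_eq_zero huv ?_
    simp [hu, hv, hw, hx]
  · right
    refine cospherical_of_thales_eq (u := u) (v := v) (μ := thales u v w / side u v w) ?_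
    simp only [Set.mem_insert_iff, Set.mem_singleton_iff, forall_eq_or_imp, forall_eq, hu, hv]
    refine ⟨by simp, by simp, by field_simp, ?_⟩
    field_simp
    linarith

/-- Weak general position: no four points are collinear or concyclic, so that `inCircle` does not
vanish at four distinct points. -/
def Generic (S : Set Pt) : Prop :=
  ∀ T ⊆ S, T.ncard = 4 → ¬Collinear ℝ T ∧ ¬Cospherical T

lemma Generic.mono {S T : Set Pt} (hS : Generic S) (h : T ⊆ S) : Generic T :=
  fun U hU => hS U (hU.trans h)

lemma _root_.GenPos.generic {S : Set Pt} (hS : GenPos S) : Generic S := by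
  refine fun T hTS hT => ⟨fun hcol => ?_, hS.2 T hTS hT⟩
  obtain ⟨U, hUT, hU⟩ := Set.exists_subset_card_eq (s := T) (n := 3) (by omega)
  exact hS.1 U (hUT.trans hTS) hU (hcol.subset hUT)

lemma Generic.inCircle_ne_zero {S : Set Pt} (hS : Generic S) {u v w x : Pt} (hu : u ∈ S)
    (hv : v ∈ S) (hw : w ∈ S) (hx : x ∈ S) (huv : u ≠ v) (huw : u ≠ w) (hvw : v ≠ w)
    (hxu : x ≠ u) (hxv : x ≠ v) (hxw : x ≠ w) : inCircle u v w x ≠ 0 := by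
  have hsub : {u, v, w, x} ⊆ S := by
    simp [Set.insert_subset_iff, *]
  have hcard : ({u, v, w, x} : Set Pt).ncard = 4 := by
    rw [Set.ncard_insert_of_notMem, Set.ncard_eq_three.2 ⟨v, w, x, hvw, hxv.symm, hxw.symm, rfl⟩]
    simp [huv, huw, hxu.symm]
  have := hS _ hsub hcard
  exact fun h => (collinear_or_cospherical_of_inCircle_eq_zero huv huw.symm hvw.symm h).elim
    this.1 this.2

/-- The coordinate along `d` of the image of `y` under inversion at `v`, scaled by `‖d‖`. -/
def invInner (d v y : Pt) : ℝ := inner ℝ d (y - v) / dist y v ^ 2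

/-- The coordinate perpendicular to `d` of the image of `y` under inversion at `v`, scaled by
`‖d‖`. -/
def invCross (d v y : Pt) : ℝ := cross d (y - v) / dist y v ^ 2

lemma norm_sq_mul_inCircle (d v : Pt) {u w x : Pt} (hu : u ≠ v) (hw : w ≠ v) (hx : x ≠ v) :
    ‖d‖ ^ 2 * inCircle u v w x = dist u v ^ 2 * dist w v ^ 2 * dist x v ^ 2 *
      doubleArea (invInner d v) (invCross d v) u w x := by
  have hu := pow_ne_zero 2 (dist_ne_zero.2 hu)
  have hw := pow_ne_zero 2 (dist_ne_zero.2 hw)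
  have hx := pow_ne_zero 2 (dist_ne_zero.2 hx)
  rw [dist_sq] at hu hw hx
  simp only [doubleArea, invInner, invCross, EuclideanSpace.real_norm_sq_eq, Fin.sum_univ_two,
    inner_eq, cross, inCircle, side_eq, thales_eq, dist_sq, PiLp.sub_apply]
  field_simp
  ring

lemma sign_inCircle {d : Pt} (hd : d ≠ 0) (v : Pt) {u w x : Pt} (hu : u ≠ v) (hw : w ≠ v)
    (hx : x ≠ v) : SignType.sign (inCircle u v w x) =
      SignType.sign (doubleArea (invInner d v) (invCross d v) u w x) := by
  have dist_sq_pos : ∀ {y}, y ≠ v → 0 < dist y v ^ 2 := fun hy => pow_pos (dist_pos.2 hy) 2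
  have h := congrArg SignType.sign (norm_sq_mul_inCircle d v hu hw hx)
  rwa [sign_mul, sign_mul, sign_pos (pow_pos (norm_pos_iff.2 hd) 2), one_mul,
    sign_pos (mul_pos (mul_pos (dist_sq_pos hu) (dist_sq_pos hw)) (dist_sq_pos hx)), one_mul] at h

lemma invInner_neg_iff {d v y : Pt} (hy : y ≠ v) :
    invInner d v y < 0 ↔ inner ℝ d y < inner ℝ d v := by
  rw [invInner, div_lt_iff₀ (pow_pos (dist_pos.2 hy) 2), zero_mul, inner_sub_right, sub_neg]

lemma invInner_pos_iff {d v y : Pt} (hy : y ≠ v) :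
    0 < invInner d v y ↔ inner ℝ d v < inner ℝ d y := by
  rw [invInner, lt_div_iff₀ (pow_pos (dist_pos.2 hy) 2), zero_mul, inner_sub_right, sub_pos]

end InCircle

section Levels

/-- The ordered triples of distinct points of `S`. -/
def triples (S : Finset Pt) : Finset (Pt × Pt × Pt) :=
  {t ∈ S ×ˢ S ×ˢ S | t.1 ≠ t.2.1 ∧ t.1 ≠ t.2.2 ∧ t.2.1 ≠ t.2.2}

/-- The points of `S` on the positive side of the oriented circle through an ordered triple. -/
def positivePoints (S : Finset Pt) (t : Pt × Pt × Pt) : Finset Pt :=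
  {x ∈ S | 0 < inCircle t.1 t.2.1 t.2.2 x}

/-- The ordered triples of `S` at level `j`: those whose oriented circle has exactly `j` points of
`S` on its positive side. -/
def levelTriples (S : Finset Pt) (j : ℕ) : Finset (Pt × Pt × Pt) :=
  {t ∈ triples S | #(positivePoints S t) = j}

variable {S : Finset Pt} {d u v w : Pt}

lemma mem_triples : (u, v, w) ∈ triples S ↔ (u ∈ S ∧ v ∈ S ∧ w ∈ S) ∧ u ≠ v ∧ u ≠ w ∧ v ≠ w := by
  simp only [triples, mem_filter, mem_product]

lemma mem_levelTriples_zero :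
    (u, v, w) ∈ levelTriples S 0 ↔ (u, v, w) ∈ triples S ∧ ∀ x ∈ S, inCircle u v w x ≤ 0 := by
  simp only [levelTriples, positivePoints, mem_filter, card_eq_zero, filter_eq_empty_iff, not_lt]

/-- The cyclic shift of ordered triples. -/
def rotate : Equiv.Perm (Pt × Pt × Pt) := (Equiv.prodAssoc _ _ _).symm.trans (Equiv.prodComm _ _)

lemma rotate_apply : rotate (u, v, w) = (w, u, v) := rfl

lemma rotate_mem_levelTriples_zero {t : Pt × Pt × Pt} :
    rotate t ∈ levelTriples S 0 ↔ t ∈ levelTriples S 0 := by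
  obtain ⟨u, v, w⟩ := t
  simp only [rotate_apply, mem_levelTriples_zero, mem_triples, inCircle_rotate]
  grind

/-- Inversion at `v` turns the circles through `v` that support `S` into supporting lines. -/
lemma isBridge_iff_mem_levelTriples_zero (hd : d ≠ 0) (hv : v ∈ S) :
    IsBridge (invInner d v) (invCross d v) (S.erase v) (u, w) ↔
      (u, v, w) ∈ levelTriples S 0 ∧ inner ℝ d u < inner ℝ d v ∧ inner ℝ d v < inner ℝ d w := by
  simp only [IsBridge, mem_erase, mem_levelTriples_zero, mem_triples]
  constructor
  · rintro ⟨⟨⟨huv, hu⟩, hwv, hw⟩, ⟨hu', hw'⟩, h⟩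
    rw [invInner_neg_iff huv] at hu'
    rw [invInner_pos_iff hwv] at hw'
    refine ⟨⟨⟨⟨hu, hv, hw⟩, huv, ?_, hwv.symm⟩, fun x hx => ?_⟩, hu', hw'⟩
    · rintro rfl
      exact hu'.not_gt hw'
    · obtain rfl | hxv := eq_or_ne x v
      · exact (inCircle_self_middle _ _ _).le
      · rw [← sign_nonpos_iff, sign_inCircle hd v huv hwv hxv, sign_nonpos_iff]
        exact h x ⟨hxv, hx⟩
  · rintro ⟨⟨⟨⟨hu, -, hw⟩, huv, -, hvw⟩, h⟩, hu', hw'⟩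
    refine ⟨⟨⟨huv, hu⟩, hvw.symm, hw⟩, ⟨(invInner_neg_iff huv).2 hu',
      (invInner_pos_iff hvw.symm).2 hw'⟩, fun x hx => ?_⟩
    rw [← sign_nonpos_iff, ← sign_inCircle hd v huv hvw.symm hx.1, sign_nonpos_iff]
    exact h x hx.2

lemma existsUnique_mem_levelTriples_zero (hS : Generic S)
    (hd : Set.InjOn (fun x => inner ℝ d x) (S : Set Pt)) (hv : v ∈ S)
    (hbelow : ∃ u ∈ S, inner ℝ d u < inner ℝ d v) (habove : ∃ w ∈ S, inner ℝ d v < inner ℝ d w) :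
    ∃! q : Pt × Pt, (q.1, v, q.2) ∈ levelTriples S 0 ∧
      inner ℝ d q.1 < inner ℝ d v ∧ inner ℝ d v < inner ℝ d q.2 := by
  obtain ⟨u, hu, huv⟩ := hbelow
  obtain ⟨w, hw, hvw⟩ := habove
  have hd0 : d ≠ 0 := by
    rintro rfl
    simp at huv
  have huv' : u ≠ v := by rintro rfl; exact huv.false
  have hwv' : w ≠ v := by rintro rfl; exact hvw.false
  refine (existsUnique_congr fun q => isBridge_iff_mem_levelTriples_zero hd0 hv).1 <|
    existsUnique_isBridge ?_ ?_ ⟨u, mem_erase.2 ⟨huv', hu⟩, (invInner_neg_iff huv').2 huv⟩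
      ⟨w, mem_erase.2 ⟨hwv', hw⟩, (invInner_pos_iff hwv').2 hvw⟩
  · intro x hx
    rw [mem_erase] at hx
    rw [invInner, inner_sub_right]
    exact div_ne_zero (sub_ne_zero.2 (hd.ne hx.2 hv hx.1)) (pow_ne_zero 2 (dist_ne_zero.2 hx.1))
  · intro u hu w hw x hx huw hxu hxw
    rw [mem_erase] at hu hw hx
    rw [← sign_ne_zero, ← sign_inCircle hd0 v hu.1 hw.1 hx.1, sign_ne_zero]
    exact hS.inCircle_ne_zero hu.2 hv hw.2 hx.2 hu.1 huw hw.1.symm hxu hx.1 hxw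

lemma card_increasing_levelTriples_zero_add_two (hS : Generic S) (hnt : S.Nontrivial)
    (hd : Set.InjOn (fun x => inner ℝ d x) (S : Set Pt)) :
    #{t ∈ levelTriples S 0 | inner ℝ d t.1 < inner ℝ d t.2.1 ∧
      inner ℝ d t.2.1 < inner ℝ d t.2.2} + 2 = #S := by
  rw [← card_filter_not_extremal_add_two hd hnt, add_left_inj]
  refine card_nbij (fun t => t.2.1) ?_ ?_ ?_
  · rintro ⟨u, v, w⟩ ht
    obtain ⟨ht, huv, hvw⟩ := mem_filter.1 ht
    obtain ⟨hu, hv, hw⟩ := (mem_triples.1 (mem_levelTriples_zero.1 ht).1).1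
    exact mem_filter.2 ⟨hv, ⟨u, hu, huv⟩, w, hw, hvw⟩
  · rintro ⟨u, v, w⟩ ht ⟨u', _, w'⟩ ht' rfl
    obtain ⟨ht, huv, hvw⟩ := mem_filter.1 ht
    obtain ⟨ht', hu'v, hvw'⟩ := mem_filter.1 ht'
    obtain ⟨hu, hv, hw⟩ := (mem_triples.1 (mem_levelTriples_zero.1 ht).1).1
    have h := (existsUnique_mem_levelTriples_zero hS hd hv ⟨u, hu, huv⟩ ⟨w, hw, hvw⟩).unique
      (y₁ := (u, w)) (y₂ := (u', w')) ⟨ht, huv, hvw⟩ ⟨ht', hu'v, hvw'⟩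
    simp_all
  · intro v hv
    obtain ⟨hv, hbelow, habove⟩ := mem_filter.1 hv
    obtain ⟨⟨u, w⟩, h, -⟩ := existsUnique_mem_levelTriples_zero hS hd hv hbelow habove
    exact ⟨(u, v, w), mem_filter.2 h, rfl⟩

lemma card_range_filter_monotone_rotate {t : Pt × Pt × Pt} {f : Pt → ℝ} (h₁ : f t.1 ≠ f t.2.1)
    (h₂ : f t.1 ≠ f t.2.2) (h₃ : f t.2.1 ≠ f t.2.2) :
    #{i ∈ range 3 | (f ((rotate ^ i) t).1 < f ((rotate ^ i) t).2.1 ∧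
        f ((rotate ^ i) t).2.1 < f ((rotate ^ i) t).2.2) ∨
      f ((rotate ^ i) t).2.1 < f ((rotate ^ i) t).1 ∧
        f ((rotate ^ i) t).2.2 < f ((rotate ^ i) t).2.1} = 1 := by
  obtain ⟨u, v, w⟩ := t
  simp only [card_filter, sum_range_succ, sum_range_zero, pow_zero, pow_one, pow_two,
    Equiv.Perm.mul_apply, Equiv.Perm.one_apply, rotate_apply]
  dsimp only at h₁ h₂ h₃
  grind

lemma card_levelTriples_zero (hS : Generic S) {m : ℕ} (hm : #S = m + 3) :
    #(levelTriples S 0) = 6 * (m + 1) := by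
  obtain ⟨d, hd⟩ := exists_inner_injOn S
  have hnt : S.Nontrivial := one_lt_card_iff_nontrivial.1 (by omega)
  have hinc := card_increasing_levelTriples_zero_add_two hS hnt hd
  have hdec := card_increasing_levelTriples_zero_add_two (d := -d) hS hnt
    fun x hx y hy hxy => hd hx hy (by simpa only [inner_neg_left, neg_inj] using hxy)
  simp only [inner_neg_left, neg_lt_neg_iff] at hdec
  have hrot := card_eq_mul_card_filter
    (P := fun t => (inner ℝ d t.1 < inner ℝ d t.2.1 ∧ inner ℝ d t.2.1 < inner ℝ d t.2.2) ∨
      inner ℝ d t.2.1 < inner ℝ d t.1 ∧ inner ℝ d t.2.2 < inner ℝ d t.2.1)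
    (fun _ => rotate_mem_levelTriples_zero (S := S)) fun t ht => by
      obtain ⟨⟨hu, hv, hw⟩, huv, huw, hvw⟩ := mem_triples.1 (mem_levelTriples_zero.1 ht).1
      exact card_range_filter_monotone_rotate (f := fun x => inner ℝ d x) (hd.ne hu hv huv)
        (hd.ne hu hw huw) (hd.ne hv hw hvw)
  rw [filter_or, card_union_of_disjoint (disjoint_filter.2 fun t _ h h' => h.1.not_gt h'.1)] at hrot
  omega

lemma levelTriples_erase (S : Finset Pt) (p : Pt) (j : ℕ) :
    levelTriples (S.erase p) j =
      {t ∈ triples S | p ∉ ({t.1, t.2.1, t.2.2} : Finset Pt) ∧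
        #((positivePoints S t).erase p) = j} := by
  ext ⟨u, v, w⟩
  simp only [levelTriples, positivePoints, mem_filter, mem_triples, mem_erase, filter_erase,
    mem_insert, mem_singleton]
  grind

lemma sum_card_levelTriples_erase {j m : ℕ} (hm : #S = 3 + j + m) :
    ∑ p ∈ S, #(levelTriples (S.erase p) j) =
      m * #(levelTriples S j) + (j + 1) * #(levelTriples S (j + 1)) := by
  simp only [levelTriples_erase]
  refine sum_card_filter_erase ?_ (fun t _ => filter_subset _ _) ?_ ?_ hm <;>
    rintro ⟨u, v, w⟩ ht <;> obtain ⟨⟨hu, hv, hw⟩, huv, huw, hvw⟩ := mem_triples.1 ht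
  · simp only [insert_subset_iff, singleton_subset_iff]
    exact ⟨hu, hv, hw⟩
  · simp [positivePoints, inCircle_self_left, inCircle_self_middle, inCircle_self_right]
  · exact card_eq_three.2 ⟨u, v, w, huv, huw, hvw, rfl⟩

theorem card_levelTriples (hS : Generic S) {j m : ℕ} (hm : #S = 3 + j + m) :
    #(levelTriples S j) = 6 * (j + 1) * (m + 1) := by
  induction j generalizing m S with
  | zero => rw [card_levelTriples_zero hS (m := m) (by omega)]
  | succ j ih =>
    have hsum := sum_card_levelTriples_erase (S := S) (j := j) (m := m + 1) (by omega)
    have herase : ∀ p ∈ S, #(levelTriples (S.erase p) j) = 6 * (j + 1) * (m + 1) := fun p hp =>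
      ih (hS.mono (coe_subset.2 (erase_subset p S))) (by rw [card_erase_of_mem hp]; omega)
    rw [sum_congr rfl herase, sum_const, smul_eq_mul, hm, ih hS (m := m + 1) (by omega)] at hsum
    refine Nat.eq_of_mul_eq_mul_left j.succ_pos ?_
    rw [Nat.succ_eq_add_one]
    linarith

end Levels

section HalfTurn

variable {ι : Type*}

/-- Walking upwards along `F` in the order of `f`, the current set starts from the elements
violating `P`, loses each such element and gains each element satisfying `P` as it is passed. So
the size changes by one at each step, and some step leads from `k + 1` down to `k`. -/
lemma exists_card_filter_toggle_eq {β : Type*} [LinearOrder β] {f : ι → β} {P : ι → Prop}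
    [DecidablePred P] {F : Finset ι} (hf : Set.InjOn f F) {k : ℕ} (hP : #{x ∈ F | P x} ≤ k)
    (hP' : k < #{x ∈ F | ¬P x}) :
    ∃ w ∈ F, ¬P w ∧ #{x ∈ F | if P x then f x < f w else f w < f x} = k := by
  classical
  induction F using induction_on_min_value f generalizing k with
  | empty => simp at hP'
  | insert a s ha hmin ih =>
    have hlt : ∀ x ∈ s, f a < f x := fun x hx =>
      (hmin x hx).lt_of_ne fun h => ha (hf (by simp) (by simp [hx]) h ▸ hx)
    have hfs : Set.InjOn f (s : Set ι) := hf.mono (by simp)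
    simp only [filter_insert] at hP hP' ⊢
    by_cases hPa : P a
    · rw [if_pos hPa, card_insert_of_notMem (by simp [ha])] at hP
      rw [if_neg (not_not.2 hPa)] at hP'
      obtain ⟨w, hw, hPw, hcard⟩ := ih hfs (k := k - 1) (by omega) (by omega)
      refine ⟨w, mem_insert_of_mem hw, hPw, ?_⟩
      rw [if_pos (by simp [hPa, hlt w hw]), card_insert_of_notMem (by simp [ha]), hcard]
      omega
    · rw [if_neg hPa] at hP
      rw [if_pos hPa, card_insert_of_notMem (by simp [ha]), Nat.lt_succ_iff] at hP'
      obtain hlast | hmore := hP'.eq_or_lt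
      · refine ⟨a, mem_insert_self a s, hPa, ?_⟩
        rw [if_neg (by simp), hlast]
        congr 1
        refine filter_congr fun x hx => ?_
        simp [hlt x hx, (hlt x hx).not_gt]
      · obtain ⟨w, hw, hPw, hcard⟩ := ih hfs hP hmore
        refine ⟨w, mem_insert_of_mem hw, hPw, ?_⟩
        rw [if_neg (by simp [hPa, (hlt w hw).not_gt]), hcard]

variable {F : Finset ι} {p q : ι → ℝ} {a b : ℝ} {k : ℕ}

/-- Rotate the line `a * p = b * q` about the origin through half a turn. -/
lemma exists_card_filter_det_pos_eq_of_ne_zero (hb : 0 < b)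
    (hg : ∀ x ∈ F, a * p x - b * q x ≠ 0)
    (hdet : ∀ w ∈ F, ∀ x ∈ F, x ≠ w → p w * q x - q w * p x ≠ 0)
    (hk : #{x ∈ F | 0 < a * p x - b * q x} ≤ k) (hF : 2 * k < #F) :
    ∃ w ∈ F, #{x ∈ F | 0 < p w * q x - q w * p x} = k := by
  obtain ⟨g, hgdef⟩ : ∃ g : ι → ℝ, ∀ x, a * p x - b * q x = g x := ⟨_, fun _ => rfl⟩
  simp only [hgdef] at hg hk
  have hrel : ∀ w ∈ F, ∀ x ∈ F,
      b * (p w * q x - q w * p x) = g w * g x * (p x / g x - p w / g w) := by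
    intro w hw x hx
    have := hg w hw
    have := hg x hx
    field_simp
    rw [← hgdef, ← hgdef]
    ring
  have hinj : Set.InjOn (fun x => p x / g x) (F : Set ι) := by
    intro x hx w hw hxw
    by_contra hne
    refine mul_ne_zero hb.ne' (hdet w hw x hx hne) ?_
    rw [hrel w hw x hx, sub_eq_zero.2 hxw, mul_zero]
  have hcard := card_filter_add_card_filter_not (s := F) (fun x => 0 < g x)
  obtain ⟨w, hw, hgw, hw_card⟩ := exists_card_filter_toggle_eq hinj hk (by omega)
  have hgw : g w < 0 := (not_lt.1 hgw).lt_of_ne (hg w hw)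
  refine ⟨w, hw, ?_⟩
  rw [← hw_card]
  congr 1
  refine filter_congr fun x hx => ?_
  rw [← mul_pos_iff_of_pos_left hb, hrel w hw x hx, mul_assoc, ← smul_eq_mul,
    smul_pos_iff_of_neg_left hgw, ← smul_eq_mul]
  split_ifs with hgx
  · rw [smul_neg_iff_of_pos_left hgx, sub_neg]
  · rw [smul_neg_iff_of_neg_left ((not_lt.1 hgx).lt_of_ne (hg x hx)), sub_pos]

lemma exists_card_filter_det_pos_eq (hb : 0 < b) (hpq : ∀ x ∈ F, p x = 0 → q x ≠ 0)
    (hdet : ∀ w ∈ F, ∀ x ∈ F, x ≠ w → p w * q x - q w * p x ≠ 0)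
    (hk : #{x ∈ F | 0 ≤ a * p x - b * q x} ≤ k) (hF : 2 * k < #F) :
    ∃ w ∈ F, #{x ∈ F | 0 < p w * q x - q w * p x} = k := by
  have hperturb : ∀ᶠ a' in 𝓝[≠] a, ∀ x ∈ F, a' * p x - b * q x ≠ 0 ∧
      (0 < a' * p x - b * q x → 0 ≤ a * p x - b * q x) := by
    rw [Filter.eventually_all_finset]
    intro x hx
    have htendsto : Filter.Tendsto (fun a' => a' * p x - b * q x) (𝓝[≠] a)
        (𝓝 (a * p x - b * q x)) :=
      (by fun_prop : Continuous fun a' => a' * p x - b * q x).continuousWithinAt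
    obtain hneg | hzero | hpos := lt_trichotomy (a * p x - b * q x) 0
    · filter_upwards [htendsto.eventually_lt_const hneg] with a' ha'
      exact ⟨ha'.ne, fun h => absurd h ha'.not_gt⟩
    · have hpx : p x ≠ 0 := fun h => hpq x hx h <| by
        simpa [h, hb.ne'] using hzero
      filter_upwards [self_mem_nhdsWithin] with a' ha'
      refine ⟨fun h => ha' (mul_right_cancel₀ hpx ?_), fun _ => hzero.ge⟩
      linarith
    · filter_upwards [htendsto.eventually_const_lt hpos] with a' ha'
      exact ⟨ha'.ne', fun _ => hpos.le⟩
  obtain ⟨a', ha'⟩ := hperturb.exists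
  refine exists_card_filter_det_pos_eq_of_ne_zero hb (fun x hx => (ha' x hx).1) hdet ?_ hF
  refine (card_le_card fun x => ?_).trans hk
  simp only [mem_filter]
  exact fun hx => ⟨hx.1, (ha' x hx.1).2 hx.2⟩

end HalfTurn

section Disk

variable {S : Finset Pt} {u v c : Pt} {r : ℝ}

/-- The power of `x` with respect to a circle with centre `c`, written in terms of the circles
through `u` and `v` and the point circles `u` and `v`. -/
lemma dist_sq_mul_sq_sub_dist_sq (u v c x : Pt) (r : ℝ) :
    dist u v ^ 2 * (r ^ 2 - dist x c ^ 2) =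
      2 * side u v c * side u v x -
        (dist u v ^ 2 + (r ^ 2 - dist u c ^ 2) + (r ^ 2 - dist v c ^ 2)) * thales u v x +
        ((r ^ 2 - dist u c ^ 2) * dist x v ^ 2 + (r ^ 2 - dist v c ^ 2) * dist x u ^ 2) := by
  simp only [dist_sq, side_eq, thales_eq]
  ring

/-- The disk contains a disk or half-plane having `u` and `v` on its boundary. -/
lemma exists_pencil_subset_closedBall (huv : u ≠ v) (hu : u ∈ closedBall c r)
    (hv : v ∈ closedBall c r) :
    ∃ a b : ℝ, 0 < b ∧ ∀ x, 0 ≤ a * side u v x - b * thales u v x → x ∈ closedBall c r := by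
  rw [mem_closedBall] at hu hv
  have hr : 0 ≤ r := dist_nonneg.trans hu
  have huv : 0 < dist u v ^ 2 := pow_pos (dist_pos.2 huv) 2
  have hu : 0 ≤ r ^ 2 - dist u c ^ 2 := sub_nonneg.2 (by gcongr)
  have hv : 0 ≤ r ^ 2 - dist v c ^ 2 := sub_nonneg.2 (by gcongr)
  refine ⟨2 * side u v c, dist u v ^ 2 + (r ^ 2 - dist u c ^ 2) + (r ^ 2 - dist v c ^ 2),
    by positivity, fun x hx => ?_⟩
  have hx : 0 ≤ dist u v ^ 2 * (r ^ 2 - dist x c ^ 2) := by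
    rw [dist_sq_mul_sq_sub_dist_sq]
    positivity
  have hx := sub_nonneg.1 (nonneg_of_mul_nonneg_right hx huv)
  exact mem_closedBall.2 (abs_le_of_sq_le_sq' hx hr).2

lemma exists_mem_levelTriples (hS : Generic S) (hu : u ∈ S) (hv : v ∈ S) (huv : u ≠ v) {k : ℕ}
    (hk : 2 * k + 2 < #S) (huc : u ∈ closedBall c r) (hvc : v ∈ closedBall c r)
    (hcard : ((S : Set Pt) ∩ closedBall c r).ncard ≤ k + 2) :
    ∃ w, (u, v, w) ∈ levelTriples S k := by
  obtain ⟨a, b, hb, hab⟩ := exists_pencil_subset_closedBall huv huc hvc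
  have hmem : ∀ {x}, x ∈ S \ {u, v} ↔ x ∈ S ∧ x ≠ u ∧ x ≠ v := by simp
  have hsub : {u, v} ⊆ S := insert_subset_iff.2 ⟨hu, singleton_subset_iff.2 hv⟩
  have hinside : #{x ∈ S \ {u, v} | 0 ≤ a * side u v x - b * thales u v x} ≤ k := by
    set T := {x ∈ S \ {u, v} | 0 ≤ a * side u v x - b * thales u v x}
    have hdisj : Disjoint T {u, v} := sdiff_disjoint.mono_left (filter_subset _ _)
    have hball : ((T ∪ {u, v} : Finset Pt) : Set Pt) ⊆ (S : Set Pt) ∩ closedBall c r := by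
      intro x hx
      rw [mem_coe, mem_union, mem_filter, hmem, mem_insert, mem_singleton] at hx
      obtain ⟨⟨hxS, -⟩, hx⟩ | rfl | rfl := hx
      exacts [⟨hxS, hab x hx⟩, ⟨hu, huc⟩, ⟨hv, hvc⟩]
    have hle := (Set.ncard_le_ncard hball (S.finite_toSet.inter_of_left _)).trans hcard
    rw [Set.ncard_coe_finset, card_union_of_disjoint hdisj, card_pair huv] at hle
    omega
  obtain ⟨w, hw, hwk⟩ := exists_card_filter_det_pos_eq (p := side u v) (q := thales u v) hb
    (fun x hx => thales_ne_zero_of_side_eq_zero (hmem.1 hx).2.1 (hmem.1 hx).2.2)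
    (fun w hw x hx hxw => by
      obtain ⟨hw, hwu, hwv⟩ := hmem.1 hw
      obtain ⟨hx, hxu, hxv⟩ := hmem.1 hx
      exact hS.inCircle_ne_zero hu hv hw hx huv hwu.symm hwv.symm hxu hxv hxw)
    hinside (by rw [card_sdiff_of_subset hsub, card_pair huv]; omega)
  obtain ⟨hwS, hwu, hwv⟩ := hmem.1 hw
  refine ⟨w, mem_filter.2 ⟨mem_triples.2 ⟨⟨hu, hv, hwS⟩, huv, hwu.symm, hwv.symm⟩, ?_⟩⟩
  rw [← hwk]
  congr 1
  ext x
  simp only [positivePoints, mem_filter, hmem]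
  refine ⟨fun hx => ⟨⟨hx.1, ?_, ?_⟩, hx.2⟩, fun hx => ⟨hx.1.1, hx.2⟩⟩ <;> rintro rfl
  exacts [(inCircle_self_left _ _ _).not_gt hx.2, (inCircle_self_middle _ _ _).not_gt hx.2]

end Disk

theorem exists_pair_forall_le_ncard_inter_closedBall {S : Finset Pt} (hS : Generic S) {j : ℕ}
    (hj : 2 * j < #S) (hcount : 6 * j * (#S - 1 - j) < #S * (#S - 1)) :
    ∃ u ∈ S, ∃ v ∈ S, u ≠ v ∧ ∀ c r, u ∈ closedBall c r → v ∈ closedBall c r →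
      j + 2 ≤ ((S : Set Pt) ∩ closedBall c r).ncard := by
  by_contra! hlt
  cases j with
  | zero =>
    have hS_card : 1 < #S := by
      rw [mul_zero, zero_mul] at hcount
      have := Nat.pos_of_mul_pos_left hcount
      omega
    obtain ⟨u, hu, v, hv, huv⟩ := one_lt_card.1 hS_card
    obtain ⟨c, r, huc, hvc, hcr⟩ := hlt u hu v hv huv
    have hpair : {u, v} ⊆ (S : Set Pt) ∩ closedBall c r :=
      Set.pair_subset ⟨hu, huc⟩ ⟨hv, hvc⟩
    have hle := Set.ncard_le_ncard hpair (S.finite_toSet.inter_of_left _)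
    rw [Set.ncard_pair huv] at hle
    omega
  | succ k =>
    have hext : ∀ q ∈ S.offDiag, ∃ w, (q.1, q.2, w) ∈ levelTriples S k := by
      rintro ⟨u, v⟩ huv
      obtain ⟨hu, hv, huv⟩ := mem_offDiag.1 huv
      obtain ⟨c, r, huc, hvc, hcr⟩ := hlt u hu v hv huv
      exact exists_mem_levelTriples hS hu hv huv (by omega) huc hvc (by omega)
    have hle : #S.offDiag ≤ #(levelTriples S k) := by
      choose! w hw using hext
      refine card_le_card_of_injOn (fun q => (q.1, q.2, w q)) hw ?_
      simp +contextual [Set.InjOn]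
    rw [card_levelTriples hS (m := #S - 3 - k) (by omega), offDiag_card, ← Nat.mul_sub_one] at hle
    rw [show #S - 1 - (k + 1) = #S - 3 - k + 1 by omega] at hcount
    exact hcount.not_ge hle

end CirclePairs

theorem pi_lower_bound_n_over_5_general (S : Set Pt) (hcard : 2 ≤ S.ncard)
    (hS : CirclePairs.Generic S) :
    ∃ u ∈ S, ∃ v ∈ S, u ≠ v ∧ ∀ (c : Pt) (r : ℝ), u ∈ closedBall c r → v ∈ closedBall c r →
      ⌈(S.ncard : ℝ) / 5⌉ + 1 ≤ ((S ∩ closedBall c r).ncard : ℤ) := by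
  lift S to Finset Pt using Set.finite_of_ncard_pos (by omega)
  rw [Set.ncard_coe_finset] at hcard ⊢
  obtain ⟨j, i, hi, hn⟩ : ∃ j i, i < 5 ∧ S.card = 5 * j + i + 1 :=
    ⟨(S.card - 1) / 5, (S.card - 1) % 5, Nat.mod_lt _ (by norm_num), by omega⟩
  have hcount : 6 * j * (S.card - 1 - j) < S.card * (S.card - 1) := by
    rw [show S.card - 1 - j = 4 * j + i by omega, show S.card - 1 = 5 * j + i by omega, hn]
    nlinarith
  obtain ⟨u, hu, v, hv, huv, h⟩ :=
    CirclePairs.exists_pair_forall_le_ncard_inter_closedBall hS (by omega) hcount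
  have hceil : ⌈(S.card : ℝ) / 5⌉ ≤ j + 1 := by
    rw [Int.ceil_le, div_le_iff₀ (by norm_num)]
    norm_cast
    omega
  exact ⟨u, hu, v, hv, huv, fun c r huc hvc => by
    have := h c r huc hvc
    omega⟩

/-- For every `n ≥ 6` and every set `S` of `n` points in the plane in general position,
there exist two distinct points `u, v ∈ S` such that every closed disk containing both
`u` and `v` contains at least `⌈n/5⌉ + 1` points of `S`. -/
theorem pi_lower_bound_n_over_5 (n : ℕ) (hn : 6 ≤ n) (S : Set Pt)
    (hfin : S.Finite) (hcard : S.ncard = n) (hgp : GenPos S) :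
    ∃ u ∈ S, ∃ v ∈ S, u ≠ v ∧
      ∀ (c : Pt) (r : ℝ), 0 < r → u ∈ closedBall c r → v ∈ closedBall c r →
        ⌈(n : ℝ) / 5⌉ + 1 ≤ ((S ∩ closedBall c r).ncard : ℤ) := by
  subst hcard
  obtain ⟨u, hu, v, hv, huv, h⟩ := pi_lower_bound_n_over_5_general S (by omega) hgp.generic
  exact ⟨u, hu, v, hv, huv, fun c r _ => h c r⟩
end
end

section
/- For every integer k and every set S' of k points in the Euclidean plane in general position, there are at least C(k−3,2) = (k−3)(k−4)/2 unordered pairs {x,y} of distinct points of S' such that every closed disk having both x and y on its boundary fails to contain at least one of the other k−2 points of S' (that is, at least one of the other points of S' lies strictly outside the disk). -/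
/-!
A pair that is not dominated lies on a circle whose disk contains all the points: such pairs are
the edges of the farthest-point Delaunay graph, whose vertices are extreme points of the convex
hull. Let two edges `ac` and `bd` cross, as segments, at `q`. The difference of the powers with
respect to their two circles is an affine function; as `q` lies on `ac` it is nonnegative there, and
as `q` lies on `bd` it is nonpositive. Hence it vanishes and `a`, `b`, `c`, `d` are concyclic, which
is excluded.

Points in convex position can be ordered counterclockwise, starting from one of them, and then `ac`
and `bd` cross whenever `a < b < c < d`. A graph on `n` linearly ordered vertices without such edges
has at most `2 * n - 3` of them: each is the longest one from its source or the longest one to its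
target, no edge starts at the last vertex or ends at the first one, and an inclusion-maximal edge is
longest in both senses. This leaves at least `C(k, 2) - (2 * k - 3) = C(k - 2, 2)` dominated pairs.
-/

open EuclideanGeometry Metric

noncomputable section

section NoncrossingGraph

variable {α : Type*} [LinearOrder α] [Fintype α] {A : Finset (α × α)}

/-- The arcs of `A` which go to the last target among all arcs with the same source. -/
def longestOut (A : Finset (α × α)) : Finset (α × α) :=
  {e ∈ A | ∀ y, (e.1, y) ∈ A → y ≤ e.2}

/-- The arcs of `A` which come from the first source among all arcs with the same target. -/
def longestIn (A : Finset (α × α)) : Finset (α × α) :=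
  {e ∈ A | ∀ x, (x, e.2) ∈ A → e.1 ≤ x}

lemma mem_longestOut {e : α × α} :
    e ∈ longestOut A ↔ e ∈ A ∧ ∀ y, (e.1, y) ∈ A → y ≤ e.2 :=
  Finset.mem_filter

lemma mem_longestIn {e : α × α} :
    e ∈ longestIn A ↔ e ∈ A ∧ ∀ x, (x, e.2) ∈ A → e.1 ≤ x :=
  Finset.mem_filter

lemma card_longestOut_lt [Nonempty α] (hA : ∀ e ∈ A, e.1 < e.2) :
    (longestOut A).card < Fintype.card α := by
  have inj : Set.InjOn Prod.fst (longestOut A : Set (α × α)) := by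
    rintro ⟨x, y⟩ h ⟨_, y'⟩ h' rfl
    obtain ⟨hy, y_max⟩ := mem_longestOut.1 h
    obtain ⟨hy', y'_max⟩ := mem_longestOut.1 h'
    exact congrArg _ (le_antisymm (y'_max y hy) (y_max y' hy'))
  obtain ⟨top, htop⟩ := Finite.exists_max (id : α → α)
  rw [← Finset.card_image_of_injOn inj]
  refine Finset.card_lt_univ_of_notMem (x := top) fun h => ?_
  obtain ⟨e, he, rfl⟩ := Finset.mem_image.1 h
  exact (hA e (mem_longestOut.1 he).1).not_ge (htop e.2)

lemma card_longestIn_lt [Nonempty α] (hA : ∀ e ∈ A, e.1 < e.2) :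
    (longestIn A).card < Fintype.card α := by
  have inj : Set.InjOn Prod.snd (longestIn A : Set (α × α)) := by
    rintro ⟨x, y⟩ h ⟨x', _⟩ h' rfl
    obtain ⟨hx, x_min⟩ := mem_longestIn.1 h
    obtain ⟨hx', x'_min⟩ := mem_longestIn.1 h'
    exact congrArg (·, y) (le_antisymm (x_min x' hx') (x'_min x hx))
  obtain ⟨bot, hbot⟩ := Finite.exists_min (id : α → α)
  rw [← Finset.card_image_of_injOn inj]
  refine Finset.card_lt_univ_of_notMem (x := bot) fun h => ?_
  obtain ⟨e, he, rfl⟩ := Finset.mem_image.1 h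
  exact (hA e (mem_longestIn.1 he).1).not_ge (hbot e.1)

lemma longestOut_inter_longestIn_nonempty (hA : A.Nonempty) :
    (longestOut A ∩ longestIn A).Nonempty := by
  obtain ⟨e, he, e_max⟩ := A.exists_maximalFor (fun e => (OrderDual.toDual e.1, e.2)) hA
  exact ⟨e, Finset.mem_inter.2
    ⟨mem_longestOut.2 ⟨he, fun y hy => (le_total y e.2).elim id fun h => (e_max hy ⟨le_rfl, h⟩).2⟩,
      mem_longestIn.2 ⟨he, fun x hx => (le_total e.1 x).elim id fun h => (e_max hx ⟨h, le_rfl⟩).1⟩⟩⟩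

/-- If `bc` were neither in `longestOut A` nor in `longestIn A`, there would be arcs `ac`, `bd`
with `a < b < c < d`. -/
lemma subset_longestOut_union_longestIn (hA : ∀ e ∈ A, e.1 < e.2)
    (hcross : ∀ ⦃a b c d⦄, a < b → b < c → c < d → (a, c) ∈ A → (b, d) ∉ A) :
    A ⊆ longestOut A ∪ longestIn A := by
  rintro ⟨b, c⟩ hbc
  by_contra h
  simp only [Finset.mem_union, mem_longestOut, mem_longestIn, hbc, true_and, not_or, not_forall,
    not_le] at h
  obtain ⟨⟨d, hbd, hcd⟩, a, hac, hab⟩ := h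
  exact hcross hab (hA _ hbc) hcd hac hbd

theorem card_le_of_noncrossing (hA : ∀ e ∈ A, e.1 < e.2)
    (hcross : ∀ ⦃a b c d⦄, a < b → b < c → c < d → (a, c) ∈ A → (b, d) ∉ A) :
    A.card ≤ 2 * Fintype.card α - 3 := by
  rcases A.eq_empty_or_nonempty with rfl | hne
  · simp
  have : Nonempty α := ⟨hne.choose.1⟩
  have hsub := Finset.card_le_card (subset_longestOut_union_longestIn hA hcross)
  have hout := card_longestOut_lt hA
  have hin := card_longestIn_lt hA
  have hinter := (longestOut_inter_longestIn_nonempty hne).card_pos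
  have hsum := Finset.card_union_add_card_inter (longestOut A) (longestIn A)
  lia

end NoncrossingGraph

theorem ncard_edgeSet_le_of_noncrossing {α : Type*} [LinearOrder α] [Finite α]
    (G : SimpleGraph α)
    (hG : ∀ ⦃a b c d⦄, a < b → b < c → c < d → G.Adj a c → ¬ G.Adj b d) :
    G.edgeSet.ncard ≤ 2 * Nat.card α - 3 := by
  classical
  have := Fintype.ofFinite α
  let A : Finset (α × α) := {e | e.1 < e.2 ∧ G.Adj e.1 e.2}
  have edgeSet_subset : G.edgeSet ⊆ (A.image Sym2.mk.uncurry : Finset (Sym2 α)) := by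
    intro e
    induction e with | _ x y
    intro hxy
    rw [SimpleGraph.mem_edgeSet] at hxy
    rw [Finset.mem_coe, Finset.mem_image]
    rcases hxy.ne.lt_or_gt with h | h
    · exact ⟨(x, y), by simp [A, h, hxy], rfl⟩
    · exact ⟨(y, x), by simp [A, h, hxy.symm], Sym2.eq_swap⟩
  have A_noncrossing : ∀ ⦃a b c d⦄, a < b → b < c → c < d → (a, c) ∈ A → (b, d) ∉ A := by
    intro a b c d hab hbc hcd hac hbd
    simp only [A, Finset.mem_filter, Finset.mem_univ, true_and] at hac hbd
    exact hG hab hbc hcd hac.2 hbd.2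
  calc G.edgeSet.ncard
    _ ≤ (A.image Sym2.mk.uncurry).card :=
      (Set.ncard_le_ncard edgeSet_subset).trans_eq (Set.ncard_coe_finset _)
    _ ≤ A.card := Finset.card_image_le
    _ ≤ 2 * Nat.card α - 3 := by
      rw [Nat.card_eq_fintype_card]
      exact card_le_of_noncrossing (by simp +contextual [A]) A_noncrossing

section FarthestPoints

variable {E : Type*} [NormedAddCommGroup E]

lemma mem_extremePoints_convexHull_of_isMaxOn_dist [NormedSpace ℝ E] [StrictConvexSpace ℝ E]
    {S : Set E} {x c : E} (hx : x ∈ S) (hmax : IsMaxOn (dist · c) S x) :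
    x ∈ (convexHull ℝ S).extremePoints ℝ := by
  have hball : convexHull ℝ S ⊆ closedBall c (dist x c) :=
    convexHull_min hmax (convex_closedBall _ _)
  refine ⟨subset_convexHull ℝ S hx, fun y hy z hz hseg => ?_⟩
  by_contra hyx
  by_cases hyz : y = z
  · rw [hyz, openSegment_same] at hseg
    exact hyx (hyz.trans hseg.symm)
  · exact (mem_ball.1 (openSegment_subset_ball_of_ne (hball hy) (hball hz) hyz hseg)).false

variable [InnerProductSpace ℝ E]

lemma dist_sq_sub_dist_sq_combo (a b o₁ o₂ : E) {s t : ℝ} (hst : s + t = 1) :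
    dist (s • a + t • b) o₁ ^ 2 - dist (s • a + t • b) o₂ ^ 2 =
      s * (dist a o₁ ^ 2 - dist a o₂ ^ 2) + t * (dist b o₁ ^ 2 - dist b o₂ ^ 2) := by
  obtain rfl : t = 1 - s := by linarith
  simp only [dist_eq_norm, norm_sub_sq_real, inner_add_left, inner_smul_left, conj_trivial]
  ring

theorem cospherical_of_openSegments_meet {S : Set E} {a b c d o₁ o₂ : E}
    (ha : a ∈ S) (hb : b ∈ S) (hc : c ∈ S) (hd : d ∈ S)
    (hmeet : (openSegment ℝ a c ∩ openSegment ℝ b d).Nonempty)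
    (ha₁ : IsMaxOn (dist · o₁) S a) (hc₁ : IsMaxOn (dist · o₁) S c)
    (hb₂ : IsMaxOn (dist · o₂) S b) (hd₂ : IsMaxOn (dist · o₂) S d) :
    Cospherical {a, b, c, d} := by
  obtain ⟨q, ⟨s, t, hs, ht, hst, hac⟩, ⟨s', t', hs', ht', hst', hbd⟩⟩ := hmeet
  have eac : dist c o₁ = dist a o₁ := le_antisymm (ha₁ hc) (hc₁ ha)
  have ebd : dist d o₂ = dist b o₂ := le_antisymm (hb₂ hd) (hd₂ hb)
  have power_q := dist_sq_sub_dist_sq_combo a c o₁ o₂ hst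
  rw [hac, ← hbd, dist_sq_sub_dist_sq_combo b d o₁ o₂ hst', eac, ebd] at power_q
  have gap₁ {z : E} (hz : z ∈ S) : 0 ≤ dist a o₁ ^ 2 - dist z o₁ ^ 2 :=
    sub_nonneg.2 (pow_le_pow_left₀ dist_nonneg (ha₁ hz) 2)
  have gap₂ {z : E} (hz : z ∈ S) : 0 ≤ dist b o₂ ^ 2 - dist z o₂ ^ 2 :=
    sub_nonneg.2 (pow_le_pow_left₀ dist_nonneg (hb₂ hz) 2)
  have sum_gaps : s' * (dist a o₁ ^ 2 - dist b o₁ ^ 2) + t' * (dist a o₁ ^ 2 - dist d o₁ ^ 2) +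
      (s * (dist b o₂ ^ 2 - dist a o₂ ^ 2) + t * (dist b o₂ ^ 2 - dist c o₂ ^ 2)) = 0 := by
    linear_combination -power_q + (dist a o₁ ^ 2 - dist b o₂ ^ 2) * (hst' - hst)
  have gap_b := mul_nonneg hs'.le (gap₁ hb)
  have gap_d := mul_nonneg ht'.le (gap₁ hd)
  have gap_ac := add_nonneg (mul_nonneg hs.le (gap₂ ha)) (mul_nonneg ht.le (gap₂ hc))
  have eab : dist b o₁ ^ 2 = dist a o₁ ^ 2 := by
    have : s' * (dist a o₁ ^ 2 - dist b o₁ ^ 2) = 0 := by linarith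
    linarith [(mul_eq_zero.1 this).resolve_left hs'.ne']
  have ead : dist d o₁ ^ 2 = dist a o₁ ^ 2 := by
    have : t' * (dist a o₁ ^ 2 - dist d o₁ ^ 2) = 0 := by linarith
    linarith [(mul_eq_zero.1 this).resolve_left ht'.ne']
  refine ⟨o₁, dist a o₁, ?_⟩
  rintro z (rfl | rfl | rfl | rfl)
  · rfl
  · exact (pow_left_inj₀ dist_nonneg dist_nonneg two_ne_zero).1 eab
  · exact eac
  · exact (pow_left_inj₀ dist_nonneg dist_nonneg two_ne_zero).1 ead

end FarthestPoints

section Orientation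

/-- The determinant of two plane vectors. -/
def cross (u v : Pt) : ℝ := u 0 * v 1 - u 1 * v 0

/-- Twice the signed area of the triangle `a b c`, positive if it is counterclockwise. -/
def orient (a b c : Pt) : ℝ := cross (b - a) (c - a)

lemma orient_eq (a b c : Pt) :
    orient a b c = (b 0 - a 0) * (c 1 - a 1) - (b 1 - a 1) * (c 0 - a 0) :=
  rfl

lemma mem_convexHull_of_orient {p a b c : Pt} (hac : 0 < orient p a c) (hab : 0 ≤ orient p a b)
    (hbc : 0 ≤ orient p b c) (habc : orient a b c ≤ 0) : b ∈ convexHull ℝ {p, a, c} := by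
  -- The barycentric coordinates of `b` are the signed areas of the triangles it cuts off.
  let weight : Fin 3 → ℝ := ![-orient a b c, orient p b c, orient p a b]
  have sum_weight : ∑ i, weight i = orient p a c := by
    suffices -orient a b c + orient p b c + orient p a b = orient p a c by
      simpa [weight, Fin.sum_univ_three]
    simp only [orient_eq]
    ring
  have hb : Finset.univ.centerMass weight ![p, a, c] = b := by
    rw [Finset.centerMass, sum_weight, inv_smul_eq_iff₀ hac.ne']
    suffices -orient a b c • p + orient p b c • a + orient p a b • c = orient p a c • b by
      simpa [weight, Fin.sum_univ_three]
    ext i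
    simp only [PiLp.add_apply, PiLp.smul_apply, smul_eq_mul, orient_eq]
    fin_cases i <;> simp only [Fin.zero_eta, Fin.mk_one] <;> ring
  rw [← hb]
  refine Finset.univ.centerMass_mem_convexHull (fun i _ => ?_) (sum_weight ▸ hac) fun i _ => ?_
  · fin_cases i <;> simp [weight, hab, hbc, habc]
  · fin_cases i <;> simp

lemma openSegments_meet_of_orient_pos {a b c d : Pt} (habc : 0 < orient a b c)
    (habd : 0 < orient a b d) (hacd : 0 < orient a c d) (hbcd : 0 < orient b c d) :
    (openSegment ℝ a c ∩ openSegment ℝ b d).Nonempty := by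
  refine ⟨_, mem_openSegment_iff_div.2 ⟨orient b c d, orient a b d, hbcd, habd, rfl⟩,
    mem_openSegment_iff_div.2 ⟨orient a c d, orient a b c, hacd, habc, ?_⟩⟩
  have sum_eq : orient a c d + orient a b c = orient b c d + orient a b d := by
    simp only [orient_eq]
    ring
  have combo_eq : orient a c d • b + orient a b c • d = orient b c d • a + orient a b d • c := by
    ext i
    simp only [PiLp.add_apply, PiLp.smul_apply, smul_eq_mul, orient_eq]
    fin_cases i <;> simp only [Fin.zero_eta, Fin.mk_one] <;> ring
  simp only [div_eq_inv_mul, mul_smul, ← smul_add, sum_eq, combo_eq]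

/-- The tangent of the oriented angle from `w` to `v`, meaningful if `0 < ⟪w, v⟫`. -/
def tangentFrom (w v : Pt) : ℝ := cross w v / inner ℝ w v

lemma inner_mul_cross_sub (w u v : Pt) :
    inner ℝ w u * cross w v - inner ℝ w v * cross w u = ‖w‖ ^ 2 * cross u v := by
  simp only [cross, PiLp.inner_apply, RCLike.inner_apply, conj_trivial,
    EuclideanSpace.real_norm_sq_eq, Fin.sum_univ_two]
  ring

lemma tangentFrom_sub_tangentFrom {w u v : Pt} (hu : inner ℝ w u ≠ 0) (hv : inner ℝ w v ≠ 0) :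
    tangentFrom w v - tangentFrom w u = ‖w‖ ^ 2 / (inner ℝ w u * inner ℝ w v) * cross u v := by
  rw [tangentFrom, tangentFrom, div_sub_div _ _ hv hu, div_mul_eq_mul_div, ← inner_mul_cross_sub]
  ring

lemma tangentFrom_lt_tangentFrom_iff {w u v : Pt} (hu : 0 < inner ℝ w u) (hv : 0 < inner ℝ w v) :
    tangentFrom w u < tangentFrom w v ↔ 0 < cross u v := by
  have hw : w ≠ 0 := ne_of_apply_ne (inner ℝ · u) (by simpa using hu.ne')
  rw [← sub_pos, tangentFrom_sub_tangentFrom hu.ne' hv.ne', mul_pos_iff_of_pos_left (by positivity)]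

lemma tangentFrom_eq_tangentFrom_iff {w u v : Pt} (hu : 0 < inner ℝ w u) (hv : 0 < inner ℝ w v) :
    tangentFrom w u = tangentFrom w v ↔ cross u v = 0 := by
  have hw : w ≠ 0 := ne_of_apply_ne (inner ℝ · u) (by simpa using hu.ne')
  rw [eq_comm, ← sub_eq_zero, tangentFrom_sub_tangentFrom hu.ne' hv.ne',
    mul_eq_zero_iff_left (by positivity)]

lemma sameRay_of_cross_eq_zero {w u v : Pt} (hu : 0 < inner ℝ w u) (hv : 0 < inner ℝ w v)
    (h : cross u v = 0) : SameRay ℝ u v := by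
  refine Or.inr (Or.inr ⟨inner ℝ w v, inner ℝ w u, hv, hu, ?_⟩)
  rw [cross] at h
  ext i
  simp only [PiLp.smul_apply, smul_eq_mul, PiLp.inner_apply, RCLike.inner_apply, conj_trivial,
    Fin.sum_univ_two]
  fin_cases i <;> simp only [Fin.zero_eta, Fin.mk_one]
  · linear_combination w 1 * h
  · linear_combination -w 0 * h

end Orientation

section ConvexPosition

lemma exists_inner_pos_of_notMem_convexHull {E : Type*} [NormedAddCommGroup E]
    [InnerProductSpace ℝ E] [CompleteSpace E] {T : Set E} {p : E}
    (hT : IsClosed (convexHull ℝ T)) (hp : p ∉ convexHull ℝ T) :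
    ∃ w : E, ∀ z ∈ T, 0 < inner ℝ w (z - p) := by
  obtain ⟨f, t, hpt, htT⟩ :=
    geometric_hahn_banach_point_closed (convex_convexHull ℝ T) hT hp
  refine ⟨(InnerProductSpace.toDual ℝ E).symm f, fun z hz => ?_⟩
  rw [InnerProductSpace.toDual_symm_apply, map_sub, sub_pos]
  exact hpt.trans (htT z (subset_convexHull ℝ T hz))

lemma not_wbtw_of_convexIndependent {E : Type*} [AddCommGroup E] [Module ℝ E] {V : Set E}
    (hV : ConvexIndependent ℝ ((↑) : V → E)) {x y z : E} (hx : x ∈ V) (hy : y ∈ V) (hz : z ∈ V)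
    (hyx : y ≠ x) (hyz : y ≠ z) : ¬ Wbtw ℝ x y z := by
  intro h
  refine convexIndependent_set_iff_notMem_convexHull_sdiff.1 hV y hy ?_
  exact segment_subset_convexHull (s := V \ {y}) ⟨hx, hyx.symm⟩ ⟨hz, hyz.symm⟩ h.mem_segment

/-- The position of `z` in the counterclockwise order seen from `p`, for points in the open half
plane of directions `w` at `p`. The point `p` itself comes first. -/
def angularKey (p w z : Pt) : WithBot ℝ :=
  if z = p then ⊥ else tangentFrom w (z - p)

variable {V : Set Pt} {p w : Pt}

lemma ne_and_orient_pos_of_angularKey_lt (hw : ∀ z ∈ V \ {p}, 0 < inner ℝ w (z - p)) {x y : Pt}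
    (hx : x ∈ V) (hy : y ∈ V) (h : angularKey p w x < angularKey p w y) :
    y ≠ p ∧ (x ≠ p → 0 < orient p x y) := by
  have hyp : y ≠ p := by
    rintro rfl
    simp [angularKey] at h
  refine ⟨hyp, fun hxp => ?_⟩
  rwa [angularKey, angularKey, if_neg hxp, if_neg hyp, WithBot.coe_lt_coe,
    tangentFrom_lt_tangentFrom_iff (hw x ⟨hx, hxp⟩) (hw y ⟨hy, hyp⟩)] at h

lemma angularKey_injOn (hV : ConvexIndependent ℝ ((↑) : V → Pt)) (hp : p ∈ V)
    (hw : ∀ z ∈ V \ {p}, 0 < inner ℝ w (z - p)) : V.InjOn (angularKey p w) := by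
  intro x hx y hy h
  by_cases hxp : x = p <;> by_cases hyp : y = p
  · rw [hxp, hyp]
  · simp [angularKey, hxp, hyp] at h
  · simp [angularKey, hxp, hyp] at h
  · by_contra hxy
    rw [angularKey, angularKey, if_neg hxp, if_neg hyp, WithBot.coe_inj,
      tangentFrom_eq_tangentFrom_iff (hw x ⟨hx, hxp⟩) (hw y ⟨hy, hyp⟩)] at h
    have same_ray : SameRay ℝ (x -ᵥ p) (y -ᵥ p) :=
      sameRay_of_cross_eq_zero (hw x ⟨hx, hxp⟩) (hw y ⟨hy, hyp⟩) h
    rcases wbtw_total_of_sameRay_vsub_left same_ray with hpxy | hpyx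
    · exact not_wbtw_of_convexIndependent hV hp hx hy hxp hxy hpxy
    · exact not_wbtw_of_convexIndependent hV hp hy hx hyp (Ne.symm hxy) hpyx

lemma orient_pos_of_angularKey_lt (hV : ConvexIndependent ℝ ((↑) : V → Pt)) (hp : p ∈ V)
    (hw : ∀ z ∈ V \ {p}, 0 < inner ℝ w (z - p)) {a b c : Pt} (ha : a ∈ V) (hb : b ∈ V)
    (hc : c ∈ V) (hab : angularKey p w a < angularKey p w b)
    (hbc : angularKey p w b < angularKey p w c) : 0 < orient a b c := by
  obtain ⟨hbp, orient_pab⟩ := ne_and_orient_pos_of_angularKey_lt hw ha hb hab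
  obtain ⟨-, orient_pbc⟩ := ne_and_orient_pos_of_angularKey_lt hw hb hc hbc
  obtain ⟨-, orient_pac⟩ := ne_and_orient_pos_of_angularKey_lt hw ha hc (hab.trans hbc)
  by_cases hap : a = p
  · exact hap ▸ orient_pbc hbp
  by_contra! habc
  refine convexIndependent_set_iff_notMem_convexHull_sdiff.1 hV b hb
    (convexHull_mono ?_ (mem_convexHull_of_orient (orient_pac hap) (orient_pab hap).le
      (orient_pbc hbp).le habc))
  rintro z (rfl | rfl | rfl)
  · exact ⟨hp, hbp.symm⟩
  · exact ⟨ha, ne_of_apply_ne _ hab.ne⟩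
  · exact ⟨hc, ne_of_apply_ne _ hbc.ne'⟩

theorem exists_linearOrder_orient_pos (hfin : V.Finite)
    (hV : ConvexIndependent ℝ ((↑) : V → Pt)) :
    ∃ _ : LinearOrder V, ∀ ⦃a b c : V⦄, a < b → b < c → 0 < orient a b c := by
  rcases isEmpty_or_nonempty V with hempty | ⟨⟨p, hp⟩⟩
  · exact ⟨LinearOrder.lift' (fun _ => 0 : V → ℕ) (Function.injective_of_subsingleton _),
      fun a => isEmptyElim a⟩
  · obtain ⟨w, hw⟩ := exists_inner_pos_of_notMem_convexHull
      (hfin.sdiff.isClosed_convexHull ℝ)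
      (convexIndependent_set_iff_notMem_convexHull_sdiff.1 hV p hp)
    exact ⟨LinearOrder.lift' (fun z : V => angularKey p w z) (angularKey_injOn hV hp hw).injective,
      fun a b c hab hbc => orient_pos_of_angularKey_lt hV hp hw a.2 b.2 c.2 hab hbc⟩

end ConvexPosition

section Domination

/-- The farthest-point Delaunay graph of `S`: two points are joined if some closed ball containing
`S` has both on its boundary. Such points are extreme points of the convex hull of `S`. -/
def farthestDelaunay {E : Type*} [NormedAddCommGroup E] [NormedSpace ℝ E] (S : Set E) :
    SimpleGraph ((convexHull ℝ S).extremePoints ℝ) where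
  Adj x y := x ≠ y ∧ ∃ c, IsMaxOn (dist · c) S x ∧ IsMaxOn (dist · c) S y
  symm := ⟨fun _ _ ⟨hne, c, hx, hy⟩ => ⟨hne.symm, c, hy, hx⟩⟩
  loopless := ⟨fun _ h => h.1 rfl⟩

/-- The pairs of points of `S` such that no closed ball having both on its boundary contains the
rest of `S`. -/
def dominatedPairs {X : Type*} [PseudoMetricSpace X] (S : Set X) : Set (Set X) :=
  {T | ∃ x ∈ S, ∃ y ∈ S, x ≠ y ∧ T = {x, y} ∧
    ∀ (c : X) (r : ℝ), 0 < r → dist x c = r → dist y c = r → ∃ z ∈ S \ {x, y}, r < dist z c}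

lemma exists_isMaxOn_dist_of_notMem_dominatedPairs {X : Type*} [PseudoMetricSpace X] {S : Set X}
    {x y : X} (hx : x ∈ S) (hy : y ∈ S) (hxy : x ≠ y) (h : {x, y} ∉ dominatedPairs S) :
    ∃ c, IsMaxOn (dist · c) S x ∧ IsMaxOn (dist · c) S y := by
  by_contra hno
  refine h ⟨x, hx, y, hy, hxy, rfl, fun c r _ hxr hyr => ?_⟩
  by_contra! hball
  have le_r : ∀ z ∈ S, dist z c ≤ r := by
    intro z hz
    by_cases hz' : z ∈ ({x, y} : Set X)
    · rcases hz' with rfl | rfl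
      exacts [hxr.le, hyr.le]
    · exact hball z ⟨hz, hz'⟩
  exact hno ⟨c, fun z hz => (le_r z hz).trans_eq hxr.symm,
    fun z hz => (le_r z hz).trans_eq hyr.symm⟩

lemma choose_two_le_ncard_dominatedPairs_add {E : Type*} [NormedAddCommGroup E] [NormedSpace ℝ E]
    [StrictConvexSpace ℝ E] {S : Set E} (hfin : S.Finite) :
    S.ncard.choose 2 ≤ (dominatedPairs S).ncard + (farthestDelaunay S).edgeSet.ncard := by
  let pair (e : Sym2 ((convexHull ℝ S).extremePoints ℝ)) : Set E :=
    Subtype.val '' (SetLike.coe e)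
  have cover : {T ⊆ S | T.ncard = 2} ⊆ dominatedPairs S ∪ pair '' (farthestDelaunay S).edgeSet := by
    rintro T ⟨hTS, hT⟩
    obtain ⟨x, y, hxy, rfl⟩ := Set.ncard_eq_two.1 hT
    have hx : x ∈ S := hTS (by simp)
    have hy : y ∈ S := hTS (by simp)
    by_cases hdom : {x, y} ∈ dominatedPairs S
    · exact Or.inl hdom
    obtain ⟨c, hxc, hyc⟩ := exists_isMaxOn_dist_of_notMem_dominatedPairs hx hy hxy hdom
    exact Or.inr ⟨s(⟨x, mem_extremePoints_convexHull_of_isMaxOn_dist hx hxc⟩,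
      ⟨y, mem_extremePoints_convexHull_of_isMaxOn_dist hy hyc⟩),
      ⟨by simpa using hxy, c, hxc, hyc⟩, by simp [pair, Set.image_pair]⟩
  have hdomfin : (dominatedPairs S).Finite := by
    refine hfin.finite_subsets.subset ?_
    rintro _ ⟨x, hx, y, hy, -, rfl, -⟩
    exact Set.pair_subset hx hy
  have hedges : (farthestDelaunay S).edgeSet.Finite := by
    have : Finite ((convexHull ℝ S).extremePoints ℝ) :=
      hfin.subset extremePoints_convexHull_subset
    exact Set.toFinite _
  calc S.ncard.choose 2
    _ = {T ⊆ S | T.ncard = 2}.ncard := (Set.ncard_powerset_ncard hfin 2).symm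
    _ ≤ (dominatedPairs S ∪ pair '' (farthestDelaunay S).edgeSet).ncard :=
      Set.ncard_le_ncard cover (hdomfin.union (hedges.image _))
    _ ≤ (dominatedPairs S).ncard + (pair '' (farthestDelaunay S).edgeSet).ncard :=
      Set.ncard_union_le _ _
    _ ≤ (dominatedPairs S).ncard + (farthestDelaunay S).edgeSet.ncard := by
      gcongr
      exact Set.ncard_image_le hedges

theorem ncard_edgeSet_farthestDelaunay_le {S : Set Pt} (hfin : S.Finite)
    (hS : ∀ T ⊆ S, T.ncard = 4 → ¬ Cospherical T) :
    (farthestDelaunay S).edgeSet.ncard ≤ 2 * S.ncard - 3 := by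
  have hsub : (convexHull ℝ S).extremePoints ℝ ⊆ S := extremePoints_convexHull_subset
  have hVfin := hfin.subset hsub
  have : Finite ((convexHull ℝ S).extremePoints ℝ) := hVfin
  obtain ⟨_, horient⟩ :=
    exists_linearOrder_orient_pos hVfin (convex_convexHull ℝ S).convexIndependent_extremePoints
  have noncrossing : ∀ ⦃a b c d⦄, a < b → b < c → c < d →
      (farthestDelaunay S).Adj a c → ¬ (farthestDelaunay S).Adj b d := by
    rintro a b c d hab hbc hcd ⟨-, o₁, ha, hc⟩ ⟨-, o₂, hb, hd⟩
    have hmeet := openSegments_meet_of_orient_pos (horient hab hbc) (horient hab (hbc.trans hcd))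
      (horient (hab.trans hbc) hcd) (horient hbc hcd)
    refine hS {a.1, b.1, c.1, d.1} ?_ ?_ (cospherical_of_openSegments_meet (hsub a.2) (hsub b.2)
      (hsub c.2) (hsub d.2) hmeet ha hc hb hd)
    · rintro z (rfl | rfl | rfl | rfl) <;> exact hsub (Subtype.prop _)
    · rw [Set.ncard_eq_toFinset_card']
      simp [Finset.card_insert_of_notMem, Subtype.val_injective.ne_iff, hab.ne, hbc.ne, hcd.ne,
        (hab.trans hbc).ne, (hbc.trans hcd).ne, (hab.trans (hbc.trans hcd)).ne]
  calc (farthestDelaunay S).edgeSet.ncard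
    _ ≤ 2 * Nat.card ((convexHull ℝ S).extremePoints ℝ) - 3 :=
      ncard_edgeSet_le_of_noncrossing _ noncrossing
    _ ≤ 2 * S.ncard - 3 := by
      rw [Nat.card_coe_set_eq]
      gcongr

lemma choose_two_add_two (n : ℕ) : (n + 2).choose 2 = n.choose 2 + (2 * n + 1) := by
  simp only [Nat.choose_succ_succ' _ 1, Nat.choose_one_right]
  lia

theorem dominated_pairs_lower_bound_general (S : Set Pt) (hfin : S.Finite)
    (hS : ∀ T ⊆ S, T.ncard = 4 → ¬ Cospherical T) :
    (S.ncard - 2).choose 2 ≤ (dominatedPairs S).ncard := by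
  rcases Nat.lt_or_ge S.ncard 2 with hlt | hge
  · rw [Nat.choose_eq_zero_of_lt (by lia)]
    exact Nat.zero_le _
  obtain ⟨n, hn⟩ := Nat.exists_eq_add_of_le' hge
  have hpairs := choose_two_le_ncard_dominatedPairs_add hfin
  have hedges := ncard_edgeSet_farthestDelaunay_le hfin hS
  rw [hn, choose_two_add_two] at hpairs
  rw [hn, Nat.add_sub_cancel]
  lia

end Domination

/-- Among any set `S'` of `k` points in the plane in general position, there are at least
`C(k−3, 2)` unordered pairs `{x, y}` of distinct points of `S'` such that every closed
disk having both `x` and `y` on its boundary leaves at least one of the other `k − 2`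
points of `S'` strictly outside the disk. -/
theorem dominated_pairs_lower_bound (k : ℕ) (S' : Set Pt)
    (hfin : S'.Finite) (hcard : S'.ncard = k) (hgp : GenPos S') :
    (k - 3).choose 2 ≤
      {T : Set Pt | ∃ x ∈ S', ∃ y ∈ S', x ≠ y ∧ T = {x, y} ∧
        ∀ (c : Pt) (r : ℝ), 0 < r → dist x c = r → dist y c = r →
          ∃ z ∈ S' \ {x, y}, r < dist z c}.ncard := by
  calc (k - 3).choose 2
    _ ≤ (S'.ncard - 2).choose 2 := Nat.choose_le_choose 2 (by lia)
    _ ≤ (dominatedPairs S').ncard := dominated_pairs_lower_bound_general S' hfin hgp.2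
end
end
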